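/- arXiv:2412.07281 — 7 statements merged into one kernel-verified Lean document; each statement's English description precedes it below -/
import Mathlib

section
/- Let S be a numerical semigroup. Then (𝔑(S), ⪯) is a lattice (every pair of normalized ideals of S has a supremum and an infimum with respect to ⪯) if and only if m(S) ≤ 4. -/
open Pointwise

/-- A numerical semigroup: an additive submonoid of `ℕ` with finite complement. -/
def IsNumericalSemigroup (S : Set ℕ) : Prop :=
  0 ∈ S ∧ (∀ a ∈ S, ∀ b ∈ S, a + b ∈ S) ∧ Sᶜ.Finite

/-- A normalized (relative) ideal of `S`: a subset of `ℕ` with `min I = 0`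
(equivalently `0 ∈ I`) satisfying `I + S ⊆ I`. -/
def IsNormalizedIdeal (S I : Set ℕ) : Prop :=
  0 ∈ I ∧ ∀ i ∈ I, ∀ s ∈ S, i + s ∈ I

/-- The set `𝔑(S)` of normalized ideals of `S`. -/
def NI (S : Set ℕ) : Set (Set ℕ) := {I : Set ℕ | IsNormalizedIdeal S I}

/-- The multiplicity of `S`: its least nonzero element. -/
noncomputable def multNS (S : Set ℕ) : ℕ := sInf {n : ℕ | n ∈ S ∧ n ≠ 0}

/-- The Frobenius number of `S` (or of an ideal): the largest natural number not in `S`. -/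
noncomputable def frobNS (S : Set ℕ) : ℕ := sSup Sᶜ

/-- A minimal generator of `S`: a nonzero element of `S` that is not the sum
of two nonzero elements of `S`. -/
def IsMinimalGenerator (S : Set ℕ) (a : ℕ) : Prop :=
  a ∈ S ∧ a ≠ 0 ∧ ¬ ∃ b ∈ S, ∃ c ∈ S, b ≠ 0 ∧ c ≠ 0 ∧ a = b + c

/-- A minimal generator of an ideal `I` of a numerical semigroup `T`:
an element `x ∈ I` with `x ≠ y + t` for every `y ∈ I` and nonzero `t ∈ T`. -/
def IsMinGenOfIdeal (T I : Set ℕ) (x : ℕ) : Prop :=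
  x ∈ I ∧ ∀ y ∈ I, ∀ t ∈ T, t ≠ 0 → x ≠ y + t

/-- The order `⪯` on normalized ideals: `I ⪯ J` iff `I + K = J` for some `K ∈ 𝔑(S)`. -/
def Preceq (S I J : Set ℕ) : Prop :=
  ∃ K : Set ℕ, IsNormalizedIdeal S K ∧ I + K = J

/-- `M` is the supremum of `{I, J}` in `(𝔑(S), ⪯)`. -/
def IsSupNI (S I J M : Set ℕ) : Prop :=
  IsNormalizedIdeal S M ∧ Preceq S I M ∧ Preceq S J M ∧
    ∀ L : Set ℕ, IsNormalizedIdeal S L → Preceq S I L → Preceq S J L → Preceq S M L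

/-- `M` is the infimum of `{I, J}` in `(𝔑(S), ⪯)`. -/
def IsInfNI (S I J M : Set ℕ) : Prop :=
  IsNormalizedIdeal S M ∧ Preceq S M I ∧ Preceq S M J ∧
    ∀ L : Set ℕ, IsNormalizedIdeal S L → Preceq S L I → Preceq S L J → Preceq S L M

/-- `(𝔑(S), ⪯)` is a lattice: every pair of normalized ideals has a supremum
and an infimum with respect to `⪯`. -/
def NILattice (S : Set ℕ) : Prop :=
  ∀ I J : Set ℕ, IsNormalizedIdeal S I → IsNormalizedIdeal S J →
    (∃ M : Set ℕ, IsSupNI S I J M) ∧ (∃ M : Set ℕ, IsInfNI S I J M)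

/-- The ordinary numerical semigroup `H_m = {0} ∪ {n : n ≥ m}`. -/
def ordinaryNS (m : ℕ) : Set ℕ := {0} ∪ {n : ℕ | m ≤ n}

/-- `I ∈ 𝔑(S) \ {S}` is `+`-irreducible if `I = J + K` with `J, K ∈ 𝔑(S)`
implies `I = J` or `I = K`. -/
def PlusIrreducible (S I : Set ℕ) : Prop :=
  IsNormalizedIdeal S I ∧ I ≠ S ∧
    ∀ J K : Set ℕ, IsNormalizedIdeal S J → IsNormalizedIdeal S K → I = J + K → I = J ∨ I = K


set_option linter.unusedVariables false
def Hd (p : Prop) : Prop := p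
def P1 (a1 a2 a3 c1 c2 c3 : ℕ) : Prop :=
  c1 ≥ a1 ∨ (c1+a1≥c2 ∧ c1+a2≥c3) ∨ (c1≥a2+c3 ∧ c1+a3≥a2+c2) ∨ (c1≥a3+c2 ∧ c1+a1≥a3+c3)
def P2 (a1 a2 a3 c1 c2 c3 : ℕ) : Prop :=
  c2 ≥ a2 ∨ (c2+a1≥c3 ∧ c2+a3≥c1) ∨ (c2≥a1+c1 ∧ c2+a2≥a1+c3) ∨ (c2≥a3+c3 ∧ c2+a2≥a3+c1)
def Le4 (a1 a2 a3 c1 c2 c3 : ℕ) : Prop :=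
  a1 ≥ c1 ∧ a2 ≥ c2 ∧ a3 ≥ c3 ∧ P1 a1 a2 a3 c1 c2 c3 ∧ P2 a1 a2 a3 c1 c2 c3 ∧ P1 a3 a2 a1 c3 c2 c1
def Sm (a1 a2 a3 b1 b2 b3 s1 s2 s3 : ℕ) : Prop :=
  (s1 ≤ a1 ∧ s1 ≤ b1 ∧ s1 ≤ a2+b3 ∧ s1 ≤ a3+b2) ∧ (s2 ≤ a2 ∧ s2 ≤ b2 ∧ s2 ≤ a1+b1 ∧ s2 ≤ a3+b3) ∧
  (s3 ≤ a3 ∧ s3 ≤ b3 ∧ s3 ≤ a2+b1 ∧ s3 ≤ a1+b2) ∧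
  Hd (s1 = a1 ∨ s1 = b1 ∨ s1 = a2+b3 ∨ s1=a3+b2) ∧ Hd (s2 = a2 ∨ s2 = b2 ∨ s2 = a1+b1 ∨ s2=a3+b3) ∧
  Hd (s3 = a3 ∨ s3 = b3 ∨ s3 = a2+b1 ∨ s3=a1+b2)
def NX (a1 a2 a3 b1 b2 : ℕ) : Prop :=
  a2 < 2*a1 ∨ (a1 < b1 ∧ a2 < a1+b1) ∨ (a1 < b1 ∧ a2 > a1+b1) ∨ b2 ≤ a2 ∨ b1+a3 ≤ a2+b2
def NY (a1 a2 a3 b1 b3 : ℕ) : Prop :=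
  a1 < b1 ∨ a2 < 2*a1 ∨ b3 ≤ a3 ∨ a2 ≤ a3+b3

theorem notP1 {a1 a2 a3 c1 c2 c3 : ℕ} (h : ¬ P1 a1 a2 a3 c1 c2 c3) :
    c1 < a1 ∧ Hd (c1+a1<c2 ∨ c1+a2<c3) ∧ Hd (c1<a2+c3 ∨ c1+a3<a2+c2) ∧ Hd (c1<a3+c2 ∨ c1+a1<a3+c3) := by
  unfold P1 at h; unfold Hd; omega
theorem notP2 {a1 a2 a3 c1 c2 c3 : ℕ} (h : ¬ P2 a1 a2 a3 c1 c2 c3) :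
    c2 < a2 ∧ Hd (c2+a1<c3 ∨ c2+a3<c1) ∧ Hd (c2<a1+c1 ∨ c2+a2<a1+c3) ∧ Hd (c2<a3+c3 ∨ c2+a2<a3+c1) := by
  unfold P2 at h; unfold Hd; omega

theorem L12s (a1 a2 a3 b1 b2 b3 c1 c2 c3 : ℕ)
    (z : a1 ≤ b1 ∧ b2 ≤ a2 ∧ b3 ≤ a3) (hf : ¬ P2 a1 a2 a3 a1 b2 b3) (hp : ¬ P1 b1 b2 b3 a1 b2 b3)
    (hA : Le4 a1 a2 a3 c1 c2 c3) (hB : Le4 b1 b2 b3 c1 c2 c3) :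
    c1 ≤ a2+b3 ∧ c1 ≤ a3+b2 ∧ c2 ≤ a1+b1 ∧ c2 ≤ a3+b3 ∧ c3 ≤ a1+b2 ∧ c3 ≤ a2+b1 := by
  obtain ⟨za1, za2, za3, A1, A2, A3⟩ := hA
  obtain ⟨zb1, zb2, zb3, B1, B2, B3⟩ := hB
  obtain ⟨f0, f1, f2, f3⟩ := notP2 hf
  obtain ⟨p0, p1, p2, p3⟩ := notP1 hp
  clear hf hp
  refine ⟨?_, ?_, ?_, ?_, ?_, ?_⟩
  · rcases p1 with h|h <;> try omega
  · rcases p3 with h|h <;> try omega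
  · rcases B1 with h|h|h|h <;> try omega
  · rcases f3 with h|h <;> try omega
    all_goals rcases p1 with h|h <;> try omega
  · rcases B1 with h|h|h|h <;> try omega
  · rcases B1 with h|h|h|h <;> try omega
theorem L12P (a1 a2 a3 b1 b2 b3 c1 c2 c3 : ℕ) (s1 s2 s3 : ℕ)
    (z : a1 ≤ b1 ∧ b2 ≤ a2 ∧ b3 ≤ a3) (hf : ¬ P2 a1 a2 a3 a1 b2 b3) (hp : ¬ P1 b1 b2 b3 a1 b2 b3)
    (hA : Le4 a1 a2 a3 c1 c2 c3) (hB : Le4 b1 b2 b3 c1 c2 c3)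
    (hs : Sm a1 a2 a3 b1 b2 b3 s1 s2 s3) : Le4 s1 s2 s3 c1 c2 c3 := by
  have hq := L12s a1 a2 a3 b1 b2 b3 c1 c2 c3 z hf hp hA hB
  obtain ⟨za1, za2, za3, A1, A2, A3⟩ := hA
  obtain ⟨zb1, zb2, zb3, B1, B2, B3⟩ := hB
  obtain ⟨f0, f1, f2, f3⟩ := notP2 hf
  obtain ⟨p0, p1, p2, p3⟩ := notP1 hp
  clear hf hp
  obtain ⟨m1, m2, m3, M1, M2, M3⟩ := hs
  have y1 : c1 ≤ s1 := by rcases M1 with h|h|h|h <;> omega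
  have y2 : c2 ≤ s2 := by rcases M2 with h|h|h|h <;> omega
  have y3 : c3 ≤ s3 := by rcases M3 with h|h|h|h <;> omega
  clear hq
  have T1 : P1 s1 s2 s3 c1 c2 c3 := by
    by_contra hg
    obtain ⟨g0, g1, g2, g3⟩ := notP1 hg
    clear hg
    rcases M1 with h|h|h|h <;> try omega
    all_goals rcases p3 with h|h <;> try omega
    all_goals rcases A1 with h|h|h|h <;> try omega
    all_goals rcases g1 with h|h <;> try omega
    all_goals rcases B1 with h|h|h|h <;> try omega
    all_goals rcases M2 with h|h|h|h <;> try omega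
    all_goals rcases B2 with h|h|h|h <;> try omega
  have T3 : P1 s3 s2 s1 c3 c2 c1 := by
    by_contra hg
    obtain ⟨g0, g1, g2, g3⟩ := notP1 hg
    clear hg
    rcases p3 with h|h <;> try omega
    all_goals rcases f1 with h|h <;> try omega
    all_goals rcases M3 with h|h|h|h <;> try omega
    all_goals rcases g1 with h|h <;> try omega
    all_goals rcases B3 with h|h|h|h <;> try omega
    all_goals rcases M2 with h|h|h|h <;> try omega
  have T2 : P2 s1 s2 s3 c1 c2 c3 := by
    by_contra hg
    obtain ⟨g0, g1, g2, g3⟩ := notP2 hg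
    clear hg
    rcases p1 with h|h <;> try omega
    all_goals rcases f1 with h|h <;> try omega
    all_goals rcases M3 with h|h|h|h <;> try omega
    all_goals rcases M1 with h|h|h|h <;> try omega
    all_goals rcases g1 with h|h <;> try omega
    all_goals rcases A2 with h|h|h|h <;> try omega
    all_goals rcases g2 with h|h <;> try omega
    all_goals rcases T1 with h|h|h|h <;> try omega
    all_goals rcases B2 with h|h|h|h <;> try omega
    all_goals rcases M2 with h|h|h|h <;> try omega
  exact ⟨y1, y2, y3, T1, T2, T3⟩

theorem L13s (a1 a2 a3 b1 b2 b3 c1 c2 c3 : ℕ)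
    (z : a1 ≤ b1 ∧ b2 ≤ a2 ∧ b3 ≤ a3) (hf : ¬ P1 a3 a2 a1 b3 b2 a1) (hp : ¬ P1 b1 b2 b3 a1 b2 b3)
    (hA : Le4 a1 a2 a3 c1 c2 c3) (hB : Le4 b1 b2 b3 c1 c2 c3) :
    c1 ≤ a2+b3 ∧ c1 ≤ a3+b2 ∧ c2 ≤ a1+b1 ∧ c2 ≤ a3+b3 ∧ c3 ≤ a1+b2 ∧ c3 ≤ a2+b1 := by
  obtain ⟨za1, za2, za3, A1, A2, A3⟩ := hA
  obtain ⟨zb1, zb2, zb3, B1, B2, B3⟩ := hB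
  obtain ⟨f0, f1, f2, f3⟩ := notP1 hf
  obtain ⟨p0, p1, p2, p3⟩ := notP1 hp
  clear hf hp
  refine ⟨?_, ?_, ?_, ?_, ?_, ?_⟩
  · rcases p1 with h|h <;> try omega
  · rcases p3 with h|h <;> try omega
  · rcases B1 with h|h|h|h <;> try omega
  · rcases A3 with h|h|h|h <;> try omega
  · rcases f3 with h|h <;> try omega
  · rcases f3 with h|h <;> try omega
theorem L13P (a1 a2 a3 b1 b2 b3 c1 c2 c3 : ℕ) (s1 s2 s3 : ℕ)
    (z : a1 ≤ b1 ∧ b2 ≤ a2 ∧ b3 ≤ a3) (hf : ¬ P1 a3 a2 a1 b3 b2 a1) (hp : ¬ P1 b1 b2 b3 a1 b2 b3)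
    (hA : Le4 a1 a2 a3 c1 c2 c3) (hB : Le4 b1 b2 b3 c1 c2 c3)
    (hs : Sm a1 a2 a3 b1 b2 b3 s1 s2 s3) : Le4 s1 s2 s3 c1 c2 c3 := by
  have hq := L13s a1 a2 a3 b1 b2 b3 c1 c2 c3 z hf hp hA hB
  obtain ⟨za1, za2, za3, A1, A2, A3⟩ := hA
  obtain ⟨zb1, zb2, zb3, B1, B2, B3⟩ := hB
  obtain ⟨f0, f1, f2, f3⟩ := notP1 hf
  obtain ⟨p0, p1, p2, p3⟩ := notP1 hp
  clear hf hp
  obtain ⟨m1, m2, m3, M1, M2, M3⟩ := hs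
  have y1 : c1 ≤ s1 := by rcases M1 with h|h|h|h <;> omega
  have y2 : c2 ≤ s2 := by rcases M2 with h|h|h|h <;> omega
  have y3 : c3 ≤ s3 := by rcases M3 with h|h|h|h <;> omega
  clear hq
  have T1 : P1 s1 s2 s3 c1 c2 c3 := by
    by_contra hg
    obtain ⟨g0, g1, g2, g3⟩ := notP1 hg
    clear hg
    rcases f1 with h|h <;> try omega
    all_goals rcases p1 with h|h <;> try omega
    all_goals rcases M1 with h|h|h|h <;> try omega
    all_goals rcases A1 with h|h|h|h <;> try omega
    all_goals rcases g1 with h|h <;> try omega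
    all_goals rcases M2 with h|h|h|h <;> try omega
    all_goals rcases B2 with h|h|h|h <;> try omega
  have T3 : P1 s3 s2 s1 c3 c2 c1 := by
    by_contra hg
    obtain ⟨g0, g1, g2, g3⟩ := notP1 hg
    clear hg
    rcases B3 with h|h|h|h <;> try omega
    all_goals rcases g1 with h|h <;> try omega
    all_goals rcases M3 with h|h|h|h <;> try omega
    all_goals rcases M2 with h|h|h|h <;> try omega
    all_goals rcases A2 with h|h|h|h <;> try omega
  have T2 : P2 s1 s2 s3 c1 c2 c3 := by
    by_contra hg
    obtain ⟨g0, g1, g2, g3⟩ := notP2 hg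
    clear hg
    rcases f1 with h|h <;> try omega
    all_goals rcases p1 with h|h <;> try omega
    all_goals rcases M1 with h|h|h|h <;> try omega
    all_goals rcases M3 with h|h|h|h <;> try omega
    all_goals rcases g1 with h|h <;> try omega
    all_goals rcases B2 with h|h|h|h <;> try omega
    all_goals rcases A2 with h|h|h|h <;> try omega
    all_goals rcases M2 with h|h|h|h <;> try omega
    all_goals rcases g2 with h|h <;> try omega
    all_goals rcases g3 with h|h <;> try omega
    all_goals rcases B3 with h|h|h|h <;> try omega
    all_goals rcases A1 with h|h|h|h <;> try omega
  exact ⟨y1, y2, y3, T1, T2, T3⟩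

theorem L21s (a1 a2 a3 b1 b2 b3 c1 c2 c3 : ℕ)
    (z : b1 ≤ a1 ∧ a2 ≤ b2 ∧ b3 ≤ a3) (hf : ¬ P1 a1 a2 a3 b1 a2 b3) (hp : ¬ P2 b1 b2 b3 b1 a2 b3)
    (hA : Le4 a1 a2 a3 c1 c2 c3) (hB : Le4 b1 b2 b3 c1 c2 c3) :
    c1 ≤ a2+b3 ∧ c1 ≤ a3+b2 ∧ c2 ≤ a1+b1 ∧ c2 ≤ a3+b3 ∧ c3 ≤ a1+b2 ∧ c3 ≤ a2+b1 := by
  obtain ⟨za1, za2, za3, A1, A2, A3⟩ := hA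
  obtain ⟨zb1, zb2, zb3, B1, B2, B3⟩ := hB
  obtain ⟨f0, f1, f2, f3⟩ := notP1 hf
  obtain ⟨p0, p1, p2, p3⟩ := notP2 hp
  clear hf hp
  refine ⟨?_, ?_, ?_, ?_, ?_, ?_⟩
  · rcases f1 with h|h <;> try omega
  · rcases f1 with h|h <;> try omega
  · rcases A1 with h|h|h|h <;> try omega
  · rcases f1 with h|h <;> try omega
    all_goals rcases p3 with h|h <;> try omega
  · rcases A1 with h|h|h|h <;> try omega
  · rcases A1 with h|h|h|h <;> try omega
theorem L21P (a1 a2 a3 b1 b2 b3 c1 c2 c3 : ℕ) (s1 s2 s3 : ℕ)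
    (z : b1 ≤ a1 ∧ a2 ≤ b2 ∧ b3 ≤ a3) (hf : ¬ P1 a1 a2 a3 b1 a2 b3) (hp : ¬ P2 b1 b2 b3 b1 a2 b3)
    (hA : Le4 a1 a2 a3 c1 c2 c3) (hB : Le4 b1 b2 b3 c1 c2 c3)
    (hs : Sm a1 a2 a3 b1 b2 b3 s1 s2 s3) : Le4 s1 s2 s3 c1 c2 c3 := by
  have hq := L21s a1 a2 a3 b1 b2 b3 c1 c2 c3 z hf hp hA hB
  obtain ⟨za1, za2, za3, A1, A2, A3⟩ := hA
  obtain ⟨zb1, zb2, zb3, B1, B2, B3⟩ := hB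
  obtain ⟨f0, f1, f2, f3⟩ := notP1 hf
  obtain ⟨p0, p1, p2, p3⟩ := notP2 hp
  clear hf hp
  obtain ⟨m1, m2, m3, M1, M2, M3⟩ := hs
  have y1 : c1 ≤ s1 := by rcases M1 with h|h|h|h <;> omega
  have y2 : c2 ≤ s2 := by rcases M2 with h|h|h|h <;> omega
  have y3 : c3 ≤ s3 := by rcases M3 with h|h|h|h <;> omega
  clear hq
  have T1 : P1 s1 s2 s3 c1 c2 c3 := by
    by_contra hg
    obtain ⟨g0, g1, g2, g3⟩ := notP1 hg
    clear hg
    rcases B1 with h|h|h|h <;> try omega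
    all_goals rcases g1 with h|h <;> try omega
    all_goals rcases A1 with h|h|h|h <;> try omega
    all_goals rcases M1 with h|h|h|h <;> try omega
    all_goals rcases M2 with h|h|h|h <;> try omega
    all_goals rcases A2 with h|h|h|h <;> try omega
  have T3 : P1 s3 s2 s1 c3 c2 c1 := by
    by_contra hg
    obtain ⟨g0, g1, g2, g3⟩ := notP1 hg
    clear hg
    rcases p1 with h|h <;> try omega
    all_goals rcases f1 with h|h <;> try omega
    all_goals rcases M3 with h|h|h|h <;> try omega
    all_goals rcases g1 with h|h <;> try omega
    all_goals rcases M2 with h|h|h|h <;> try omega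
    all_goals rcases A3 with h|h|h|h <;> try omega
  have T2 : P2 s1 s2 s3 c1 c2 c3 := by
    by_contra hg
    obtain ⟨g0, g1, g2, g3⟩ := notP2 hg
    clear hg
    rcases M1 with h|h|h|h <;> try omega
    all_goals rcases f1 with h|h <;> try omega
    all_goals rcases p1 with h|h <;> try omega
    all_goals rcases M3 with h|h|h|h <;> try omega
    all_goals rcases g1 with h|h <;> try omega
    all_goals rcases B2 with h|h|h|h <;> try omega
    all_goals rcases g2 with h|h <;> try omega
    all_goals rcases T1 with h|h|h|h <;> try omega
    all_goals rcases A2 with h|h|h|h <;> try omega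
    all_goals rcases M2 with h|h|h|h <;> try omega
  exact ⟨y1, y2, y3, T1, T2, T3⟩

theorem E1s (a1 a2 a3 b1 b2 b3 c1 c2 c3 : ℕ)
    (z : a1 ≤ b1 ∧ a2 ≤ b2 ∧ a3 ≤ b3) (hf : ¬ P1 b1 b2 b3 a1 a2 a3) (nX : NX a1 a2 a3 b1 b2) (nY : NY a1 a2 a3 b1 b3) (mX : NX a3 a2 a1 b3 b2) (mY : NY a3 a2 a1 b3 b1)
    (hA : Le4 a1 a2 a3 c1 c2 c3) (hB : Le4 b1 b2 b3 c1 c2 c3) :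
    c1 ≤ a2+b3 ∧ c1 ≤ a3+b2 ∧ c2 ≤ a1+b1 ∧ c2 ≤ a3+b3 ∧ c3 ≤ a1+b2 ∧ c3 ≤ a2+b1 := by
  obtain ⟨za1, za2, za3, A1, A2, A3⟩ := hA
  obtain ⟨zb1, zb2, zb3, B1, B2, B3⟩ := hB
  obtain ⟨f0, f1, f2, f3⟩ := notP1 hf
  clear hf
  refine ⟨?_, ?_, ?_, ?_, ?_, ?_⟩
  · rcases f1 with h|h <;> try omega
  · rcases f1 with h|h <;> try omega
  · rcases B1 with h|h|h|h <;> try omega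
  · rcases f1 with h|h <;> try omega
    all_goals rcases mY with h|h|h|h <;> try omega
    all_goals rcases B3 with h|h|h|h <;> try omega
  · rcases B1 with h|h|h|h <;> try omega
  · rcases B1 with h|h|h|h <;> try omega
    all_goals rcases A1 with h|h|h|h <;> try omega
    all_goals rcases B2 with h|h|h|h <;> try omega
    all_goals rcases A2 with h|h|h|h <;> try omega
    all_goals rcases nX with h|h|h|h|h <;> try omega
    all_goals rcases f1 with h|h <;> try omega
theorem E1P (a1 a2 a3 b1 b2 b3 c1 c2 c3 : ℕ) (s1 s2 s3 : ℕ)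
    (z : a1 ≤ b1 ∧ a2 ≤ b2 ∧ a3 ≤ b3) (hf : ¬ P1 b1 b2 b3 a1 a2 a3) (nX : NX a1 a2 a3 b1 b2) (nY : NY a1 a2 a3 b1 b3) (mX : NX a3 a2 a1 b3 b2) (mY : NY a3 a2 a1 b3 b1)
    (hA : Le4 a1 a2 a3 c1 c2 c3) (hB : Le4 b1 b2 b3 c1 c2 c3)
    (hs : Sm a1 a2 a3 b1 b2 b3 s1 s2 s3) : Le4 s1 s2 s3 c1 c2 c3 := by
  have hq := E1s a1 a2 a3 b1 b2 b3 c1 c2 c3 z hf nX nY mX mY hA hB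
  obtain ⟨za1, za2, za3, A1, A2, A3⟩ := hA
  obtain ⟨zb1, zb2, zb3, B1, B2, B3⟩ := hB
  obtain ⟨f0, f1, f2, f3⟩ := notP1 hf
  clear hf
  obtain ⟨m1, m2, m3, M1, M2, M3⟩ := hs
  have y1 : c1 ≤ s1 := by rcases M1 with h|h|h|h <;> omega
  have y2 : c2 ≤ s2 := by rcases M2 with h|h|h|h <;> omega
  have y3 : c3 ≤ s3 := by rcases M3 with h|h|h|h <;> omega
  clear hq
  have T1 : P1 s1 s2 s3 c1 c2 c3 := by
    by_contra hg
    obtain ⟨g0, g1, g2, g3⟩ := notP1 hg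
    clear hg
    rcases A1 with h|h|h|h <;> try omega
    all_goals rcases g1 with h|h <;> try omega
    all_goals rcases M1 with h|h|h|h <;> try omega
    all_goals rcases M2 with h|h|h|h <;> try omega
    all_goals rcases B2 with h|h|h|h <;> try omega
  have T3 : P1 s3 s2 s1 c3 c2 c1 := by
    by_contra hg
    obtain ⟨g0, g1, g2, g3⟩ := notP1 hg
    clear hg
    rcases A3 with h|h|h|h <;> try omega
    all_goals rcases g1 with h|h <;> try omega
    all_goals rcases M3 with h|h|h|h <;> try omega
    all_goals rcases M2 with h|h|h|h <;> try omega
    all_goals rcases f1 with h|h <;> try omega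
    all_goals rcases mY with h|h|h|h <;> try omega
    all_goals rcases B2 with h|h|h|h <;> try omega
  have T2 : P2 s1 s2 s3 c1 c2 c3 := by
    by_contra hg
    obtain ⟨g0, g1, g2, g3⟩ := notP2 hg
    clear hg
    rcases f1 with h|h <;> try omega
    all_goals rcases M1 with h|h|h|h <;> try omega
    all_goals rcases A2 with h|h|h|h <;> try omega
    all_goals rcases g1 with h|h <;> try omega
    all_goals rcases M3 with h|h|h|h <;> try omega
    all_goals rcases g2 with h|h <;> try omega
    all_goals rcases M2 with h|h|h|h <;> try omega
    all_goals rcases B2 with h|h|h|h <;> try omega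
    all_goals rcases g3 with h|h <;> try omega
    all_goals rcases A1 with h|h|h|h <;> try omega
    all_goals rcases T3 with h|h|h|h <;> try omega
  exact ⟨y1, y2, y3, T1, T2, T3⟩

theorem E2s (a1 a2 a3 b1 b2 b3 c1 c2 c3 : ℕ)
    (z : a1 ≤ b1 ∧ a2 ≤ b2 ∧ a3 ≤ b3) (hf : ¬ P2 b1 b2 b3 a1 a2 a3) (nX : NX a1 a2 a3 b1 b2) (nY : NY a1 a2 a3 b1 b3) (mX : NX a3 a2 a1 b3 b2) (mY : NY a3 a2 a1 b3 b1)
    (hA : Le4 a1 a2 a3 c1 c2 c3) (hB : Le4 b1 b2 b3 c1 c2 c3) :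
    c1 ≤ a2+b3 ∧ c1 ≤ a3+b2 ∧ c2 ≤ a1+b1 ∧ c2 ≤ a3+b3 ∧ c3 ≤ a1+b2 ∧ c3 ≤ a2+b1 := by
  obtain ⟨za1, za2, za3, A1, A2, A3⟩ := hA
  obtain ⟨zb1, zb2, zb3, B1, B2, B3⟩ := hB
  obtain ⟨f0, f1, f2, f3⟩ := notP2 hf
  clear hf
  refine ⟨?_, ?_, ?_, ?_, ?_, ?_⟩
  · rcases A3 with h|h|h|h <;> try omega
    all_goals rcases B2 with h|h|h|h <;> try omega
    all_goals rcases f3 with h|h <;> try omega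
    all_goals rcases mX with h|h|h|h|h <;> try omega
    all_goals rcases B3 with h|h|h|h <;> try omega
    all_goals rcases A2 with h|h|h|h <;> try omega
  · rcases B3 with h|h|h|h <;> try omega
    all_goals rcases B2 with h|h|h|h <;> try omega
    all_goals rcases mX with h|h|h|h|h <;> try omega
    all_goals rcases f3 with h|h <;> try omega
  · rcases f2 with h|h <;> try omega
    all_goals rcases nX with h|h|h|h|h <;> try omega
    all_goals rcases B1 with h|h|h|h <;> try omega
  · rcases B3 with h|h|h|h <;> try omega
    all_goals rcases mX with h|h|h|h|h <;> try omega
    all_goals rcases f3 with h|h <;> try omega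
  · rcases B1 with h|h|h|h <;> try omega
    all_goals rcases B2 with h|h|h|h <;> try omega
    all_goals rcases f2 with h|h <;> try omega
    all_goals rcases nX with h|h|h|h|h <;> try omega
  · rcases A1 with h|h|h|h <;> try omega
    all_goals rcases B2 with h|h|h|h <;> try omega
    all_goals rcases f2 with h|h <;> try omega
    all_goals rcases nX with h|h|h|h|h <;> try omega
    all_goals rcases B1 with h|h|h|h <;> try omega
    all_goals rcases A2 with h|h|h|h <;> try omega
theorem E2P (a1 a2 a3 b1 b2 b3 c1 c2 c3 : ℕ) (s1 s2 s3 : ℕ)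
    (z : a1 ≤ b1 ∧ a2 ≤ b2 ∧ a3 ≤ b3) (hf : ¬ P2 b1 b2 b3 a1 a2 a3) (nX : NX a1 a2 a3 b1 b2) (nY : NY a1 a2 a3 b1 b3) (mX : NX a3 a2 a1 b3 b2) (mY : NY a3 a2 a1 b3 b1)
    (hA : Le4 a1 a2 a3 c1 c2 c3) (hB : Le4 b1 b2 b3 c1 c2 c3)
    (hs : Sm a1 a2 a3 b1 b2 b3 s1 s2 s3) : Le4 s1 s2 s3 c1 c2 c3 := by
  have hq := E2s a1 a2 a3 b1 b2 b3 c1 c2 c3 z hf nX nY mX mY hA hB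
  obtain ⟨za1, za2, za3, A1, A2, A3⟩ := hA
  obtain ⟨zb1, zb2, zb3, B1, B2, B3⟩ := hB
  obtain ⟨f0, f1, f2, f3⟩ := notP2 hf
  clear hf
  obtain ⟨m1, m2, m3, M1, M2, M3⟩ := hs
  have y1 : c1 ≤ s1 := by rcases M1 with h|h|h|h <;> omega
  have y2 : c2 ≤ s2 := by rcases M2 with h|h|h|h <;> omega
  have y3 : c3 ≤ s3 := by rcases M3 with h|h|h|h <;> omega
  clear hq
  have T1 : P1 s1 s2 s3 c1 c2 c3 := by
    by_contra hg
    obtain ⟨g0, g1, g2, g3⟩ := notP1 hg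
    clear hg
    rcases g1 with h|h <;> try omega
    all_goals rcases A1 with h|h|h|h <;> try omega
    all_goals rcases M1 with h|h|h|h <;> try omega
    all_goals rcases M2 with h|h|h|h <;> try omega
    all_goals rcases f2 with h|h <;> try omega
    all_goals rcases nX with h|h|h|h|h <;> try omega
    all_goals rcases B2 with h|h|h|h <;> try omega
  have T3 : P1 s3 s2 s1 c3 c2 c1 := by
    by_contra hg
    obtain ⟨g0, g1, g2, g3⟩ := notP1 hg
    clear hg
    rcases A3 with h|h|h|h <;> try omega
    all_goals rcases g1 with h|h <;> try omega
    all_goals rcases M2 with h|h|h|h <;> try omega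
    all_goals rcases M3 with h|h|h|h <;> try omega
    all_goals rcases f3 with h|h <;> try omega
    all_goals rcases mX with h|h|h|h|h <;> try omega
    all_goals rcases B2 with h|h|h|h <;> try omega
  have T2 : P2 s1 s2 s3 c1 c2 c3 := by
    by_contra hg
    obtain ⟨g0, g1, g2, g3⟩ := notP2 hg
    clear hg
    rcases f1 with h|h <;> try omega
    all_goals rcases M3 with h|h|h|h <;> try omega
    all_goals rcases M1 with h|h|h|h <;> try omega
    all_goals rcases g1 with h|h <;> try omega
    all_goals rcases A2 with h|h|h|h <;> try omega
    all_goals rcases M2 with h|h|h|h <;> try omega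
    all_goals rcases g2 with h|h <;> try omega
    all_goals rcases g3 with h|h <;> try omega
    all_goals rcases B2 with h|h|h|h <;> try omega
    all_goals rcases T1 with h|h|h|h <;> try omega
    all_goals rcases T3 with h|h|h|h <;> try omega
  exact ⟨y1, y2, y3, T1, T2, T3⟩

theorem U1 (a1 a2 a3 b1 b2 b3 c1 c2 c3 : ℕ)
    (z : a1 ≤ b1 ∧ b2 ≤ a2 ∧ b3 ≤ a3)
    (hA : Le4 a1 a2 a3 c1 c2 c3) (hB : Le4 b1 b2 b3 c1 c2 c3) : Le4 a1 b2 b3 c1 c2 c3 := by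
  obtain ⟨za1, za2, za3, A1, A2, A3⟩ := hA
  obtain ⟨zb1, zb2, zb3, B1, B2, B3⟩ := hB
  refine ⟨by omega, by omega, by omega, ?_, ?_, ?_⟩ <;> by_contra hg
  · obtain ⟨g0, g1, g2, g3⟩ := notP1 hg
    clear hg
    rcases g1 with h|h <;> try omega
    all_goals rcases A1 with h|h|h|h <;> try omega
    all_goals rcases B1 with h|h|h|h <;> try omega
  · obtain ⟨g0, g1, g2, g3⟩ := notP2 hg
    clear hg
    rcases g1 with h|h <;> try omega
    all_goals rcases B2 with h|h|h|h <;> try omega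
    all_goals rcases A2 with h|h|h|h <;> try omega
    all_goals rcases g3 with h|h <;> try omega
    all_goals rcases g2 with h|h <;> try omega
    all_goals rcases B1 with h|h|h|h <;> try omega
  · obtain ⟨g0, g1, g2, g3⟩ := notP1 hg
    clear hg
    rcases B3 with h|h|h|h <;> try omega
    all_goals rcases g1 with h|h <;> try omega
theorem U2 (a1 a2 a3 b1 b2 b3 c1 c2 c3 : ℕ)
    (z : b1 ≤ a1 ∧ a2 ≤ b2 ∧ b3 ≤ a3)
    (hA : Le4 a1 a2 a3 c1 c2 c3) (hB : Le4 b1 b2 b3 c1 c2 c3) : Le4 b1 a2 b3 c1 c2 c3 := by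
  obtain ⟨za1, za2, za3, A1, A2, A3⟩ := hA
  obtain ⟨zb1, zb2, zb3, B1, B2, B3⟩ := hB
  refine ⟨by omega, by omega, by omega, ?_, ?_, ?_⟩ <;> by_contra hg
  · obtain ⟨g0, g1, g2, g3⟩ := notP1 hg
    clear hg
    rcases B1 with h|h|h|h <;> try omega
    all_goals rcases g1 with h|h <;> try omega
    all_goals rcases A1 with h|h|h|h <;> try omega
  · obtain ⟨g0, g1, g2, g3⟩ := notP2 hg
    clear hg
    rcases B2 with h|h|h|h <;> try omega
    all_goals rcases g1 with h|h <;> try omega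
    all_goals rcases g2 with h|h <;> try omega
    all_goals rcases A2 with h|h|h|h <;> try omega
    all_goals rcases g3 with h|h <;> try omega
    all_goals rcases A1 with h|h|h|h <;> try omega
    all_goals rcases A3 with h|h|h|h <;> try omega
  · obtain ⟨g0, g1, g2, g3⟩ := notP1 hg
    clear hg
    rcases B3 with h|h|h|h <;> try omega
    all_goals rcases g1 with h|h <;> try omega
    all_goals rcases A3 with h|h|h|h <;> try omega

theorem Xa (a1 a2 a3 b1 b2 b3 c1 c2 c3 : ℕ)
    (z : a1 ≤ b1 ∧ a2 ≤ b2 ∧ a3 ≤ b3) (H : Hd (a2 = a1+b1 ∨ (a1 = b1 ∧ a2 ≥ 2*a1))) (H2 : a2 < b2) (H3 : a2+b2 < b1+a3) (m : ℕ) (hm : a2+b2 = b1+m) :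
    Le4 a1 a2 a3 a1 a2 m ∧ Le4 b1 b2 b3 a1 a2 m := by
  unfold Le4 P1 P2
  rcases H with H|H <;> omega
theorem Xc (a1 a2 a3 b1 b2 b3 c1 c2 c3 : ℕ)
    (z : a1 ≤ b1 ∧ a2 ≤ b2 ∧ a3 ≤ b3) (H : Hd (a2 = a1+b1 ∨ (a1 = b1 ∧ a2 ≥ 2*a1))) (H2 : a2 < b2) (H3 : a2+b2 < b1+a3) (m : ℕ) (hm : a2+b2 = b1+m)
    (hA : Le4 a1 a2 a3 c1 c2 c3) (hB : Le4 b1 b2 b3 c1 c2 c3) :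
    Le4 a1 a2 m c1 c2 c3 := by
  obtain ⟨za1, za2, za3, A1, A2, A3⟩ := hA
  obtain ⟨zb1, zb2, zb3, B1, B2, B3⟩ := hB
  have y1 : c1 ≤ a1 := by
    omega
  have y2 : c2 ≤ a2 := by
    omega
  have y3 : c3 ≤ m := by
    rcases B2 with h|h|h|h <;> try omega
    all_goals rcases H with h|h <;> try omega
    all_goals rcases B1 with h|h|h|h <;> try omega
  refine ⟨y1, y2, y3, ?_, ?_, ?_⟩ <;> by_contra hg
  · obtain ⟨g0, g1, g2, g3⟩ := notP1 hg
    clear hg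
    rcases A1 with h|h|h|h <;> try omega
    all_goals rcases g1 with h|h <;> try omega
  · obtain ⟨g0, g1, g2, g3⟩ := notP2 hg
    clear hg
    rcases H with h|h <;> try omega
    all_goals rcases g1 with h|h <;> try omega
    all_goals rcases A2 with h|h|h|h <;> try omega
    all_goals rcases g2 with h|h <;> try omega
  · obtain ⟨g0, g1, g2, g3⟩ := notP1 hg
    clear hg
    rcases H with h|h <;> try omega
    all_goals rcases g1 with h|h <;> try omega
theorem Ya (a1 a2 a3 b1 b2 b3 c1 c2 c3 : ℕ)
    (z : a1 ≤ b1 ∧ a2 ≤ b2 ∧ a3 ≤ b3) (H : a1 = b1) (H1 : a2 ≥ 2*a1) (H2 : a3 < b3) (H3 : a3+b3 < a2) (m : ℕ) (hm : a3+b3=m) :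
    Le4 a1 a2 a3 a1 m a3 ∧ Le4 b1 b2 b3 a1 m a3 := by
  unfold Le4 P1 P2
  omega
theorem Yc (a1 a2 a3 b1 b2 b3 c1 c2 c3 : ℕ)
    (z : a1 ≤ b1 ∧ a2 ≤ b2 ∧ a3 ≤ b3) (H : a1 = b1) (H1 : a2 ≥ 2*a1) (H2 : a3 < b3) (H3 : a3+b3 < a2) (m : ℕ) (hm : a3+b3=m)
    (hA : Le4 a1 a2 a3 c1 c2 c3) (hB : Le4 b1 b2 b3 c1 c2 c3) :
    Le4 a1 m a3 c1 c2 c3 := by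
  obtain ⟨za1, za2, za3, A1, A2, A3⟩ := hA
  obtain ⟨zb1, zb2, zb3, B1, B2, B3⟩ := hB
  have y1 : c1 ≤ a1 := by
    omega
  have y2 : c2 ≤ m := by
    rcases B3 with h|h|h|h <;> try omega
  have y3 : c3 ≤ a3 := by
    omega
  refine ⟨y1, y2, y3, ?_, ?_, ?_⟩ <;> by_contra hg
  · obtain ⟨g0, g1, g2, g3⟩ := notP1 hg
    clear hg
    rcases g1 with h|h <;> try omega
    all_goals rcases A1 with h|h|h|h <;> try omega
  · obtain ⟨g0, g1, g2, g3⟩ := notP2 hg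
    clear hg
    rcases A2 with h|h|h|h <;> try omega
    all_goals rcases g1 with h|h <;> try omega
    all_goals rcases g3 with h|h <;> try omega
    all_goals rcases g2 with h|h <;> try omega
    all_goals rcases B2 with h|h|h|h <;> try omega
    all_goals rcases A3 with h|h|h|h <;> try omega
  · obtain ⟨g0, g1, g2, g3⟩ := notP1 hg
    clear hg
    rcases A3 with h|h|h|h <;> try omega
    all_goals rcases g1 with h|h <;> try omega
    all_goals rcases B2 with h|h|h|h <;> try omega

theorem TR (a1 a2 a3 b1 b2 b3 c1 c2 c3 : ℕ)
    (hA : Le4 a1 a2 a3 b1 b2 b3) (hB : Le4 b1 b2 b3 c1 c2 c3) : Le4 a1 a2 a3 c1 c2 c3 := by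
  obtain ⟨za1, za2, za3, A1, A2, A3⟩ := hA
  obtain ⟨zb1, zb2, zb3, B1, B2, B3⟩ := hB
  refine ⟨by omega, by omega, by omega, ?_, ?_, ?_⟩ <;> by_contra hg
  · obtain ⟨g0, g1, g2, g3⟩ := notP1 hg
    clear hg
    rcases g1 with h|h <;> try omega
    all_goals rcases B1 with h|h|h|h <;> try omega
    all_goals rcases A1 with h|h|h|h <;> try omega
  · obtain ⟨g0, g1, g2, g3⟩ := notP2 hg
    clear hg
    rcases g1 with h|h <;> try omega
    all_goals rcases B2 with h|h|h|h <;> try omega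
    all_goals rcases A2 with h|h|h|h <;> try omega
    all_goals rcases g3 with h|h <;> try omega
    all_goals rcases A3 with h|h|h|h <;> try omega
    all_goals rcases A1 with h|h|h|h <;> try omega
    all_goals rcases g2 with h|h <;> try omega
  · obtain ⟨g0, g1, g2, g3⟩ := notP1 hg
    clear hg
    rcases g1 with h|h <;> try omega
    all_goals rcases B3 with h|h|h|h <;> try omega
    all_goals rcases A3 with h|h|h|h <;> try omega
theorem Le4.mir {a1 a2 a3 c1 c2 c3 : ℕ} (h : Le4 a1 a2 a3 c1 c2 c3) : Le4 a3 a2 a1 c3 c2 c1 := by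
  obtain ⟨x1, x2, x3, q1, q2, q3⟩ := h
  refine ⟨x3, x2, x1, q3, ?_, q1⟩
  unfold P2 at *; tauto
theorem Le4.refl (a1 a2 a3 : ℕ) : Le4 a1 a2 a3 a1 a2 a3 :=
  ⟨le_refl _, le_refl _, le_refl _, Or.inl (le_refl _), Or.inl (le_refl _), Or.inl (le_refl _)⟩
theorem Sm.mir {a1 a2 a3 b1 b2 b3 s1 s2 s3 : ℕ} (h : Sm a1 a2 a3 b1 b2 b3 s1 s2 s3) :
    Sm a3 a2 a1 b3 b2 b1 s3 s2 s1 := by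
  unfold Sm Hd at *
  obtain ⟨h1, h2, h3, h4, h5, h6⟩ := h
  refine ⟨by omega, by omega, by omega, ?_, ?_, ?_⟩
  · clear h4 h5; omega
  · clear h4 h6; omega
  · clear h5 h6; omega
theorem Sm.comm {a1 a2 a3 b1 b2 b3 s1 s2 s3 : ℕ} (h : Sm a1 a2 a3 b1 b2 b3 s1 s2 s3) :
    Sm b1 b2 b3 a1 a2 a3 s1 s2 s3 := by
  unfold Sm Hd at *
  obtain ⟨h1, h2, h3, h4, h5, h6⟩ := h
  refine ⟨by omega, by omega, by omega, ?_, ?_, ?_⟩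
  · clear h5 h6; omega
  · clear h4 h6; omega
  · clear h4 h5; omega
theorem Sm.le {a1 a2 a3 b1 b2 b3 s1 s2 s3 : ℕ} (h : Sm a1 a2 a3 b1 b2 b3 s1 s2 s3) :
    Le4 a1 a2 a3 s1 s2 s3 := by
  obtain ⟨h1, h2, h3, h4, h5, h6⟩ := h
  refine ⟨by omega, by omega, by omega, ?_, ?_, ?_⟩
  · unfold P1; rcases h4 with h|h|h|h <;> omega
  · unfold P2; rcases h5 with h|h|h|h <;> omega
  · unfold P1; rcases h6 with h|h|h|h <;> omega
theorem Sm.ex (a1 a2 a3 b1 b2 b3 : ℕ) (ha : a1 % 4 = 1 ∧ a2 % 4 = 2 ∧ a3 % 4 = 3)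
    (hb : b1 % 4 = 1 ∧ b2 % 4 = 2 ∧ b3 % 4 = 3) :
    ∃ s1 s2 s3, (s1 % 4 = 1 ∧ s2 % 4 = 2 ∧ s3 % 4 = 3) ∧ Sm a1 a2 a3 b1 b2 b3 s1 s2 s3 := by
  have key : ∀ x y z w : ℕ, ∃ s, (s ≤ x ∧ s ≤ y ∧ s ≤ z ∧ s ≤ w) ∧ (s = x ∨ s = y ∨ s = z ∨ s = w) := by
    intro x y z w
    refine ⟨min (min x y) (min z w), by omega, by omega⟩
  obtain ⟨s1, h1, k1⟩ := key a1 b1 (a2+b3) (a3+b2)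
  obtain ⟨s2, h2, k2⟩ := key a2 b2 (a1+b1) (a3+b3)
  obtain ⟨s3, h3, k3⟩ := key a3 b3 (a2+b1) (a1+b2)
  refine ⟨s1, s2, s3, ⟨?_, ?_, ?_⟩, h1, h2, h3, k1, k2, k3⟩
  · clear k2 k3; omega
  · clear k1 k3; omega
  · clear k1 k2; omega

def SupOK (a1 a2 a3 b1 b2 b3 : ℕ) : Prop :=
  ∃ m1 m2 m3, (m1 % 4 = 1 ∧ m2 % 4 = 2 ∧ m3 % 4 = 3) ∧ Le4 a1 a2 a3 m1 m2 m3 ∧ Le4 b1 b2 b3 m1 m2 m3 ∧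
    ∀ c1 c2 c3, Le4 a1 a2 a3 c1 c2 c3 → Le4 b1 b2 b3 c1 c2 c3 → Le4 m1 m2 m3 c1 c2 c3
theorem SupOK.comm {a1 a2 a3 b1 b2 b3 : ℕ} (h : SupOK a1 a2 a3 b1 b2 b3) : SupOK b1 b2 b3 a1 a2 a3 := by
  obtain ⟨m1, m2, m3, h1, h2, h3, h4⟩ := h
  exact ⟨m1, m2, m3, h1, h3, h2, fun c1 c2 c3 h h' => h4 c1 c2 c3 h' h⟩
theorem SupOK.sum {a1 a2 a3 b1 b2 b3 : ℕ} (ha : a1 % 4 = 1 ∧ a2 % 4 = 2 ∧ a3 % 4 = 3)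
    (hb : b1 % 4 = 1 ∧ b2 % 4 = 2 ∧ b3 % 4 = 3)
    (h : ∀ s1 s2 s3, Sm a1 a2 a3 b1 b2 b3 s1 s2 s3 → ∀ c1 c2 c3, Le4 a1 a2 a3 c1 c2 c3 →
      Le4 b1 b2 b3 c1 c2 c3 → Le4 s1 s2 s3 c1 c2 c3) : SupOK a1 a2 a3 b1 b2 b3 := by
  obtain ⟨s1, s2, s3, hr, hs⟩ := Sm.ex a1 a2 a3 b1 b2 b3 ha hb
  exact ⟨s1, s2, s3, hr, hs.le, hs.comm.le, h s1 s2 s3 hs⟩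

theorem SupOK.subset {a1 a2 a3 b1 b2 b3 : ℕ} (ha : a1 % 4 = 1 ∧ a2 % 4 = 2 ∧ a3 % 4 = 3)
    (hb : b1 % 4 = 1 ∧ b2 % 4 = 2 ∧ b3 % 4 = 3) (z : a1 ≤ b1 ∧ a2 ≤ b2 ∧ a3 ≤ b3) :
    SupOK a1 a2 a3 b1 b2 b3 := by
  by_cases hle : Le4 b1 b2 b3 a1 a2 a3
  · exact ⟨a1, a2, a3, ha, Le4.refl _ _ _, hle, fun c1 c2 c3 h _ => h⟩
  by_cases hX : (a2 = a1+b1 ∨ (a1 = b1 ∧ a2 ≥ 2*a1)) ∧ a2 < b2 ∧ a2+b2 < b1+a3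
  · obtain ⟨H, H2, H3⟩ := hX
    have hm : a2 + b2 = b1 + (a2+b2-b1) := by omega
    refine ⟨a1, a2, a2+b2-b1, by omega, (Xa _ _ _ _ _ _ 0 0 0 z H H2 H3 _ hm).1,
      (Xa _ _ _ _ _ _ 0 0 0 z H H2 H3 _ hm).2, fun c1 c2 c3 hA hB => Xc _ _ _ _ _ _ _ _ _ z H H2 H3 _ hm hA hB⟩
  by_cases hY : a1 = b1 ∧ a2 ≥ 2*a1 ∧ a3 < b3 ∧ a3+b3 < a2
  · obtain ⟨H, H1, H2, H3⟩ := hY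
    refine ⟨a1, a3+b3, a3, by omega, (Ya _ _ _ _ _ _ 0 0 0 z H H1 H2 H3 _ rfl).1,
      (Ya _ _ _ _ _ _ 0 0 0 z H H1 H2 H3 _ rfl).2, fun c1 c2 c3 hA hB => Yc _ _ _ _ _ _ _ _ _ z H H1 H2 H3 _ rfl hA hB⟩
  have z' : a3 ≤ b3 ∧ a2 ≤ b2 ∧ a1 ≤ b1 := by omega
  by_cases hX' : (a2 = a3+b3 ∨ (a3 = b3 ∧ a2 ≥ 2*a3)) ∧ a2 < b2 ∧ a2+b2 < b3+a1
  · obtain ⟨H, H2, H3⟩ := hX'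
    have hm : a2 + b2 = b3 + (a2+b2-b3) := by omega
    refine ⟨a2+b2-b3, a2, a3, by omega, (Xa _ _ _ _ _ _ 0 0 0 z' H H2 H3 _ hm).1.mir,
      (Xa _ _ _ _ _ _ 0 0 0 z' H H2 H3 _ hm).2.mir, fun c1 c2 c3 hA hB => (Xc _ _ _ _ _ _ _ _ _ z' H H2 H3 _ hm hA.mir hB.mir).mir⟩
  by_cases hY' : a3 = b3 ∧ a2 ≥ 2*a3 ∧ a1 < b1 ∧ a1+b1 < a2
  · obtain ⟨H, H1, H2, H3⟩ := hY'
    refine ⟨a1, a1+b1, a3, by omega, (Ya _ _ _ _ _ _ 0 0 0 z' H H1 H2 H3 _ rfl).1.mir,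
      (Ya _ _ _ _ _ _ 0 0 0 z' H H1 H2 H3 _ rfl).2.mir, fun c1 c2 c3 hA hB => (Yc _ _ _ _ _ _ _ _ _ z' H H1 H2 H3 _ rfl hA.mir hB.mir).mir⟩
  have nX : NX a1 a2 a3 b1 b2 := by unfold NX; omega
  have nY : NY a1 a2 a3 b1 b3 := by unfold NY; omega
  have mX : NX a3 a2 a1 b3 b2 := by unfold NX; omega
  have mY : NY a3 a2 a1 b3 b1 := by unfold NY; omega
  refine SupOK.sum ha hb fun s1 s2 s3 hs c1 c2 c3 hA hB => ?_
  by_cases f1 : P1 b1 b2 b3 a1 a2 a3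
  · by_cases f2 : P2 b1 b2 b3 a1 a2 a3
    · have f3 : ¬ P1 b3 b2 b1 a3 a2 a1 := fun f3 => hle ⟨z.1, z.2.1, z.2.2, f1, f2, f3⟩
      exact (E1P _ _ _ _ _ _ _ _ _ _ _ _ z' f3 mX mY nX nY hA.mir hB.mir hs.mir).mir
    · exact E2P _ _ _ _ _ _ _ _ _ _ _ _ z f2 nX nY mX mY hA hB hs
  · exact E1P _ _ _ _ _ _ _ _ _ _ _ _ z f1 nX nY mX mY hA hB hs

theorem SupOK.core {a1 a2 a3 b1 b2 b3 u1 u2 u3 : ℕ} (ha : a1 % 4 = 1 ∧ a2 % 4 = 2 ∧ a3 % 4 = 3)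
    (hb : b1 % 4 = 1 ∧ b2 % 4 = 2 ∧ b3 % 4 = 3) (hu : u1 % 4 = 1 ∧ u2 % 4 = 2 ∧ u3 % 4 = 3)
    (za : u1 ≤ a1 ∧ u2 ≤ a2 ∧ u3 ≤ a3) (zb : u1 ≤ b1 ∧ u2 ≤ b2 ∧ u3 ≤ b3)
    (hU : ∀ c1 c2 c3, Le4 a1 a2 a3 c1 c2 c3 → Le4 b1 b2 b3 c1 c2 c3 → Le4 u1 u2 u3 c1 c2 c3)
    (hL : ¬ Le4 a1 a2 a3 u1 u2 u3 → ¬ Le4 b1 b2 b3 u1 u2 u3 →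
      ∀ s1 s2 s3, Sm a1 a2 a3 b1 b2 b3 s1 s2 s3 → ∀ c1 c2 c3, Le4 a1 a2 a3 c1 c2 c3 →
      Le4 b1 b2 b3 c1 c2 c3 → Le4 s1 s2 s3 c1 c2 c3) : SupOK a1 a2 a3 b1 b2 b3 := by
  by_cases h1 : Le4 a1 a2 a3 u1 u2 u3
  · obtain ⟨m1, m2, m3, q1, q2, q3, q4⟩ := SupOK.subset hu hb zb
    exact ⟨m1, m2, m3, q1, TR _ _ _ _ _ _ _ _ _ h1 q2, q3,
      fun c1 c2 c3 hA hB => q4 _ _ _ (hU _ _ _ hA hB) hB⟩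
  by_cases h2 : Le4 b1 b2 b3 u1 u2 u3
  · obtain ⟨m1, m2, m3, q1, q2, q3, q4⟩ := SupOK.subset hu ha za
    exact ⟨m1, m2, m3, q1, q3, TR _ _ _ _ _ _ _ _ _ h2 q2,
      fun c1 c2 c3 hA hB => q4 _ _ _ (hU _ _ _ hA hB) hA⟩
  exact SupOK.sum ha hb (hL h1 h2)

theorem LL1 {a1 a2 a3 b1 b2 b3 : ℕ} (z : a1 ≤ b1 ∧ b2 ≤ a2 ∧ b3 ≤ a3)
    (h1 : ¬ Le4 a1 a2 a3 a1 b2 b3) (h2 : ¬ Le4 b1 b2 b3 a1 b2 b3) :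
      ∀ s1 s2 s3, Sm a1 a2 a3 b1 b2 b3 s1 s2 s3 → ∀ c1 c2 c3, Le4 a1 a2 a3 c1 c2 c3 →
      Le4 b1 b2 b3 c1 c2 c3 → Le4 s1 s2 s3 c1 c2 c3 := by
  intro s1 s2 s3 hs c1 c2 c3 hA hB
  have p : ¬ P1 b1 b2 b3 a1 b2 b3 := fun p =>
    h2 ⟨z.1, le_refl _, le_refl _, p, Or.inl (le_refl _), Or.inl (le_refl _)⟩
  by_cases f : P2 a1 a2 a3 a1 b2 b3
  · have f' : ¬ P1 a3 a2 a1 b3 b2 a1 := fun f' =>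
      h1 ⟨le_refl _, z.2.1, z.2.2, Or.inl (le_refl _), f, f'⟩
    exact L13P _ _ _ _ _ _ _ _ _ _ _ _ z f' p hA hB hs
  · exact L12P _ _ _ _ _ _ _ _ _ _ _ _ z f p hA hB hs

theorem LL2 {a1 a2 a3 b1 b2 b3 : ℕ} (z : b1 ≤ a1 ∧ a2 ≤ b2 ∧ b3 ≤ a3)
    (h1 : ¬ Le4 a1 a2 a3 b1 a2 b3) (h2 : ¬ Le4 b1 b2 b3 b1 a2 b3) :
      ∀ s1 s2 s3, Sm a1 a2 a3 b1 b2 b3 s1 s2 s3 → ∀ c1 c2 c3, Le4 a1 a2 a3 c1 c2 c3 →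
      Le4 b1 b2 b3 c1 c2 c3 → Le4 s1 s2 s3 c1 c2 c3 := by
  intro s1 s2 s3 hs c1 c2 c3 hA hB
  have p : ¬ P2 b1 b2 b3 b1 a2 b3 := fun p =>
    h2 ⟨le_refl _, z.2.1, le_refl _, Or.inl (le_refl _), p, Or.inl (le_refl _)⟩
  by_cases f : P1 a1 a2 a3 b1 a2 b3
  · have f' : ¬ P1 a3 a2 a1 b3 a2 b1 := fun f' =>
      h1 ⟨z.1, le_refl _, z.2.2, f, Or.inl (le_refl _), f'⟩
    have p' : ¬ P2 b3 b2 b1 b3 a2 b1 := by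
      intro h; apply p; unfold P2 at *; tauto
    exact (L21P _ _ _ _ _ _ _ _ _ _ _ _ ⟨z.2.2, z.2.1, z.1⟩ f' p' hA.mir hB.mir hs.mir).mir
  · exact L21P _ _ _ _ _ _ _ _ _ _ _ _ z f p hA hB hs

theorem SupOK.all {a1 a2 a3 b1 b2 b3 : ℕ} (ha : a1 % 4 = 1 ∧ a2 % 4 = 2 ∧ a3 % 4 = 3)
    (hb : b1 % 4 = 1 ∧ b2 % 4 = 2 ∧ b3 % 4 = 3) :
    SupOK a1 a2 a3 b1 b2 b3 := by
  have p1 : ∀ {a1 a2 a3 b1 b2 b3 : ℕ} (ha : a1 % 4 = 1 ∧ a2 % 4 = 2 ∧ a3 % 4 = 3)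
      (hb : b1 % 4 = 1 ∧ b2 % 4 = 2 ∧ b3 % 4 = 3), a1 ≤ b1 ∧ b2 ≤ a2 ∧ b3 ≤ a3 →
      SupOK a1 a2 a3 b1 b2 b3 := by
    intro a1 a2 a3 b1 b2 b3 ha hb z
    exact SupOK.core (u1 := a1) (u2 := b2) (u3 := b3) ha hb (by omega) (by omega) (by omega)
      (fun c1 c2 c3 hA hB => U1 _ _ _ _ _ _ _ _ _ z hA hB) (LL1 z)
  have p2 : ∀ {a1 a2 a3 b1 b2 b3 : ℕ} (ha : a1 % 4 = 1 ∧ a2 % 4 = 2 ∧ a3 % 4 = 3)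
      (hb : b1 % 4 = 1 ∧ b2 % 4 = 2 ∧ b3 % 4 = 3), b1 ≤ a1 ∧ a2 ≤ b2 ∧ b3 ≤ a3 →
      SupOK a1 a2 a3 b1 b2 b3 := by
    intro a1 a2 a3 b1 b2 b3 ha hb z
    exact SupOK.core (u1 := b1) (u2 := a2) (u3 := b3) ha hb (by omega) (by omega) (by omega)
      (fun c1 c2 c3 hA hB => U2 _ _ _ _ _ _ _ _ _ z hA hB) (LL2 z)
  have p3 : ∀ {a1 a2 a3 b1 b2 b3 : ℕ} (ha : a1 % 4 = 1 ∧ a2 % 4 = 2 ∧ a3 % 4 = 3)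
      (hb : b1 % 4 = 1 ∧ b2 % 4 = 2 ∧ b3 % 4 = 3), b1 ≤ a1 ∧ b2 ≤ a2 ∧ a3 ≤ b3 →
      SupOK a1 a2 a3 b1 b2 b3 := by
    intro a1 a2 a3 b1 b2 b3 ha hb z
    have z' : a3 ≤ b3 ∧ b2 ≤ a2 ∧ b1 ≤ a1 := by omega
    exact SupOK.core (u1 := b1) (u2 := b2) (u3 := a3) ha hb (by omega) (by omega) (by omega)
      (fun c1 c2 c3 hA hB => (U1 _ _ _ _ _ _ _ _ _ z' hA.mir hB.mir).mir)
      (fun h1 h2 s1 s2 s3 hs c1 c2 c3 hA hB =>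
        (LL1 z' (fun h => h1 h.mir) (fun h => h2 h.mir) _ _ _ hs.mir _ _ _ hA.mir hB.mir).mir)
  rcases le_total a1 b1 with h1 | h1 <;> rcases le_total a2 b2 with h2 | h2 <;>
    rcases le_total a3 b3 with h3 | h3
  · exact SupOK.subset ha hb ⟨h1, h2, h3⟩
  · exact (p3 hb ha ⟨h1, h2, h3⟩).comm
  · exact (p2 hb ha ⟨h1, h2, h3⟩).comm
  · exact p1 ha hb ⟨h1, h2, h3⟩
  · exact (p1 hb ha ⟨h1, h2, h3⟩).comm
  · exact p2 ha hb ⟨h1, h2, h3⟩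
  · exact p3 ha hb ⟨h1, h2, h3⟩
  · exact (SupOK.subset hb ha ⟨h1, h2, h3⟩).comm
/-- Working form of the order. -/
def Q (I J : Set ℕ) : Prop :=
  I ⊆ J ∧ ∀ j ∈ J, ∃ x ∈ I, ∃ k, x + k = j ∧ ∀ y ∈ I, y + k ∈ J

theorem Q_of_preceq {S I J : Set ℕ} (h : Preceq S I J) : Q I J := by
  obtain ⟨K, hK, rfl⟩ := h
  refine ⟨fun x hx => ⟨x, hx, 0, hK.1, by simp⟩, ?_⟩
  rintro j ⟨x, hx, k, hk, rfl⟩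
  exact ⟨x, hx, k, rfl, fun y hy => ⟨y, hy, k, hk, rfl⟩⟩

theorem preceq_of_Q {S I J : Set ℕ} (hJ : IsNormalizedIdeal S J) (h : Q I J) : Preceq S I J := by
  refine ⟨{k | ∀ y ∈ I, y + k ∈ J}, ⟨fun y hy => h.1 hy, ?_⟩, ?_⟩
  · intro k hk s hs y hy
    rw [← add_assoc]
    exact hJ.2 _ (hk y hy) s hs
  · ext j
    constructor
    · rintro ⟨x, hx, k, hk, rfl⟩
      exact hk x hx
    · intro hj
      obtain ⟨x, hx, k, hk, hy⟩ := h.2 j hj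
      exact ⟨x, hx, k, hy, hk⟩

theorem ideal_of_Q {S I J : Set ℕ} (hI : IsNormalizedIdeal S I) (h : Q I J) : IsNormalizedIdeal S J := by
  refine ⟨h.1 hI.1, fun j hj s hs => ?_⟩
  obtain ⟨x, hx, k, hk, hy⟩ := h.2 j hj
  have := hy (x + s) (hI.2 x hx s hs)
  rwa [show j + s = x + s + k by omega]

theorem preceq_refl {S I : Set ℕ} (hS : IsNumericalSemigroup S) (hI : IsNormalizedIdeal S I) :
    Preceq S I I :=
  preceq_of_Q hI ⟨le_refl _, fun j hj => ⟨j, hj, 0, rfl, fun y hy => hy⟩⟩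

theorem preceq_trans {S I J L : Set ℕ} (h1 : Preceq S I J) (h2 : Preceq S J L) : Preceq S I L := by
  obtain ⟨K, hK, rfl⟩ := h1
  obtain ⟨K', hK', rfl⟩ := h2
  refine ⟨K + K', ⟨⟨0, hK.1, 0, hK'.1, rfl⟩, ?_⟩, (add_assoc _ _ _).symm⟩
  rintro _ ⟨x, hx, y, hy, rfl⟩ s hs
  exact ⟨x, hx, y + s, hK'.2 y hy s hs, by simp [add_assoc]⟩

/-- class minimum -/
theorem cls (S I : Set ℕ) (hS : IsNumericalSemigroup S) (hI : IsNormalizedIdeal S I) (m : ℕ) (hm : 0 < m)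
    (hmS : m ∈ S) (i : ℕ) (hi : i < m) : ∃ a, a % m = i ∧ ∀ n, n % m = i → (n ∈ I ↔ a ≤ n) := by
  have hSI : S ⊆ I := fun s hs => by simpa using hI.2 0 hI.1 s hs
  have hex : ∃ n, n ∈ I ∧ n % m = i := by
    by_contra hno
    push Not at hno
    have : Set.Infinite {n : ℕ | n % m = i} := by
      refine Set.infinite_of_injective_forall_mem (f := fun k => i + m * k) ?_ ?_
      · intro x y hxy
        simpa [hm.ne'] using hxy
      · intro k
        simp [Nat.add_mul_mod_self_left, Nat.mod_eq_of_lt hi]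
    apply this
    refine hS.2.2.subset fun n hn hnS => hno n (hSI hnS) hn
  classical
  refine ⟨Nat.find hex, (Nat.find_spec hex).2, fun n hn => ⟨fun h => Nat.find_min' hex ⟨h, hn⟩, fun h => ?_⟩⟩
  have hmul : ∀ k, ∀ x ∈ I, x + m * k ∈ I := by
    intro k
    induction k with
    | zero => intro x hx; simpa using hx
    | succ k ih =>
      intro x hx
      have := hI.2 _ (ih x hx) m hmS
      rwa [show x + m * (k+1) = x + m * k + m by ring]
  have h1 : n ≡ Nat.find hex [MOD m] := by rw [Nat.ModEq, hn, (Nat.find_spec hex).2]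
  obtain ⟨k, hk⟩ := (Nat.modEq_iff_dvd' h).1 h1.symm
  rw [show n = Nat.find hex + m * k by omega]
  exact hmul k _ (Nat.find_spec hex).1

def Co (I : Set ℕ) (a1 a2 a3 : ℕ) : Prop :=
  ∀ n, n ∈ I ↔ (n % 4 = 0 ∨ (n % 4 = 1 ∧ a1 ≤ n) ∨ (n % 4 = 2 ∧ a2 ≤ n) ∨ (n % 4 = 3 ∧ a3 ≤ n))

theorem Co.ex {S I : Set ℕ} (hS : IsNumericalSemigroup S) (hI : IsNormalizedIdeal S I) (h4 : 4 ∈ S) :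
    ∃ a1 a2 a3, (a1 % 4 = 1 ∧ a2 % 4 = 2 ∧ a3 % 4 = 3) ∧ Co I a1 a2 a3 := by
  obtain ⟨a0, r0, k0⟩ := cls S I hS hI 4 (by omega) h4 0 (by omega)
  obtain ⟨a1, r1, k1⟩ := cls S I hS hI 4 (by omega) h4 1 (by omega)
  obtain ⟨a2, r2, k2⟩ := cls S I hS hI 4 (by omega) h4 2 (by omega)
  obtain ⟨a3, r3, k3⟩ := cls S I hS hI 4 (by omega) h4 3 (by omega)
  have : a0 = 0 := by have := (k0 0 rfl).1 hI.1; omega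
  subst this
  refine ⟨a1, a2, a3, ⟨r1, r2, r3⟩, fun n => ?_⟩
  have : n % 4 < 4 := Nat.mod_lt _ (by omega)
  have c : n % 4 = 0 ∨ n % 4 = 1 ∨ n % 4 = 2 ∨ n % 4 = 3 := by omega
  rcases c with c | c | c | c
  · rw [k0 n c]; omega
  · rw [k1 n c]; omega
  · rw [k2 n c]; omega
  · rw [k3 n c]; omega

theorem Q_iff {I J : Set ℕ} {a1 a2 a3 c1 c2 c3 : ℕ} (ha : a1 % 4 = 1 ∧ a2 % 4 = 2 ∧ a3 % 4 = 3)
    (hc : c1 % 4 = 1 ∧ c2 % 4 = 2 ∧ c3 % 4 = 3) (hI : Co I a1 a2 a3) (hJ : Co J c1 c2 c3) :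
    Q I J ↔ Le4 a1 a2 a3 c1 c2 c3 := by
  have I0 : 0 ∈ I := by rw [hI]; omega
  have I1 : a1 ∈ I := by rw [hI]; omega
  have I2 : a2 ∈ I := by rw [hI]; omega
  have I3 : a3 ∈ I := by rw [hI]; omega
  constructor
  · rintro ⟨hs, hq⟩
    have s1 := (hJ _).1 (hs I1)
    have s2 := (hJ _).1 (hs I2)
    have s3 := (hJ _).1 (hs I3)
    have t1 : c1 ≤ a1 := by omega
    have t2 : c2 ≤ a2 := by omega
    have t3 : c3 ≤ a3 := by omega
    clear s1 s2 s3
    refine ⟨t1, t2, t3, ?_, ?_, ?_⟩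
    · obtain ⟨x, hx, k, hk, hy⟩ := hq c1 (by rw [hJ]; omega)
      have y0 := (hJ _).1 (hy _ I0)
      have y1 := (hJ _).1 (hy _ I1)
      have y2 := (hJ _).1 (hy _ I2)
      have y3 := (hJ _).1 (hy _ I3)
      unfold P1
      rcases (hI x).1 hx with h | h | h | h
      · right; left; omega
      · left; omega
      · right; right; left; omega
      · right; right; right; omega
    · obtain ⟨x, hx, k, hk, hy⟩ := hq c2 (by rw [hJ]; omega)
      have y0 := (hJ _).1 (hy _ I0)
      have y1 := (hJ _).1 (hy _ I1)
      have y2 := (hJ _).1 (hy _ I2)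
      have y3 := (hJ _).1 (hy _ I3)
      unfold P2
      rcases (hI x).1 hx with h | h | h | h
      · right; left; omega
      · right; right; left; omega
      · left; omega
      · right; right; right; omega
    · obtain ⟨x, hx, k, hk, hy⟩ := hq c3 (by rw [hJ]; omega)
      have y0 := (hJ _).1 (hy _ I0)
      have y1 := (hJ _).1 (hy _ I1)
      have y2 := (hJ _).1 (hy _ I2)
      have y3 := (hJ _).1 (hy _ I3)
      unfold P1
      rcases (hI x).1 hx with h | h | h | h
      · right; left; omega
      · right; right; right; omega
      · right; right; left; omega
      · left; omega
  · rintro ⟨t1, t2, t3, p1, p2, p3⟩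
    have hs : I ⊆ J := by
      intro n hn
      rw [hI] at hn; rw [hJ]; omega
    have fin : ∀ x j, x ∈ I → x ≤ j → (∀ y, y ∈ I → y + (j - x) ∈ J) →
        ∃ x ∈ I, ∃ k, x + k = j ∧ ∀ y ∈ I, y + k ∈ J :=
      fun x j hx hl h => ⟨x, hx, j - x, by omega, fun y hy => h y hy⟩
    refine ⟨hs, fun j hj => ?_⟩
    rcases (hJ j).1 hj with h | h | h | h
    · refine ⟨0, I0, j, by omega, fun y hy => ?_⟩
      rw [hI] at hy; rw [hJ]
      rcases hy with hy | hy | hy | hy <;> omega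
    · rcases p1 with p | p | p | p
      · exact ⟨j, by rw [hI]; omega, 0, rfl, fun y hy => hs hy⟩
      · refine fin 0 j I0 (by omega) fun y hy => ?_
        rw [hI] at hy; rw [hJ]
        rcases hy with hy | hy | hy | hy <;> omega
      · refine fin a2 j I2 (by omega) fun y hy => ?_
        rw [hI] at hy; rw [hJ]
        rcases hy with hy | hy | hy | hy <;> omega
      · refine fin a3 j I3 (by omega) fun y hy => ?_
        rw [hI] at hy; rw [hJ]
        rcases hy with hy | hy | hy | hy <;> omega
    · rcases p2 with p | p | p | p
      · exact ⟨j, by rw [hI]; omega, 0, rfl, fun y hy => hs hy⟩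
      · refine fin 0 j I0 (by omega) fun y hy => ?_
        rw [hI] at hy; rw [hJ]
        rcases hy with hy | hy | hy | hy <;> omega
      · refine fin a1 j I1 (by omega) fun y hy => ?_
        rw [hI] at hy; rw [hJ]
        rcases hy with hy | hy | hy | hy <;> omega
      · refine fin a3 j I3 (by omega) fun y hy => ?_
        rw [hI] at hy; rw [hJ]
        rcases hy with hy | hy | hy | hy <;> omega
    · rcases p3 with p | p | p | p
      · exact ⟨j, by rw [hI]; omega, 0, rfl, fun y hy => hs hy⟩
      · refine fin 0 j I0 (by omega) fun y hy => ?_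
        rw [hI] at hy; rw [hJ]
        rcases hy with hy | hy | hy | hy <;> omega
      · refine fin a2 j I2 (by omega) fun y hy => ?_
        rw [hI] at hy; rw [hJ]
        rcases hy with hy | hy | hy | hy <;> omega
      · refine fin a1 j I1 (by omega) fun y hy => ?_
        rw [hI] at hy; rw [hJ]
        rcases hy with hy | hy | hy | hy <;> omega

theorem sup_four {S I J : Set ℕ} (hS : IsNumericalSemigroup S) (h4 : 4 ∈ S) (hI : IsNormalizedIdeal S I)
    (hJ : IsNormalizedIdeal S J) : ∃ M, IsSupNI S I J M := by
  obtain ⟨a1, a2, a3, ha, cI⟩ := Co.ex hS hI h4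
  obtain ⟨b1, b2, b3, hb, cJ⟩ := Co.ex hS hJ h4
  obtain ⟨m1, m2, m3, hm, q1, q2, q3⟩ := SupOK.all ha hb
  let M : Set ℕ := {n | n % 4 = 0 ∨ (n % 4 = 1 ∧ m1 ≤ n) ∨ (n % 4 = 2 ∧ m2 ≤ n) ∨ (n % 4 = 3 ∧ m3 ≤ n)}
  have cM : Co M m1 m2 m3 := fun n => Iff.rfl
  have QI : Q I M := (Q_iff ha hm cI cM).2 q1
  have QJ : Q J M := (Q_iff hb hm cJ cM).2 q2
  have hM := ideal_of_Q hI QI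
  refine ⟨M, hM, preceq_of_Q hM QI, preceq_of_Q hM QJ, fun L hL h1 h2 => ?_⟩
  obtain ⟨c1, c2, c3, hc, cL⟩ := Co.ex hS hL h4
  refine preceq_of_Q hL ((Q_iff hm hc cM cL).2 (q3 _ _ _ ?_ ?_))
  · exact (Q_iff ha hc cI cL).1 (Q_of_preceq h1)
  · exact (Q_iff hb hc cJ cL).1 (Q_of_preceq h2)
def Le3 (a1 a2 c1 c2 : ℕ) : Prop :=
  c1 ≤ a1 ∧ c2 ≤ a2 ∧ (c1 ≥ a1 ∨ c1+a1 ≥ c2 ∨ c1 ≥ a2+c2) ∧ (c2 ≥ a2 ∨ c2+a2 ≥ c1 ∨ c2 ≥ a1+c1)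

def Co3 (I : Set ℕ) (a1 a2 : ℕ) : Prop :=
  ∀ n, n ∈ I ↔ (n % 3 = 0 ∨ (n % 3 = 1 ∧ a1 ≤ n) ∨ (n % 3 = 2 ∧ a2 ≤ n))

theorem Co3.ex {S I : Set ℕ} (hS : IsNumericalSemigroup S) (hI : IsNormalizedIdeal S I) (h3 : 3 ∈ S) :
    ∃ a1 a2, (a1 % 3 = 1 ∧ a2 % 3 = 2) ∧ Co3 I a1 a2 := by
  obtain ⟨a0, r0, k0⟩ := cls S I hS hI 3 (by omega) h3 0 (by omega)
  obtain ⟨a1, r1, k1⟩ := cls S I hS hI 3 (by omega) h3 1 (by omega)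
  obtain ⟨a2, r2, k2⟩ := cls S I hS hI 3 (by omega) h3 2 (by omega)
  have : a0 = 0 := by have := (k0 0 rfl).1 hI.1; omega
  subst this
  refine ⟨a1, a2, ⟨r1, r2⟩, fun n => ?_⟩
  have c : n % 3 = 0 ∨ n % 3 = 1 ∨ n % 3 = 2 := by omega
  rcases c with c | c | c
  · rw [k0 n c]; omega
  · rw [k1 n c]; omega
  · rw [k2 n c]; omega

theorem Q3_iff {I J : Set ℕ} {a1 a2 c1 c2 : ℕ} (ha : a1 % 3 = 1 ∧ a2 % 3 = 2)
    (hc : c1 % 3 = 1 ∧ c2 % 3 = 2) (hI : Co3 I a1 a2) (hJ : Co3 J c1 c2) :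
    Q I J ↔ Le3 a1 a2 c1 c2 := by
  have I0 : 0 ∈ I := by rw [hI]; omega
  have I1 : a1 ∈ I := by rw [hI]; omega
  have I2 : a2 ∈ I := by rw [hI]; omega
  constructor
  · rintro ⟨hs, hq⟩
    have s1 := (hJ _).1 (hs I1)
    have s2 := (hJ _).1 (hs I2)
    have t1 : c1 ≤ a1 := by omega
    have t2 : c2 ≤ a2 := by omega
    clear s1 s2
    refine ⟨t1, t2, ?_, ?_⟩
    · obtain ⟨x, hx, k, hk, hy⟩ := hq c1 (by rw [hJ]; omega)
      have y0 := (hJ _).1 (hy _ I0)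
      have y1 := (hJ _).1 (hy _ I1)
      have y2 := (hJ _).1 (hy _ I2)
      rcases (hI x).1 hx with h | h | h
      · right; left; omega
      · left; omega
      · right; right; omega
    · obtain ⟨x, hx, k, hk, hy⟩ := hq c2 (by rw [hJ]; omega)
      have y0 := (hJ _).1 (hy _ I0)
      have y1 := (hJ _).1 (hy _ I1)
      have y2 := (hJ _).1 (hy _ I2)
      rcases (hI x).1 hx with h | h | h
      · right; left; omega
      · right; right; omega
      · left; omega
  · rintro ⟨t1, t2, p1, p2⟩
    have hs : I ⊆ J := by
      intro n hn
      rw [hI] at hn; rw [hJ]; omega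
    have fin : ∀ x j, x ∈ I → x ≤ j → (∀ y, y ∈ I → y + (j - x) ∈ J) →
        ∃ x ∈ I, ∃ k, x + k = j ∧ ∀ y ∈ I, y + k ∈ J :=
      fun x j hx hl h => ⟨x, hx, j - x, by omega, fun y hy => h y hy⟩
    refine ⟨hs, fun j hj => ?_⟩
    rcases (hJ j).1 hj with h | h | h
    · refine ⟨0, I0, j, by omega, fun y hy => ?_⟩
      rw [hI] at hy; rw [hJ]
      rcases hy with hy | hy | hy <;> omega
    · rcases p1 with p | p | p
      · exact ⟨j, by rw [hI]; omega, 0, rfl, fun y hy => hs hy⟩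
      · refine fin 0 j I0 (by omega) fun y hy => ?_
        rw [hI] at hy; rw [hJ]
        rcases hy with hy | hy | hy <;> omega
      · refine fin a2 j I2 (by omega) fun y hy => ?_
        rw [hI] at hy; rw [hJ]
        rcases hy with hy | hy | hy <;> omega
    · rcases p2 with p | p | p
      · exact ⟨j, by rw [hI]; omega, 0, rfl, fun y hy => hs hy⟩
      · refine fin 0 j I0 (by omega) fun y hy => ?_
        rw [hI] at hy; rw [hJ]
        rcases hy with hy | hy | hy <;> omega
      · refine fin a1 j I1 (by omega) fun y hy => ?_
        rw [hI] at hy; rw [hJ]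
        rcases hy with hy | hy | hy <;> omega

theorem Sup3 {a1 a2 b1 b2 : ℕ} (ha : a1 % 3 = 1 ∧ a2 % 3 = 2) (hb : b1 % 3 = 1 ∧ b2 % 3 = 2) :
    ∃ m1 m2, (m1 % 3 = 1 ∧ m2 % 3 = 2) ∧ Le3 a1 a2 m1 m2 ∧ Le3 b1 b2 m1 m2 ∧
      ∀ c1 c2, Le3 a1 a2 c1 c2 → Le3 b1 b2 c1 c2 → Le3 m1 m2 c1 c2 := by
  have rf : ∀ x y, Le3 x y x y := fun x y =>
    ⟨le_refl _, le_refl _, Or.inl (le_refl _), Or.inl (le_refl _)⟩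
  by_cases h1 : Le3 a1 a2 b1 b2
  · exact ⟨b1, b2, hb, h1, rf _ _, fun c1 c2 _ h => h⟩
  by_cases h2 : Le3 b1 b2 a1 a2
  · exact ⟨a1, a2, ha, rf _ _, h2, fun c1 c2 h _ => h⟩
  have key : ∀ x y z : ℕ, ∃ s, (s ≤ x ∧ s ≤ y ∧ s ≤ z) ∧ (s = x ∨ s = y ∨ s = z) := by
    intro x y z
    refine ⟨min (min x y) z, by omega, by omega⟩
  obtain ⟨s1, q1, k1⟩ := key a1 b1 (a2+b2)
  obtain ⟨s2, q2, k2⟩ := key a2 b2 (a1+b1)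
  unfold Le3 at *
  refine ⟨s1, s2, ?_, ?_, ?_, ?_⟩
  · clear h1 h2; omega
  · clear h1 h2; omega
  · clear h1 h2; omega
  · rintro c1 c2 ⟨x1, x2, x3, x4⟩ ⟨y1, y2, y3, y4⟩
    rcases k1 with k1 | k1 | k1 <;> rcases k2 with k2 | k2 | k2 <;> omega

theorem sup_three {S I J : Set ℕ} (hS : IsNumericalSemigroup S) (h3 : 3 ∈ S) (hI : IsNormalizedIdeal S I)
    (hJ : IsNormalizedIdeal S J) : ∃ M, IsSupNI S I J M := by
  obtain ⟨a1, a2, ha, cI⟩ := Co3.ex hS hI h3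
  obtain ⟨b1, b2, hb, cJ⟩ := Co3.ex hS hJ h3
  obtain ⟨m1, m2, hm, q1, q2, q3⟩ := Sup3 ha hb
  let M : Set ℕ := {n | n % 3 = 0 ∨ (n % 3 = 1 ∧ m1 ≤ n) ∨ (n % 3 = 2 ∧ m2 ≤ n)}
  have cM : Co3 M m1 m2 := fun n => Iff.rfl
  have QI : Q I M := (Q3_iff ha hm cI cM).2 q1
  have QJ : Q J M := (Q3_iff hb hm cJ cM).2 q2
  have hM := ideal_of_Q hI QI
  refine ⟨M, hM, preceq_of_Q hM QI, preceq_of_Q hM QJ, fun L hL h1 h2 => ?_⟩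
  obtain ⟨c1, c2, hc, cL⟩ := Co3.ex hS hL h3
  refine preceq_of_Q hL ((Q3_iff hm hc cM cL).2 (q3 _ _ ?_ ?_))
  · exact (Q3_iff ha hc cI cL).1 (Q_of_preceq h1)
  · exact (Q3_iff hb hc cJ cL).1 (Q_of_preceq h2)

theorem NI_finite {S : Set ℕ} (hS : IsNumericalSemigroup S) : {I | IsNormalizedIdeal S I}.Finite := by
  refine (hS.2.2.finite_subsets.image (fun T => T ∪ S)).subset ?_
  intro I hI
  have hSI : S ⊆ I := fun s hs => by simpa using hI.2 0 hI.1 s hs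
  refine ⟨I ∩ Sᶜ, Set.inter_subset_right, ?_⟩
  ext n
  by_cases h : n ∈ S
  · simp [h, hSI h]
  · simp [h]

theorem inf_of_sup {S : Set ℕ} (hS : IsNumericalSemigroup S)
    (h : ∀ I J, IsNormalizedIdeal S I → IsNormalizedIdeal S J → ∃ M, IsSupNI S I J M)
    {I J : Set ℕ} (hI : IsNormalizedIdeal S I) (hJ : IsNormalizedIdeal S J) : ∃ M, IsInfNI S I J M := by
  have hSS : IsNormalizedIdeal S S := ⟨hS.1, hS.2.1⟩
  have hSle : ∀ U, IsNormalizedIdeal S U → Preceq S S U := by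
    intro U hU
    refine ⟨U, hU, ?_⟩
    ext n
    constructor
    · rintro ⟨s, hs, u, hu, rfl⟩
      show s + u ∈ U
      rw [add_comm]
      exact hU.2 u hu s hs
    · intro hn
      exact ⟨0, hS.1, n, hn, by simp⟩
  have key : ∀ F : Set (Set ℕ), F.Finite → (∀ L ∈ F, IsNormalizedIdeal S L) →
      ∃ M, IsNormalizedIdeal S M ∧ (∀ L ∈ F, Preceq S L M) ∧
        ∀ U, IsNormalizedIdeal S U → (∀ L ∈ F, Preceq S L U) → Preceq S M U := by
    intro F hF
    induction F, hF using Set.Finite.induction_on with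
    | empty => exact fun _ => ⟨S, hSS, by simp, fun U hU _ => hSle U hU⟩
    | @insert L F _ _ ih =>
      intro hall
      obtain ⟨M, hM, h1, h2⟩ := ih fun L hL => hall L (Set.mem_insert_of_mem _ hL)
      obtain ⟨N, hN, n1, n2, n3⟩ := h L M (hall L (Set.mem_insert _ _)) hM
      refine ⟨N, hN, ?_, fun U hU hq => ?_⟩
      · rintro K (rfl | hK)
        · exact n1
        · exact preceq_trans (h1 K hK) n2
      · exact n3 U hU (hq _ (Set.mem_insert _ _))
          (h2 U hU fun K hK => hq K (Set.mem_insert_of_mem _ hK))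
  obtain ⟨M, hM, h1, h2⟩ := key {L | IsNormalizedIdeal S L ∧ Preceq S L I ∧ Preceq S L J}
    ((NI_finite hS).subset fun L hL => hL.1) (fun L hL => hL.1)
  exact ⟨M, hM, h2 I hI fun L hL => hL.2.1, h2 J hJ fun L hL => hL.2.2,
    fun L hL a b => h1 L ⟨hL, a, b⟩⟩

theorem not_lattice {S : Set ℕ} (h5 : ∀ s ∈ S, s = 0 ∨ 5 ≤ s) : ¬ NILattice S := by
  intro hl
  have idl : ∀ X : Set ℕ, 0 ∈ X → (∀ n, 5 ≤ n → n ∈ X) → IsNormalizedIdeal S X := by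
    intro X h0 h
    refine ⟨h0, fun i hi s hs => ?_⟩
    rcases h5 s hs with rfl | hs
    · simpa using hi
    · exact h _ (by omega)
  let A : Set ℕ := {n | n ≠ 2 ∧ n ≠ 4}
  let B : Set ℕ := {n | n ≠ 2 ∧ n ≠ 3 ∧ n ≠ 4}
  let C : Set ℕ := {n | n ≠ 2}
  let D : Set ℕ := {n | n ≠ 4}
  have mA : ∀ n, n ∈ A ↔ n ≠ 2 ∧ n ≠ 4 := fun n => Iff.rfl
  have mB : ∀ n, n ∈ B ↔ n ≠ 2 ∧ n ≠ 3 ∧ n ≠ 4 := fun n => Iff.rfl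
  have mC : ∀ n, n ∈ C ↔ n ≠ 2 := fun n => Iff.rfl
  have mD : ∀ n, n ∈ D ↔ n ≠ 4 := fun n => Iff.rfl
  have hA : IsNormalizedIdeal S A := idl _ (by rw [mA]; omega) fun n hn => by rw [mA]; omega
  have hB : IsNormalizedIdeal S B := idl _ (by rw [mB]; omega) fun n hn => by rw [mB]; omega
  have hC : IsNormalizedIdeal S C := idl _ (by rw [mC]; omega) fun n hn => by rw [mC]; omega
  have hD : IsNormalizedIdeal S D := idl _ (by rw [mD]; omega) fun n hn => by rw [mD]; omega
  have AC : Preceq S A C := by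
    refine preceq_of_Q hC ⟨fun n hn => by rw [mA] at hn; rw [mC]; omega, fun j hj => ?_⟩
    rw [mC] at hj
    by_cases h4 : j = 4
    · exact ⟨1, by rw [mA]; omega, 3, by omega, fun y hy => by rw [mA] at hy; rw [mC]; omega⟩
    · exact ⟨j, by rw [mA]; omega, 0, by omega, fun y hy => by rw [mA] at hy; rw [mC]; omega⟩
  have BC : Preceq S B C := by
    refine preceq_of_Q hC ⟨fun n hn => by rw [mB] at hn; rw [mC]; omega, fun j hj => ?_⟩
    rw [mC] at hj
    by_cases h4 : j = 4
    · exact ⟨1, by rw [mB]; omega, 3, by omega, fun y hy => by rw [mB] at hy; rw [mC]; omega⟩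
    by_cases h3 : j = 3
    · exact ⟨0, by rw [mB]; omega, 3, by omega, fun y hy => by rw [mB] at hy; rw [mC]; omega⟩
    · exact ⟨j, by rw [mB]; omega, 0, by omega, fun y hy => by rw [mB] at hy; rw [mC]; omega⟩
  have AD : Preceq S A D := by
    refine preceq_of_Q hD ⟨fun n hn => by rw [mA] at hn; rw [mD]; omega, fun j hj => ?_⟩
    rw [mD] at hj
    by_cases h4 : j = 2
    · exact ⟨0, by rw [mA]; omega, 2, by omega, fun y hy => by rw [mA] at hy; rw [mD]; omega⟩
    · exact ⟨j, by rw [mA]; omega, 0, by omega, fun y hy => by rw [mA] at hy; rw [mD]; omega⟩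
  have BD : Preceq S B D := by
    refine preceq_of_Q hD ⟨fun n hn => by rw [mB] at hn; rw [mD]; omega, fun j hj => ?_⟩
    rw [mD] at hj
    by_cases h4 : j = 2
    · exact ⟨0, by rw [mB]; omega, 2, by omega, fun y hy => by rw [mB] at hy; rw [mD]; omega⟩
    by_cases h3 : j = 3
    · exact ⟨1, by rw [mB]; omega, 2, by omega, fun y hy => by rw [mB] at hy; rw [mD]; omega⟩
    · exact ⟨j, by rw [mB]; omega, 0, by omega, fun y hy => by rw [mB] at hy; rw [mD]; omega⟩
  obtain ⟨M, hM, m1, m2, m3⟩ := (hl A B hA hB).1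
  have MC := (Q_of_preceq (m3 C hC AC BC)).1
  have MD := (Q_of_preceq (m3 D hD AD BD)).1
  have AM := (Q_of_preceq m1).1
  have BM := Q_of_preceq m2
  have n2 : 2 ∉ M := fun h => by have := MC h; rw [mC] at this; omega
  have n4 : 4 ∉ M := fun h => by have := MD h; rw [mD] at this; omega
  obtain ⟨x, hx, k, hk, hy⟩ := BM.2 3 (AM (by rw [mA]; omega))
  rw [mB] at hx
  have y0 := hy 0 (by rw [mB]; omega)
  have y1 := hy 1 (by rw [mB]; omega)
  have : k = 2 ∨ k = 3 := by omega
  rcases this with rfl | rfl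
  · exact n2 y0
  · exact n4 y1

/-- Corollary: `(𝔑(S), ⪯)` is a lattice if and only if
`m(S) ≤ 4`. -/
theorem NILattice_iff_mult_le_four (S : Set ℕ) (hS : IsNumericalSemigroup S) :
    NILattice S ↔ multNS S ≤ 4 := by
  have hSn : {n : ℕ | n ∈ S ∧ n ≠ 0}.Nonempty := by
    by_contra hne
    have hsub : (Set.univ : Set ℕ) ⊆ Sᶜ ∪ {0} := by
      intro n _
      by_contra h
      simp only [Set.mem_union, Set.mem_compl_iff, Set.mem_singleton_iff, not_or, not_not] at h
      exact hne ⟨n, h⟩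
    exact Set.infinite_univ ((hS.2.2.union (Set.finite_singleton 0)).subset hsub)
  have hmem : multNS S ∈ S ∧ multNS S ≠ 0 := Nat.sInf_mem hSn
  constructor
  · intro hl
    by_contra hlt
    refine not_lattice (S := S) (fun s hs => ?_) hl
    by_cases h0 : s = 0
    · exact Or.inl h0
    · right
      have : multNS S ≤ s := Nat.sInf_le ⟨hs, h0⟩
      omega
  · intro hle
    have hsup : ∀ I J, IsNormalizedIdeal S I → IsNormalizedIdeal S J → ∃ M, IsSupNI S I J M := by
      obtain ⟨hm, h0⟩ := hmem
      generalize multNS S = m at hm h0 hle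
      have : m = 1 ∨ m = 2 ∨ m = 3 ∨ m = 4 := by omega
      have dbl : ∀ x ∈ S, x + x ∈ S := fun x hx => hS.2.1 x hx x hx
      rcases this with rfl | rfl | rfl | rfl
      · exact fun I J => sup_four hS (dbl _ (dbl _ hm))
      · exact fun I J => sup_four hS (dbl _ hm)
      · exact fun I J => sup_three hS hm
      · exact fun I J => sup_four hS hm
    exact fun I J hI hJ => ⟨hsup I J hI hJ, inf_of_sup hS hsup hI hJ⟩
end

section
/- Let S be a numerical semigroup with multiplicity four. Then (𝔑(S), ⪯) is a lattice that is not distributive; that is, there exist I, J, K ∈ 𝔑(S) such that I ∧ (J ∨ K) ≠ (I ∧ J) ∨ (I ∧ K), where ∧ and ∨ denote the infimum and supremum with respect to ⪯. -/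
open Pointwise

def RA (x y z X Y Z : ℤ) : Prop :=
  X = x ∨ (Y ≤ X + x ∧ Z ≤ X + y) ∨ (y + Z + 1 ≤ X ∧ Y + y ≤ X + z) ∨ (z + Y + 1 ≤ X ∧ z + Z + 1 ≤ X + x)
def RB (x y z X Y Z : ℤ) : Prop :=
  Y = y ∨ (Z ≤ Y + x ∧ X ≤ Y + z + 1) ∨ (X + x ≤ Y ∧ Z + x ≤ Y + y) ∨ (Z + z + 1 ≤ Y ∧ X + z ≤ Y + y)
def RC (x y z X Y Z : ℤ) : Prop :=
  Z = z ∨ (X ≤ Z + y + 1 ∧ Y ≤ Z + z + 1) ∨ (X + y ≤ Z ∧ Y + y ≤ Z + x) ∨ (Y + x ≤ Z ∧ X + x ≤ Z + z + 1)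
def RR (x y z X Y Z : ℤ) : Prop :=
  (0 ≤ X ∧ X ≤ x) ∧ (0 ≤ Y ∧ Y ≤ y) ∧ (0 ≤ Z ∧ Z ≤ z) ∧ RA x y z X Y Z ∧ RB x y z X Y Z ∧ RC x y z X Y Z

/-- Elementary steps. -/
def sAm (x y z u v w : ℤ) : Prop :=
  (1 ≤ x ∧ y ≤ 2*x-1 ∧ z ≤ x-1+y) ∧ u = x-1 ∧ v = y ∧ w = z
def sAs (x y z u v w : ℤ) : Prop :=
  (x ≤ y ∧ y ≤ 2*x-2 ∧ z ≤ 2*y-x) ∧ u = y-x ∧ v = y ∧ w = z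
def sCm (x y z u v w : ℤ) : Prop :=
  (1 ≤ z ∧ x ≤ z+y ∧ y ≤ 2*z) ∧ u = x ∧ v = y ∧ w = z-1
def sCs (x y z u v w : ℤ) : Prop :=
  (z+1 ≤ y ∧ y-z-1 ≤ z-2 ∧ x ≤ 2*y-z) ∧ u = x ∧ v = y ∧ w = y-z-1
def sBm (x y z u v w : ℤ) : Prop :=
  (1 ≤ y ∧ ((z ≤ y-1+x ∧ x ≤ y+z) ∨ (2*x ≤ y-1 ∧ z+x ≤ 2*y-1) ∨ (2*z+1 ≤ y-1 ∧ x+z ≤ 2*y-1))) ∧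
    u = x ∧ v = y-1 ∧ w = z
def sBs (x y z u v w : ℤ) : Prop :=
  (x+z ≤ 2*y-2 ∧ ((x+y ≤ z ∧ 2*x < y) ∨ (z+1+y ≤ x ∧ 2*z+1 < y))) ∧ u = x ∧ v = x+z-y ∧ w = z
def sAB1 (x y z u v w : ℤ) : Prop :=
  (y ≤ z ∧ z-y < x ∧ x+z < 2*y) ∧ u = z-y ∧ v = x+z-y ∧ w = z
def sAB2 (x y z u v w : ℤ) : Prop :=
  (y ≤ z ∧ z-y < x ∧ x ≤ z ∧ y ≤ 2*x ∧ 2*y ≤ x+z) ∧ u = z-y ∧ v = z-x ∧ w = z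
def sCB1 (x y z u v w : ℤ) : Prop :=
  (y+1 ≤ x ∧ x-y-1 < z ∧ x+z < 2*y) ∧ u = x ∧ v = x+z-y ∧ w = x-y-1
def sCB2 (x y z u v w : ℤ) : Prop :=
  (y+1 ≤ x ∧ x-y-1 < z ∧ z+1 ≤ x ∧ y ≤ 2*z+1 ∧ 2*y ≤ x+z) ∧ u = x ∧ v = x-z-1 ∧ w = x-y-1

def SStep (x y z u v w : ℤ) : Prop :=
  sAm x y z u v w ∨ sAs x y z u v w ∨ sCm x y z u v w ∨ sCs x y z u v w ∨ sBm x y z u v w ∨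
  sBs x y z u v w ∨ sAB1 x y z u v w ∨ sAB2 x y z u v w ∨ sCB1 x y z u v w ∨ sCB2 x y z u v w

theorem SStep.lt {x y z u v w : ℤ} (h : SStep x y z u v w) : u + v + w < x + y + z := by
  unfold SStep sAm sAs sCm sCs sBm sBs sAB1 sAB2 sCB1 sCB2 at h
  omega

def UU (x y z u v w X Y Z : ℤ) : Prop := RR x y z X Y Z ∧ RR u v w X Y Z

def IsJ (x y z u v w a b c : ℤ) : Prop := UU x y z u v w a b c ∧
    ∀ X Y Z, UU x y z u v w X Y Z → RR a b c X Y Z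

def HasJ (x y z u v w : ℤ) : Prop := ∃ a b c, IsJ x y z u v w a b c

theorem HasJ.symm {x y z u v w : ℤ} (h : HasJ x y z u v w) : HasJ u v w x y z := by
  obtain ⟨a, b, c, ⟨h1, h2⟩, h3⟩ := h
  exact ⟨a, b, c, ⟨h2, h1⟩, fun X Y Z h => h3 X Y Z ⟨h.2, h.1⟩⟩

set_option maxHeartbeats 4000000

theorem jAmAs {x y z u v w u' v' w' : ℤ} (hp : 0 ≤ x ∧ 0 ≤ y ∧ 0 ≤ z)
    (h1 : sAm x y z u v w) (h2 : sAs x y z u' v' w') : HasJ u v w u' v' w' := by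
  obtain ⟨h1, e1, e2, e3⟩ := h1; obtain ⟨h2, f1, f2, f3⟩ := h2; rw [e1, e2, e3, f1, f2, f3]; clear e1 e2 e3 f1 f2 f3
  exact ⟨y-x, y-1, z, by unfold UU RR RA RB RC; grind (splits := 40) (ematch := 0), by unfold UU RR RA RB RC; grind (splits := 40)⟩
theorem jAsAB1 {x y z u v w u' v' w' : ℤ} (hp : 0 ≤ x ∧ 0 ≤ y ∧ 0 ≤ z)
    (h1 : sAs x y z u v w) (h2 : sAB1 x y z u' v' w') : HasJ u v w u' v' w' := by
  obtain ⟨h1, e1, e2, e3⟩ := h1; obtain ⟨h2, f1, f2, f3⟩ := h2; rw [e1, e2, e3, f1, f2, f3]; clear e1 e2 e3 f1 f2 f3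
  exact ⟨z-y, z-x, z, by unfold UU RR RA RB RC; grind (splits := 40) (ematch := 0), by unfold UU RR RA RB RC; grind (splits := 40)⟩
theorem jAsAB2 {x y z u v w u' v' w' : ℤ} (hp : 0 ≤ x ∧ 0 ≤ y ∧ 0 ≤ z)
    (h1 : sAs x y z u v w) (h2 : sAB2 x y z u' v' w') : HasJ u v w u' v' w' := by
  obtain ⟨h1, e1, e2, e3⟩ := h1; obtain ⟨h2, f1, f2, f3⟩ := h2; rw [e1, e2, e3, f1, f2, f3]; clear e1 e2 e3 f1 f2 f3
  exact ⟨z-y, z-x, z, by unfold UU RR RA RB RC; grind (splits := 40) (ematch := 0), by unfold UU RR RA RB RC; grind (splits := 40)⟩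
theorem jAsBm {x y z u v w u' v' w' : ℤ} (hp : 0 ≤ x ∧ 0 ≤ y ∧ 0 ≤ z)
    (h1 : sAs x y z u v w) (h2 : sBm x y z u' v' w') : HasJ u v w u' v' w' := by
  obtain ⟨h1, e1, e2, e3⟩ := h1; obtain ⟨h2, f1, f2, f3⟩ := h2; rw [e1, e2, e3, f1, f2, f3]; clear e1 e2 e3 f1 f2 f3
  by_cases hc : x+z ≤ 2*y-1
  · exact ⟨y-x, y-1, z, by unfold UU RR RA RB RC; grind (splits := 40) (ematch := 0), by unfold UU RR RA RB RC; grind (splits := 40)⟩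
  · exact ⟨y-x, y-1, z-1, by unfold UU RR RA RB RC; grind (splits := 40) (ematch := 0), by unfold UU RR RA RB RC; grind (splits := 40)⟩
theorem jAsCs {x y z u v w u' v' w' : ℤ} (hp : 0 ≤ x ∧ 0 ≤ y ∧ 0 ≤ z)
    (h1 : sAs x y z u v w) (h2 : sCs x y z u' v' w') : HasJ u v w u' v' w' := by
  obtain ⟨h1, e1, e2, e3⟩ := h1; obtain ⟨h2, f1, f2, f3⟩ := h2; rw [e1, e2, e3, f1, f2, f3]; clear e1 e2 e3 f1 f2 f3
  exact ⟨y-x, y, y-z-1, by unfold UU RR RA RB RC; grind (splits := 40) (ematch := 0), by unfold UU RR RA RB RC; grind (splits := 40)⟩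
theorem jAsCm {x y z u v w u' v' w' : ℤ} (hp : 0 ≤ x ∧ 0 ≤ y ∧ 0 ≤ z)
    (h1 : sAs x y z u v w) (h2 : sCm x y z u' v' w') : HasJ u v w u' v' w' := by
  obtain ⟨h1, e1, e2, e3⟩ := h1; obtain ⟨h2, f1, f2, f3⟩ := h2; rw [e1, e2, e3, f1, f2, f3]; clear e1 e2 e3 f1 f2 f3
  exact ⟨y-x, y, z-1, by unfold UU RR RA RB RC; grind (splits := 40) (ematch := 0), by unfold UU RR RA RB RC; grind (splits := 40)⟩
theorem jAmAB1 {x y z u v w u' v' w' : ℤ} (hp : 0 ≤ x ∧ 0 ≤ y ∧ 0 ≤ z)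
    (h1 : sAm x y z u v w) (h2 : sAB1 x y z u' v' w') : HasJ u v w u' v' w' := by
  obtain ⟨h1, e1, e2, e3⟩ := h1; obtain ⟨h2, f1, f2, f3⟩ := h2; rw [e1, e2, e3, f1, f2, f3]; clear e1 e2 e3 f1 f2 f3
  exact ⟨z-y, x+z-y-1, z, by unfold UU RR RA RB RC; grind (splits := 40) (ematch := 0), by unfold UU RR RA RB RC; grind (splits := 40)⟩
theorem jAmAB2 {x y z u v w u' v' w' : ℤ} (hp : 0 ≤ x ∧ 0 ≤ y ∧ 0 ≤ z)
    (h1 : sAm x y z u v w) (h2 : sAB2 x y z u' v' w') : HasJ u v w u' v' w' := by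
  obtain ⟨h1, e1, e2, e3⟩ := h1; obtain ⟨h2, f1, f2, f3⟩ := h2; rw [e1, e2, e3, f1, f2, f3]; clear e1 e2 e3 f1 f2 f3
  by_cases hc : y ≤ 2*x-2
  · exact ⟨z-y, z-x, z-1, by unfold UU RR RA RB RC; grind (splits := 40) (ematch := 0), by unfold UU RR RA RB RC; grind (splits := 40)⟩
  · exact ⟨z-y, z-x, z, by unfold UU RR RA RB RC; grind (splits := 40) (ematch := 0), by unfold UU RR RA RB RC; grind (splits := 40)⟩
theorem jAmBs {x y z u v w u' v' w' : ℤ} (hp : 0 ≤ x ∧ 0 ≤ y ∧ 0 ≤ z)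
    (h1 : sAm x y z u v w) (h2 : sBs x y z u' v' w') : HasJ u v w u' v' w' := by
  obtain ⟨h1, e1, e2, e3⟩ := h1; obtain ⟨h2, f1, f2, f3⟩ := h2; rw [e1, e2, e3, f1, f2, f3]; clear e1 e2 e3 f1 f2 f3
  exact ⟨x-1, x+z-y, z, by unfold UU RR RA RB RC; grind (splits := 40) (ematch := 0), by unfold UU RR RA RB RC; grind (splits := 40)⟩
theorem jAmBm {x y z u v w u' v' w' : ℤ} (hp : 0 ≤ x ∧ 0 ≤ y ∧ 0 ≤ z)
    (h1 : sAm x y z u v w) (h2 : sBm x y z u' v' w') : HasJ u v w u' v' w' := by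
  obtain ⟨h1, e1, e2, e3⟩ := h1; obtain ⟨h2, f1, f2, f3⟩ := h2; rw [e1, e2, e3, f1, f2, f3]; clear e1 e2 e3 f1 f2 f3
  by_cases hc : z ≤ x+y-2
  · exact ⟨x-1, y-1, z, by unfold UU RR RA RB RC; grind (splits := 40) (ematch := 0), by unfold UU RR RA RB RC; grind (splits := 40)⟩
  · exact ⟨x-1, y-1, z-1, by unfold UU RR RA RB RC; grind (splits := 40) (ematch := 0), by unfold UU RR RA RB RC; grind (splits := 40)⟩
theorem jAmCs {x y z u v w u' v' w' : ℤ} (hp : 0 ≤ x ∧ 0 ≤ y ∧ 0 ≤ z)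
    (h1 : sAm x y z u v w) (h2 : sCs x y z u' v' w') : HasJ u v w u' v' w' := by
  obtain ⟨h1, e1, e2, e3⟩ := h1; obtain ⟨h2, f1, f2, f3⟩ := h2; rw [e1, e2, e3, f1, f2, f3]; clear e1 e2 e3 f1 f2 f3
  exact ⟨x-1, y, y-z-1, by unfold UU RR RA RB RC; grind (splits := 40) (ematch := 0), by unfold UU RR RA RB RC; grind (splits := 40)⟩
theorem jAmCm {x y z u v w u' v' w' : ℤ} (hp : 0 ≤ x ∧ 0 ≤ y ∧ 0 ≤ z)
    (h1 : sAm x y z u v w) (h2 : sCm x y z u' v' w') : HasJ u v w u' v' w' := by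
  obtain ⟨h1, e1, e2, e3⟩ := h1; obtain ⟨h2, f1, f2, f3⟩ := h2; rw [e1, e2, e3, f1, f2, f3]; clear e1 e2 e3 f1 f2 f3
  exact ⟨x-1, y, z-1, by unfold UU RR RA RB RC; grind (splits := 40) (ematch := 0), by unfold UU RR RA RB RC; grind (splits := 40)⟩
theorem jAmCB1 {x y z u v w u' v' w' : ℤ} (hp : 0 ≤ x ∧ 0 ≤ y ∧ 0 ≤ z)
    (h1 : sAm x y z u v w) (h2 : sCB1 x y z u' v' w') : HasJ u v w u' v' w' := by
  obtain ⟨h1, e1, e2, e3⟩ := h1; obtain ⟨h2, f1, f2, f3⟩ := h2; rw [e1, e2, e3, f1, f2, f3]; clear e1 e2 e3 f1 f2 f3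
  exact ⟨x-1, x+z-y, x-y-1, by unfold UU RR RA RB RC; grind (splits := 40) (ematch := 0), by unfold UU RR RA RB RC; grind (splits := 40)⟩
theorem jAmCB2 {x y z u v w u' v' w' : ℤ} (hp : 0 ≤ x ∧ 0 ≤ y ∧ 0 ≤ z)
    (h1 : sAm x y z u v w) (h2 : sCB2 x y z u' v' w') : HasJ u v w u' v' w' := by
  obtain ⟨h1, e1, e2, e3⟩ := h1; obtain ⟨h2, f1, f2, f3⟩ := h2; rw [e1, e2, e3, f1, f2, f3]; clear e1 e2 e3 f1 f2 f3
  exact ⟨x-1, x-z-1, x-y-1, by unfold UU RR RA RB RC; grind (splits := 40) (ematch := 0), by unfold UU RR RA RB RC; grind (splits := 40)⟩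
theorem jAB1Bm {x y z u v w u' v' w' : ℤ} (hp : 0 ≤ x ∧ 0 ≤ y ∧ 0 ≤ z)
    (h1 : sAB1 x y z u v w) (h2 : sBm x y z u' v' w') : HasJ u v w u' v' w' := by
  obtain ⟨h1, e1, e2, e3⟩ := h1; obtain ⟨h2, f1, f2, f3⟩ := h2; rw [e1, e2, e3, f1, f2, f3]; clear e1 e2 e3 f1 f2 f3
  exact ⟨z-y, x+z-y, z-1, by unfold UU RR RA RB RC; grind (splits := 40) (ematch := 0), by unfold UU RR RA RB RC; grind (splits := 40)⟩
theorem jAB1Cm {x y z u v w u' v' w' : ℤ} (hp : 0 ≤ x ∧ 0 ≤ y ∧ 0 ≤ z)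
    (h1 : sAB1 x y z u v w) (h2 : sCm x y z u' v' w') : HasJ u v w u' v' w' := by
  obtain ⟨h1, e1, e2, e3⟩ := h1; obtain ⟨h2, f1, f2, f3⟩ := h2; rw [e1, e2, e3, f1, f2, f3]; clear e1 e2 e3 f1 f2 f3
  exact ⟨z-y, x+z-y, z-1, by unfold UU RR RA RB RC; grind (splits := 40) (ematch := 0), by unfold UU RR RA RB RC; grind (splits := 40)⟩
theorem jAB2Bm {x y z u v w u' v' w' : ℤ} (hp : 0 ≤ x ∧ 0 ≤ y ∧ 0 ≤ z)
    (h1 : sAB2 x y z u v w) (h2 : sBm x y z u' v' w') : HasJ u v w u' v' w' := by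
  obtain ⟨h1, e1, e2, e3⟩ := h1; obtain ⟨h2, f1, f2, f3⟩ := h2; rw [e1, e2, e3, f1, f2, f3]; clear e1 e2 e3 f1 f2 f3
  exact ⟨z-y, z-x, z-1, by unfold UU RR RA RB RC; grind (splits := 40) (ematch := 0), by unfold UU RR RA RB RC; grind (splits := 40)⟩
theorem jAB2Cm {x y z u v w u' v' w' : ℤ} (hp : 0 ≤ x ∧ 0 ≤ y ∧ 0 ≤ z)
    (h1 : sAB2 x y z u v w) (h2 : sCm x y z u' v' w') : HasJ u v w u' v' w' := by
  obtain ⟨h1, e1, e2, e3⟩ := h1; obtain ⟨h2, f1, f2, f3⟩ := h2; rw [e1, e2, e3, f1, f2, f3]; clear e1 e2 e3 f1 f2 f3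
  exact ⟨z-y, z-x, z-1, by unfold UU RR RA RB RC; grind (splits := 40) (ematch := 0), by unfold UU RR RA RB RC; grind (splits := 40)⟩
theorem jBsBm {x y z u v w u' v' w' : ℤ} (hp : 0 ≤ x ∧ 0 ≤ y ∧ 0 ≤ z)
    (h1 : sBs x y z u v w) (h2 : sBm x y z u' v' w') : HasJ u v w u' v' w' := by
  obtain ⟨h1, e1, e2, e3⟩ := h1; obtain ⟨h2, f1, f2, f3⟩ := h2; rw [e1, e2, e3, f1, f2, f3]; clear e1 e2 e3 f1 f2 f3
  by_cases hc : x+y ≤ z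
  · exact ⟨x, x+z-y, z-1, by unfold UU RR RA RB RC; grind (splits := 40) (ematch := 0), by unfold UU RR RA RB RC; grind (splits := 40)⟩
  · exact ⟨x-1, x+z-y, z, by unfold UU RR RA RB RC; grind (splits := 40) (ematch := 0), by unfold UU RR RA RB RC; grind (splits := 40)⟩
theorem jBsCm {x y z u v w u' v' w' : ℤ} (hp : 0 ≤ x ∧ 0 ≤ y ∧ 0 ≤ z)
    (h1 : sBs x y z u v w) (h2 : sCm x y z u' v' w') : HasJ u v w u' v' w' := by
  obtain ⟨h1, e1, e2, e3⟩ := h1; obtain ⟨h2, f1, f2, f3⟩ := h2; rw [e1, e2, e3, f1, f2, f3]; clear e1 e2 e3 f1 f2 f3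
  exact ⟨x, x+z-y, z-1, by unfold UU RR RA RB RC; grind (splits := 40) (ematch := 0), by unfold UU RR RA RB RC; grind (splits := 40)⟩
theorem jBmCs {x y z u v w u' v' w' : ℤ} (hp : 0 ≤ x ∧ 0 ≤ y ∧ 0 ≤ z)
    (h1 : sBm x y z u v w) (h2 : sCs x y z u' v' w') : HasJ u v w u' v' w' := by
  obtain ⟨h1, e1, e2, e3⟩ := h1; obtain ⟨h2, f1, f2, f3⟩ := h2; rw [e1, e2, e3, f1, f2, f3]; clear e1 e2 e3 f1 f2 f3
  by_cases hc : x+z ≤ 2*y-1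
  · exact ⟨x, y-1, y-z-1, by unfold UU RR RA RB RC; grind (splits := 40) (ematch := 0), by unfold UU RR RA RB RC; grind (splits := 40)⟩
  · exact ⟨x-1, y-1, y-z-1, by unfold UU RR RA RB RC; grind (splits := 40) (ematch := 0), by unfold UU RR RA RB RC; grind (splits := 40)⟩
theorem jBmCm {x y z u v w u' v' w' : ℤ} (hp : 0 ≤ x ∧ 0 ≤ y ∧ 0 ≤ z)
    (h1 : sBm x y z u v w) (h2 : sCm x y z u' v' w') : HasJ u v w u' v' w' := by
  obtain ⟨h1, e1, e2, e3⟩ := h1; obtain ⟨h2, f1, f2, f3⟩ := h2; rw [e1, e2, e3, f1, f2, f3]; clear e1 e2 e3 f1 f2 f3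
  by_cases hc : x ≤ y+z-1
  · exact ⟨x, y-1, z-1, by unfold UU RR RA RB RC; grind (splits := 40) (ematch := 0), by unfold UU RR RA RB RC; grind (splits := 40)⟩
  · exact ⟨x-1, y-1, z-1, by unfold UU RR RA RB RC; grind (splits := 40) (ematch := 0), by unfold UU RR RA RB RC; grind (splits := 40)⟩
theorem jBmCB1 {x y z u v w u' v' w' : ℤ} (hp : 0 ≤ x ∧ 0 ≤ y ∧ 0 ≤ z)
    (h1 : sBm x y z u v w) (h2 : sCB1 x y z u' v' w') : HasJ u v w u' v' w' := by
  obtain ⟨h1, e1, e2, e3⟩ := h1; obtain ⟨h2, f1, f2, f3⟩ := h2; rw [e1, e2, e3, f1, f2, f3]; clear e1 e2 e3 f1 f2 f3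
  exact ⟨x-1, x+z-y, x-y-1, by unfold UU RR RA RB RC; grind (splits := 40) (ematch := 0), by unfold UU RR RA RB RC; grind (splits := 40)⟩
theorem jBmCB2 {x y z u v w u' v' w' : ℤ} (hp : 0 ≤ x ∧ 0 ≤ y ∧ 0 ≤ z)
    (h1 : sBm x y z u v w) (h2 : sCB2 x y z u' v' w') : HasJ u v w u' v' w' := by
  obtain ⟨h1, e1, e2, e3⟩ := h1; obtain ⟨h2, f1, f2, f3⟩ := h2; rw [e1, e2, e3, f1, f2, f3]; clear e1 e2 e3 f1 f2 f3
  exact ⟨x-1, x-z-1, x-y-1, by unfold UU RR RA RB RC; grind (splits := 40) (ematch := 0), by unfold UU RR RA RB RC; grind (splits := 40)⟩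
theorem jCsCm {x y z u v w u' v' w' : ℤ} (hp : 0 ≤ x ∧ 0 ≤ y ∧ 0 ≤ z)
    (h1 : sCs x y z u v w) (h2 : sCm x y z u' v' w') : HasJ u v w u' v' w' := by
  obtain ⟨h1, e1, e2, e3⟩ := h1; obtain ⟨h2, f1, f2, f3⟩ := h2; rw [e1, e2, e3, f1, f2, f3]; clear e1 e2 e3 f1 f2 f3
  exact ⟨x, y-1, y-z-1, by unfold UU RR RA RB RC; grind (splits := 40) (ematch := 0), by unfold UU RR RA RB RC; grind (splits := 40)⟩
theorem jCsCB1 {x y z u v w u' v' w' : ℤ} (hp : 0 ≤ x ∧ 0 ≤ y ∧ 0 ≤ z)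
    (h1 : sCs x y z u v w) (h2 : sCB1 x y z u' v' w') : HasJ u v w u' v' w' := by
  obtain ⟨h1, e1, e2, e3⟩ := h1; obtain ⟨h2, f1, f2, f3⟩ := h2; rw [e1, e2, e3, f1, f2, f3]; clear e1 e2 e3 f1 f2 f3
  exact ⟨x, x-z-1, x-y-1, by unfold UU RR RA RB RC; grind (splits := 40) (ematch := 0), by unfold UU RR RA RB RC; grind (splits := 40)⟩
theorem jCsCB2 {x y z u v w u' v' w' : ℤ} (hp : 0 ≤ x ∧ 0 ≤ y ∧ 0 ≤ z)
    (h1 : sCs x y z u v w) (h2 : sCB2 x y z u' v' w') : HasJ u v w u' v' w' := by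
  obtain ⟨h1, e1, e2, e3⟩ := h1; obtain ⟨h2, f1, f2, f3⟩ := h2; rw [e1, e2, e3, f1, f2, f3]; clear e1 e2 e3 f1 f2 f3
  exact ⟨x, x-z-1, x-y-1, by unfold UU RR RA RB RC; grind (splits := 40) (ematch := 0), by unfold UU RR RA RB RC; grind (splits := 40)⟩
theorem jCmCB1 {x y z u v w u' v' w' : ℤ} (hp : 0 ≤ x ∧ 0 ≤ y ∧ 0 ≤ z)
    (h1 : sCm x y z u v w) (h2 : sCB1 x y z u' v' w') : HasJ u v w u' v' w' := by
  obtain ⟨h1, e1, e2, e3⟩ := h1; obtain ⟨h2, f1, f2, f3⟩ := h2; rw [e1, e2, e3, f1, f2, f3]; clear e1 e2 e3 f1 f2 f3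
  exact ⟨x, x+z-y-1, x-y-1, by unfold UU RR RA RB RC; grind (splits := 40) (ematch := 0), by unfold UU RR RA RB RC; grind (splits := 40)⟩
theorem jCmCB2 {x y z u v w u' v' w' : ℤ} (hp : 0 ≤ x ∧ 0 ≤ y ∧ 0 ≤ z)
    (h1 : sCm x y z u v w) (h2 : sCB2 x y z u' v' w') : HasJ u v w u' v' w' := by
  obtain ⟨h1, e1, e2, e3⟩ := h1; obtain ⟨h2, f1, f2, f3⟩ := h2; rw [e1, e2, e3, f1, f2, f3]; clear e1 e2 e3 f1 f2 f3
  by_cases hc : y ≤ 2*z-1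
  · exact ⟨x-1, x-z-1, x-y-1, by unfold UU RR RA RB RC; grind (splits := 40) (ematch := 0), by unfold UU RR RA RB RC; grind (splits := 40)⟩
  · exact ⟨x, x-z-1, x-y-1, by unfold UU RR RA RB RC; grind (splits := 40) (ematch := 0), by unfold UU RR RA RB RC; grind (splits := 40)⟩

theorem SStep.RR {x y z u v w : ℤ} (hp : 0 ≤ x ∧ 0 ≤ y ∧ 0 ≤ z) (h : SStep x y z u v w) :
    RR x y z u v w := by
  unfold SStep sAm sAs sCm sCs sBm sBs sAB1 sAB2 sCB1 sCB2 at h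
  unfold _root_.RR RA RB RC
  rcases h with ⟨h, rfl, rfl, rfl⟩ | ⟨h, rfl, rfl, rfl⟩ | ⟨h, rfl, rfl, rfl⟩ | ⟨h, rfl, rfl, rfl⟩ |
    ⟨h, rfl, rfl, rfl⟩ | ⟨h, rfl, rfl, rfl⟩ | ⟨h, rfl, rfl, rfl⟩ | ⟨h, rfl, rfl, rfl⟩ |
    ⟨h, rfl, rfl, rfl⟩ | ⟨h, rfl, rfl, rfl⟩ <;> grind (splits := 40) (ematch := 0)

theorem stp {x y z X Y Z : ℤ} (h : RR x y z X Y Z) (hne : ¬ (x = X ∧ y = Y ∧ z = Z))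
  (n1 : ¬ ∃ u v w, sAm x y z u v w ∧ RR u v w X Y Z)
  (n2 : ¬ ∃ u v w, sAs x y z u v w ∧ RR u v w X Y Z)
  (n3 : ¬ ∃ u v w, sCm x y z u v w ∧ RR u v w X Y Z)
  (n4 : ¬ ∃ u v w, sCs x y z u v w ∧ RR u v w X Y Z)
  (n5 : ¬ ∃ u v w, sBm x y z u v w ∧ RR u v w X Y Z)
  (n6 : ¬ ∃ u v w, sBs x y z u v w ∧ RR u v w X Y Z)
  (n7 : ¬ ∃ u v w, sAB1 x y z u v w ∧ RR u v w X Y Z)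
  (n8 : ¬ ∃ u v w, sAB2 x y z u v w ∧ RR u v w X Y Z)
  (n9 : ¬ ∃ u v w, sCB1 x y z u v w ∧ RR u v w X Y Z)
  (n10 : ¬ ∃ u v w, sCB2 x y z u v w ∧ RR u v w X Y Z) : False := by
  have m1 := fun e r => n1 ⟨_, _, _, ⟨e, rfl, rfl, rfl⟩, r⟩
  have m2 := fun e r => n2 ⟨_, _, _, ⟨e, rfl, rfl, rfl⟩, r⟩
  have m3 := fun e r => n3 ⟨_, _, _, ⟨e, rfl, rfl, rfl⟩, r⟩
  have m4 := fun e r => n4 ⟨_, _, _, ⟨e, rfl, rfl, rfl⟩, r⟩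
  have m5 := fun e r => n5 ⟨_, _, _, ⟨e, rfl, rfl, rfl⟩, r⟩
  have m6 := fun e r => n6 ⟨_, _, _, ⟨e, rfl, rfl, rfl⟩, r⟩
  have m7 := fun e r => n7 ⟨_, _, _, ⟨e, rfl, rfl, rfl⟩, r⟩
  have m8 := fun e r => n8 ⟨_, _, _, ⟨e, rfl, rfl, rfl⟩, r⟩
  have m9 := fun e r => n9 ⟨_, _, _, ⟨e, rfl, rfl, rfl⟩, r⟩
  have m10 := fun e r => n10 ⟨_, _, _, ⟨e, rfl, rfl, rfl⟩, r⟩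
  clear n1 n2 n3 n4 n5 n6 n7 n8 n9 n10
  unfold RR RA RB RC at *
  rcases eq_or_ne X x with hX | hX <;> rcases eq_or_ne Y y with hY | hY <;>
    rcases eq_or_ne Z z with hZ | hZ
  · grind
  · clear m1 m2 m5 m6 m7 m8 m9 m10; grind (splits := 100) (ematch := 0)
  · clear m1 m2 m3 m4 m7 m8 m9 m10; grind (splits := 100) (ematch := 0)
  · clear m1 m2 m4 m6 m7 m8; grind (splits := 100) (ematch := 0)
  · clear m3 m4 m5 m6 m7 m8 m9 m10; grind (splits := 100) (ematch := 0)
  · clear m4 m5 m6 m7 m8 m9 m10; grind (splits := 100) (ematch := 0)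
  · clear m2 m3 m4 m6 m9 m10; grind (splits := 100) (ematch := 0)
  · clear m2 m4 m6 m7 m8 m9 m10; grind (splits := 100) (ematch := 0)

theorem exists_step {x y z X Y Z : ℤ} (h : RR x y z X Y Z) (hne : ¬ (x = X ∧ y = Y ∧ z = Z)) :
    ∃ u v w, SStep x y z u v w ∧ RR u v w X Y Z := by
  by_contra hn
  apply stp h hne
  all_goals
    rintro ⟨u, v, w, h1, h2⟩
    exact hn ⟨u, v, w, by unfold SStep; tauto, h2⟩

theorem RR.rfl' {x y z : ℤ} (hp : 0 ≤ x ∧ 0 ≤ y ∧ 0 ≤ z) : RR x y z x y z := by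
  unfold RR RA RB RC; omega

theorem HasJ.of_eq {x y z u v w : ℤ} (h : RR x y z x y z) (e1 : x = u) (e2 : y = v) (e3 : z = w) :
    HasJ x y z u v w := by
  subst e1 e2 e3
  exact ⟨x, y, z, ⟨h, h⟩, fun _ _ _ h => h.1⟩

theorem RR.left_nonneg {x y z X Y Z : ℤ} (h : RR x y z X Y Z) : 0 ≤ x ∧ 0 ≤ y ∧ 0 ≤ z := by
  unfold RR at h; omega

theorem RR.right_nonneg {x y z X Y Z : ℤ} (h : RR x y z X Y Z) : 0 ≤ X ∧ 0 ≤ Y ∧ 0 ≤ Z := by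
  unfold RR at h; omega

theorem joins {x y z u v w u' v' w' : ℤ} (hp : 0 ≤ x ∧ 0 ≤ y ∧ 0 ≤ z)
    (h1 : SStep x y z u v w) (h2 : SStep x y z u' v' w') : HasJ u v w u' v' w' := by
  have n1 := RR.rfl' (h1.RR hp).right_nonneg
  rcases h1 with h1 | h1 | h1 | h1 | h1 | h1 | h1 | h1 | h1 | h1 <;>
  rcases h2 with h2 | h2 | h2 | h2 | h2 | h2 | h2 | h2 | h2 | h2
  all_goals first
    | (exfalso; obtain ⟨h1, -⟩ := h1; obtain ⟨h2, -⟩ := h2; omega)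
    | exact HasJ.of_eq n1 (h1.2.1.trans h2.2.1.symm) (h1.2.2.1.trans h2.2.2.1.symm)
        (h1.2.2.2.trans h2.2.2.2.symm)
    | exact jAmAs hp h1 h2 | exact (jAmAs hp h2 h1).symm
    | exact jAsAB1 hp h1 h2 | exact (jAsAB1 hp h2 h1).symm
    | exact jAsAB2 hp h1 h2 | exact (jAsAB2 hp h2 h1).symm
    | exact jAsBm hp h1 h2 | exact (jAsBm hp h2 h1).symm
    | exact jAsCs hp h1 h2 | exact (jAsCs hp h2 h1).symm
    | exact jAsCm hp h1 h2 | exact (jAsCm hp h2 h1).symm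
    | exact jAmAB1 hp h1 h2 | exact (jAmAB1 hp h2 h1).symm
    | exact jAmAB2 hp h1 h2 | exact (jAmAB2 hp h2 h1).symm
    | exact jAmBs hp h1 h2 | exact (jAmBs hp h2 h1).symm
    | exact jAmBm hp h1 h2 | exact (jAmBm hp h2 h1).symm
    | exact jAmCs hp h1 h2 | exact (jAmCs hp h2 h1).symm
    | exact jAmCm hp h1 h2 | exact (jAmCm hp h2 h1).symm
    | exact jAmCB1 hp h1 h2 | exact (jAmCB1 hp h2 h1).symm
    | exact jAmCB2 hp h1 h2 | exact (jAmCB2 hp h2 h1).symm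
    | exact jAB1Bm hp h1 h2 | exact (jAB1Bm hp h2 h1).symm
    | exact jAB1Cm hp h1 h2 | exact (jAB1Cm hp h2 h1).symm
    | exact jAB2Bm hp h1 h2 | exact (jAB2Bm hp h2 h1).symm
    | exact jAB2Cm hp h1 h2 | exact (jAB2Cm hp h2 h1).symm
    | exact jBsBm hp h1 h2 | exact (jBsBm hp h2 h1).symm
    | exact jBsCm hp h1 h2 | exact (jBsCm hp h2 h1).symm
    | exact jBmCs hp h1 h2 | exact (jBmCs hp h2 h1).symm
    | exact jBmCm hp h1 h2 | exact (jBmCm hp h2 h1).symm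
    | exact jBmCB1 hp h1 h2 | exact (jBmCB1 hp h2 h1).symm
    | exact jBmCB2 hp h1 h2 | exact (jBmCB2 hp h2 h1).symm
    | exact jCsCm hp h1 h2 | exact (jCsCm hp h2 h1).symm
    | exact jCsCB1 hp h1 h2 | exact (jCsCB1 hp h2 h1).symm
    | exact jCsCB2 hp h1 h2 | exact (jCsCB2 hp h2 h1).symm
    | exact jCmCB1 hp h1 h2 | exact (jCmCB1 hp h2 h1).symm
    | exact jCmCB2 hp h1 h2 | exact (jCmCB2 hp h2 h1).symm

/-- order on triples -/
def r (p q : ℕ × ℕ × ℕ) : Prop := RR p.1 p.2.1 p.2.2 q.1 q.2.1 q.2.2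

def Id4 (p : ℕ × ℕ × ℕ) : Set ℕ :=
  {n | n % 4 = 0 ∨ (n % 4 = 1 ∧ 4 * p.1 + 1 ≤ n) ∨ (n % 4 = 2 ∧ 4 * p.2.1 + 2 ≤ n) ∨
    (n % 4 = 3 ∧ 4 * p.2.2 + 3 ≤ n)}

theorem mem_Id4 {x y z n : ℕ} : n ∈ Id4 (x, y, z) ↔
    n % 4 = 0 ∨ (n % 4 = 1 ∧ 4 * x + 1 ≤ n) ∨ (n % 4 = 2 ∧ 4 * y + 2 ≤ n) ∨
    (n % 4 = 3 ∧ 4 * z + 3 ≤ n) := Iff.rfl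

theorem mem1 {x y z n : ℕ} (h : n ∈ Id4 (x, y, z)) (e : n % 4 = 1) : 4 * x + 1 ≤ n := by
  rw [mem_Id4] at h; omega

theorem mem2 {x y z n : ℕ} (h : n ∈ Id4 (x, y, z)) (e : n % 4 = 2) : 4 * y + 2 ≤ n := by
  rw [mem_Id4] at h; omega

theorem mem3 {x y z n : ℕ} (h : n ∈ Id4 (x, y, z)) (e : n % 4 = 3) : 4 * z + 3 ≤ n := by
  rw [mem_Id4] at h; omega

def QQ (I J : Set ℕ) : Prop := ∃ K : Set ℕ, 0 ∈ K ∧ I + K = J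

theorem QQ.trans {I J L : Set ℕ} (h : QQ I J) (h' : QQ J L) : QQ I L := by
  obtain ⟨K, hK, rfl⟩ := h
  obtain ⟨K', hK', rfl⟩ := h'
  exact ⟨K + K', ⟨0, hK, 0, hK', rfl⟩, by rw [add_assoc]⟩

theorem QQ.r {p q : ℕ × ℕ × ℕ} (h : QQ (Id4 p) (Id4 q)) : r p q := by
  obtain ⟨x, y, z⟩ := p
  obtain ⟨X, Y, Z⟩ := q
  obtain ⟨K, hK, h⟩ := h
  have hadd : ∀ i k, i ∈ Id4 (x, y, z) → k ∈ K → i + k ∈ Id4 (X, Y, Z) := fun i k hi hk => by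
    rw [← h]; exact ⟨i, hi, k, hk, rfl⟩
  have h0 : 0 ∈ Id4 (x, y, z) := by simp [Id4]
  have ha : 4 * x + 1 ∈ Id4 (x, y, z) := by simp only [mem_Id4]; omega
  have hb : 4 * y + 2 ∈ Id4 (x, y, z) := by simp only [mem_Id4]; omega
  have hc : 4 * z + 3 ∈ Id4 (x, y, z) := by simp only [mem_Id4]; omega
  have key : ∀ n, n ∈ Id4 (X, Y, Z) → ∃ i k, i ∈ Id4 (x, y, z) ∧ i + k = n ∧ k ∈ Id4 (X, Y, Z) ∧
      4 * x + 1 + k ∈ Id4 (X, Y, Z) ∧ 4 * y + 2 + k ∈ Id4 (X, Y, Z) ∧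
      4 * z + 3 + k ∈ Id4 (X, Y, Z) := by
    intro n hn
    rw [← h] at hn
    obtain ⟨i, hi, k, hk, e⟩ := hn
    exact ⟨i, k, hi, e, by simpa using hadd 0 k h0 hk, hadd _ k ha hk, hadd _ k hb hk, hadd _ k hc hk⟩
  have ka := hadd _ 0 ha hK
  have kb := hadd _ 0 hb hK
  have kc := hadd _ 0 hc hK
  obtain ⟨i1, k1, h1⟩ := key (4 * X + 1) (by simp only [mem_Id4]; omega)
  obtain ⟨i2, k2, h2⟩ := key (4 * Y + 2) (by simp only [mem_Id4]; omega)
  obtain ⟨i3, k3, h3⟩ := key (4 * Z + 3) (by simp only [mem_Id4]; omega)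
  rw [add_zero] at ka kb kc
  have ka := mem1 ka (by omega)
  have kb := mem2 kb (by omega)
  have kc := mem3 kc (by omega)
  clear key hadd h hK h0 ha hb hc
  unfold _root_.r RR
  dsimp only
  refine ⟨by omega, by omega, by omega, ?_, ?_, ?_⟩
  · clear h2 h3
    unfold RA
    obtain ⟨h1, e, h4, h5, h6, h7⟩ := h1
    rw [mem_Id4] at h1
    rcases h1 with h1 | h1 | h1 | h1
    · have := mem1 h4 (by omega)
      have := mem2 h5 (by omega)
      have := mem3 h6 (by omega)
      right; left; omega
    · left; omega
    · have := mem3 h4 (by omega)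
      have := mem2 h7 (by omega)
      right; right; left; omega
    · have := mem2 h4 (by omega)
      have := mem3 h5 (by omega)
      right; right; right; omega
  · clear h1 h3
    unfold RB
    obtain ⟨h1, e, h4, h5, h6, h7⟩ := h2
    rw [mem_Id4] at h1
    rcases h1 with h1 | h1 | h1 | h1
    · have := mem2 h4 (by omega)
      have := mem3 h5 (by omega)
      have := mem1 h7 (by omega)
      right; left; omega
    · have := mem1 h4 (by omega)
      have := mem3 h6 (by omega)
      right; right; left; omega
    · left; omega
    · have := mem3 h4 (by omega)
      have := mem1 h6 (by omega)
      right; right; right; omega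
  · clear h1 h2
    unfold RC
    obtain ⟨h1, e, h4, h5, h6, h7⟩ := h3
    rw [mem_Id4] at h1
    rcases h1 with h1 | h1 | h1 | h1
    · have := mem3 h4 (by omega)
      have := mem1 h6 (by omega)
      have := mem2 h7 (by omega)
      right; left; omega
    · have := mem2 h4 (by omega)
      have := mem1 h7 (by omega)
      right; right; right; omega
    · have := mem1 h4 (by omega)
      have := mem2 h5 (by omega)
      right; right; left; omega
    · left; omega

theorem r.QQ {p q : ℕ × ℕ × ℕ} (h : r p q) : QQ (Id4 p) (Id4 q) := by
  obtain ⟨x, y, z⟩ := p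
  obtain ⟨X, Y, Z⟩ := q
  unfold r RR at h
  dsimp only at h
  obtain ⟨hX, hY, hZ, hA, hB, hC⟩ := h
  refine ⟨{k | k ∈ Id4 (X, Y, Z) ∧ 4 * x + 1 + k ∈ Id4 (X, Y, Z) ∧ 4 * y + 2 + k ∈ Id4 (X, Y, Z) ∧
      4 * z + 3 + k ∈ Id4 (X, Y, Z)}, ?_, ?_⟩
  · refine ⟨?_, ?_, ?_, ?_⟩
    · exact Or.inl rfl
    · simp only [mem_Id4]; omega
    · simp only [mem_Id4]; omega
    · simp only [mem_Id4]; omega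
  · ext n
    constructor
    · rintro ⟨i, hi, k, hk, rfl⟩
      obtain ⟨k1, k2, k3, k4⟩ := hk
      simp only [mem_Id4] at *
      rcases hi with h | h | h | h <;> omega
    · intro hn
      have mk : ∀ i ≤ n, (i ∈ Id4 (x, y, z) ∧ n - i ∈ Id4 (X, Y, Z) ∧
          4 * x + 1 + (n - i) ∈ Id4 (X, Y, Z) ∧ 4 * y + 2 + (n - i) ∈ Id4 (X, Y, Z) ∧
          4 * z + 3 + (n - i) ∈ Id4 (X, Y, Z)) → n ∈ Id4 (x, y, z) +
          {k | k ∈ Id4 (X, Y, Z) ∧ 4 * x + 1 + k ∈ Id4 (X, Y, Z) ∧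
            4 * y + 2 + k ∈ Id4 (X, Y, Z) ∧ 4 * z + 3 + k ∈ Id4 (X, Y, Z)} := by
        rintro i hi ⟨h1, h2⟩
        exact ⟨i, h1, n - i, h2, by simp; omega⟩
      simp only [mem_Id4] at hn mk
      rcases hn with hn | hn | hn | hn
      · exact mk n le_rfl (by omega)
      · rcases hA with h | h | h | h
        · exact mk n le_rfl (by omega)
        · exact mk (n - (4 * X + 1)) (by omega) (by omega)
        · exact mk (4 * y + 2 + (n - (4 * X + 1))) (by omega) (by omega)
        · exact mk (4 * z + 3 + (n - (4 * X + 1))) (by omega) (by omega)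
      · rcases hB with h | h | h | h
        · exact mk n le_rfl (by omega)
        · exact mk (n - (4 * Y + 2)) (by omega) (by omega)
        · exact mk (4 * x + 1 + (n - (4 * Y + 2))) (by omega) (by omega)
        · exact mk (4 * z + 3 + (n - (4 * Y + 2))) (by omega) (by omega)
      · rcases hC with h | h | h | h
        · exact mk n le_rfl (by omega)
        · exact mk (n - (4 * Z + 3)) (by omega) (by omega)
        · exact mk (4 * y + 2 + (n - (4 * Z + 3))) (by omega) (by omega)
        · exact mk (4 * x + 1 + (n - (4 * Z + 3))) (by omega) (by omega)

theorem r.trans {p q t : ℕ × ℕ × ℕ} (h : r p q) (h' : r q t) : r p t := (h.QQ.trans h'.QQ).r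

theorem r_refl (p : ℕ × ℕ × ℕ) : r p p := RR.rfl' (by omega)

def sm (p : ℕ × ℕ × ℕ) : ℕ := p.1 + p.2.1 + p.2.2

theorem r.sm {p q : ℕ × ℕ × ℕ} (h : r p q) : sm q ≤ sm p := by
  unfold r RR at h; unfold _root_.sm; omega

theorem r.eq {p q : ℕ × ℕ × ℕ} (h : r p q) (h' : _root_.sm p ≤ _root_.sm q) : p = q := by
  unfold r RR at h; unfold _root_.sm at h'
  obtain ⟨x, y, z⟩ := p
  obtain ⟨X, Y, Z⟩ := q
  simp only [Prod.mk.injEq] at *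
  omega

theorem step_r {p q : ℕ × ℕ × ℕ} (h : r p q) (hne : p ≠ q) :
    ∃ s : ℕ × ℕ × ℕ, SStep p.1 p.2.1 p.2.2 s.1 s.2.1 s.2.2 ∧ r p s ∧ r s q ∧ sm s < sm p := by
  obtain ⟨u, v, w, h1, h2⟩ := exists_step h (by
    rintro ⟨e1, e2, e3⟩; apply hne
    obtain ⟨x, y, z⟩ := p
    obtain ⟨X, Y, Z⟩ := q
    simp only [Prod.mk.injEq] at *; omega)
  obtain ⟨hu, hv, hw⟩ := h2.left_nonneg
  lift u to ℕ using hu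
  lift v to ℕ using hv
  lift w to ℕ using hw
  refine ⟨(u, v, w), h1, h1.RR (by omega), h2, ?_⟩
  have := h1.lt
  unfold sm; dsimp only; omega

theorem join_r {p s t : ℕ × ℕ × ℕ} (h1 : SStep p.1 p.2.1 p.2.2 s.1 s.2.1 s.2.2)
    (h2 : SStep p.1 p.2.1 p.2.2 t.1 t.2.1 t.2.2) :
    ∃ w, r s w ∧ r t w ∧ ∀ q, r s q → r t q → r w q := by
  obtain ⟨a, b, c, ⟨h3, h4⟩, h5⟩ := joins (by omega) h1 h2
  obtain ⟨hu, hv, hw⟩ := h3.right_nonneg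
  lift a to ℕ using hu
  lift b to ℕ using hv
  lift c to ℕ using hw
  exact ⟨(a, b, c), h3, h4, fun q h h' => h5 _ _ _ ⟨h, h'⟩⟩

theorem bowtie (n : ℕ) : ∀ p s t L M : ℕ × ℕ × ℕ, sm p ≤ n → r p s → r p t → r s L → r t L →
    r s M → r t M → ∃ w, r s w ∧ r t w ∧ r w L ∧ r w M := by
  induction n using Nat.strong_induction_on with
  | _ n ih =>
  intro p s t L M hn hs ht hsL htL hsM htM
  by_cases e1 : p = s
  · subst e1; exact ⟨t, ht, r_refl t, htL, htM⟩
  by_cases e2 : p = t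
  · subst e2; exact ⟨s, r_refl s, hs, hsL, hsM⟩
  obtain ⟨s1, hs1, -, h2, h3⟩ := step_r hs e1
  obtain ⟨t1, ht1, -, k2, k3⟩ := step_r ht e2
  obtain ⟨w, hw1, hw2, hw⟩ := join_r hs1 ht1
  have wL := hw L (h2.trans hsL) (k2.trans htL)
  have wM := hw M (h2.trans hsM) (k2.trans htM)
  obtain ⟨a, ha1, ha2, ha3, ha4⟩ := ih (sm s1) (by omega) s1 s w L M le_rfl h2 hw1 hsL wL hsM wM
  obtain ⟨b, hb1, hb2, hb3, hb4⟩ := ih (sm t1) (by omega) t1 a t L M le_rfl (hw2.trans ha2) k2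
    ha3 htL ha4 htM
  exact ⟨b, ha1.trans hb1, hb2, hb3, hb4⟩

theorem exists_min {α : Type*} (f : α → ℕ) (Q : α → Prop) (a : α) (ha : Q a) :
    ∃ m, Q m ∧ ∀ b, Q b → f m ≤ f b := by
  classical
  have h : ∃ n, ∃ m, Q m ∧ f m = n := ⟨_, a, ha, rfl⟩
  obtain ⟨m, hm, e⟩ := Nat.find_spec h
  exact ⟨m, hm, fun b hb => e ▸ Nat.find_min' h ⟨b, hb, rfl⟩⟩

theorem r_top (p : ℕ × ℕ × ℕ) : r p (0, 0, 0) := by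
  unfold r RR RA RB RC; dsimp only; omega

theorem sup_r {o p q : ℕ × ℕ × ℕ} (hp : r o p) (hq : r o q) :
    ∃ m, r p m ∧ r q m ∧ ∀ l, r p l → r q l → r m l := by
  obtain ⟨m, ⟨h1, h2⟩, h3⟩ := exists_min (fun m => sm p - sm m) (fun m => r p m ∧ r q m) (0, 0, 0)
    ⟨r_top p, r_top q⟩
  refine ⟨m, h1, h2, fun l hl hl' => ?_⟩
  obtain ⟨w, w1, w2, w3, w4⟩ := bowtie _ o p q m l le_rfl hp hq h1 h2 hl hl'
  have := h3 w ⟨w1, w2⟩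
  have a1 := w1.sm
  have a2 := h1.sm
  rwa [← w3.eq (by omega)]

theorem inf_r {o p q : ℕ × ℕ × ℕ} (hp : r o p) (hq : r o q) :
    ∃ m, r o m ∧ r m p ∧ r m q ∧ ∀ l, r o l → r l p → r l q → r l m := by
  obtain ⟨m, ⟨h0, h1, h2⟩, h3⟩ := exists_min sm (fun m => r o m ∧ r m p ∧ r m q) o
    ⟨r_refl o, hp, hq⟩
  refine ⟨m, h0, h1, h2, fun l hl hl1 hl2 => ?_⟩
  obtain ⟨w, w1, w2, w3, w4⟩ := bowtie _ o m l p q le_rfl h0 hl h1 hl1 h2 hl2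
  have := h3 w ⟨h0.trans w1, w3, w4⟩
  rwa [w1.eq this]

theorem QQ.ideal {S I J : Set ℕ} (hI : IsNormalizedIdeal S I) (h : QQ I J) :
    IsNormalizedIdeal S J := by
  obtain ⟨K, hK, rfl⟩ := h
  refine ⟨⟨0, hI.1, 0, hK, rfl⟩, ?_⟩
  rintro _ ⟨i, hi, k, hk, rfl⟩ s hs
  exact ⟨i + s, hI.2 i hi s hs, k, hk, by simp only []; omega⟩

theorem QQ.preceq {S I J : Set ℕ} (hS : IsNumericalSemigroup S) (hI : IsNormalizedIdeal S I)
    (h : QQ I J) : Preceq S I J := by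
  obtain ⟨K, hK, rfl⟩ := h
  refine ⟨K + S, ⟨⟨0, hK, 0, hS.1, rfl⟩, ?_⟩, ?_⟩
  · rintro _ ⟨k, hk, t, ht, rfl⟩ s hs
    exact ⟨k, hk, t + s, hS.2.1 t ht s hs, by simp only []; omega⟩
  · ext n
    constructor
    · rintro ⟨i, hi, _, ⟨k, hk, t, ht, rfl⟩, rfl⟩
      exact ⟨i + t, hI.2 i hi t ht, k, hk, by simp only []; omega⟩
    · rintro ⟨i, hi, k, hk, rfl⟩
      exact ⟨i, hi, k, ⟨k, hk, 0, hS.1, rfl⟩, rfl⟩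

theorem preceq_iff {S : Set ℕ} (hS : IsNumericalSemigroup S) {p q : ℕ × ℕ × ℕ}
    (hp : IsNormalizedIdeal S (Id4 p)) : Preceq S (Id4 p) (Id4 q) ↔ r p q := by
  constructor
  · rintro ⟨K, hK, h⟩
    exact QQ.r ⟨K, hK.1, h⟩
  · exact fun h => h.QQ.preceq hS hp

theorem exists_class {I : Set ℕ} (hc : Iᶜ.Finite) (h4 : ∀ i ∈ I, i + 4 ∈ I) (c : ℕ) :
    ∃ x, ∀ t, 4 * t + c ∈ I ↔ x ≤ t := by
  classical
  have h : ∃ x, 4 * x + c ∈ I := by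
    by_contra hn
    push Not at hn
    have : Set.Infinite (Set.range fun x : ℕ => 4 * x + c) :=
      Set.infinite_range_of_injective (fun a b h => by
        have h : 4 * a + c = 4 * b + c := h
        omega)
    exact this (hc.subset (by rintro _ ⟨x, rfl⟩; exact hn x))
  refine ⟨Nat.find h, fun t => ⟨fun ht => Nat.find_min' h ht, fun ht => ?_⟩⟩
  obtain ⟨d, rfl⟩ := Nat.exists_eq_add_of_le ht
  clear ht
  induction d with
  | zero => exact Nat.find_spec h
  | succ d ih =>
    have := h4 _ ih
    convert this using 1
    ring

theorem exists_Id4 {S I : Set ℕ} (hS : IsNumericalSemigroup S) (h4 : 4 ∈ S)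
    (hI : IsNormalizedIdeal S I) : ∃ p, I = Id4 p := by
  have hsub : S ⊆ I := fun s hs => by simpa using hI.2 0 hI.1 s hs
  have hc : Iᶜ.Finite := hS.2.2.subset (Set.compl_subset_compl.2 hsub)
  have h4' : ∀ i ∈ I, i + 4 ∈ I := fun i hi => hI.2 i hi 4 h4
  obtain ⟨o, ho⟩ := exists_class hc h4' 0
  obtain ⟨x, hx⟩ := exists_class hc h4' 1
  obtain ⟨y, hy⟩ := exists_class hc h4' 2
  obtain ⟨z, hz⟩ := exists_class hc h4' 3
  have ho0 : o ≤ 0 := (ho 0).1 hI.1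
  refine ⟨(x, y, z), ?_⟩
  ext n
  simp only [mem_Id4]
  have e := Nat.div_add_mod n 4
  have hl := Nat.mod_lt n (show 4 > 0 by norm_num)
  have ho := ho (n / 4)
  have hx := hx (n / 4)
  have hy := hy (n / 4)
  have hz := hz (n / 4)
  generalize n / 4 = t at *
  generalize n % 4 = c at *
  subst e
  interval_cases c
  · rw [ho]; omega
  · rw [hx]; omega
  · rw [hy]; omega
  · rw [hz]; omega

theorem isSup_of {S : Set ℕ} (hS : IsNumericalSemigroup S) (h4 : 4 ∈ S) {p q m : ℕ × ℕ × ℕ}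
    (hp : IsNormalizedIdeal S (Id4 p)) (hq : IsNormalizedIdeal S (Id4 q))
    (h1 : r p m) (h2 : r q m) (h3 : ∀ l, r p l → r q l → r m l) :
    IsSupNI S (Id4 p) (Id4 q) (Id4 m) := by
  have hm := h1.QQ.ideal hp
  refine ⟨hm, (preceq_iff hS hp).2 h1, (preceq_iff hS hq).2 h2, fun L hL hpL hqL => ?_⟩
  obtain ⟨l, rfl⟩ := exists_Id4 hS h4 hL
  rw [preceq_iff hS hp] at hpL
  rw [preceq_iff hS hq] at hqL
  exact (preceq_iff hS hm).2 (h3 l hpL hqL)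

theorem isInf_of {S : Set ℕ} (hS : IsNumericalSemigroup S) (h4 : 4 ∈ S) {o p q m : ℕ × ℕ × ℕ}
    (ho : S = Id4 o) (h0 : r o m)
    (h1 : r m p) (h2 : r m q) (h3 : ∀ l, r o l → r l p → r l q → r l m) :
    IsInfNI S (Id4 p) (Id4 q) (Id4 m) := by
  have hSS : IsNormalizedIdeal S (Id4 o) := by rw [← ho]; exact ⟨hS.1, hS.2.1⟩
  have hm := h0.QQ.ideal hSS
  refine ⟨hm, (preceq_iff hS hm).2 h1, (preceq_iff hS hm).2 h2, fun L hL hpL hqL => ?_⟩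
  obtain ⟨l, rfl⟩ := exists_Id4 hS h4 hL
  rw [preceq_iff hS hL] at hpL hqL
  refine (preceq_iff hS hL).2 (h3 l ?_ hpL hqL)
  refine QQ.r ⟨Id4 l, hL.1, ?_⟩
  rw [← ho]
  ext n
  constructor
  · rintro ⟨s, hs, i, hi, rfl⟩
    have := hL.2 i hi s hs
    rwa [add_comm] at this
  · intro hn
    exact ⟨0, hS.1, n, hn, by simp⟩

theorem NILattice_not_distributive_of_mult_four (S : Set ℕ)
    (hS : IsNumericalSemigroup S) (hm : multNS S = 4) :
    NILattice S ∧
    ∃ I J K JK IJ IK L R : Set ℕ,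
      IsNormalizedIdeal S I ∧ IsNormalizedIdeal S J ∧ IsNormalizedIdeal S K ∧
      IsSupNI S J K JK ∧ IsInfNI S I JK L ∧
      IsInfNI S I J IJ ∧ IsInfNI S I K IK ∧ IsSupNI S IJ IK R ∧ L ≠ R := by
  have h4 : 4 ∈ S := by
    have := Nat.sInf_mem (s := {n : ℕ | n ∈ S ∧ n ≠ 0})
      (Nat.nonempty_of_pos_sInf (by unfold multNS at hm; omega))
    unfold multNS at hm
    rw [hm] at this
    exact this.1
  have hlt : ∀ n ∈ S, n ≠ 0 → 4 ≤ n := fun n hn h0 => by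
    rw [← hm]; exact Nat.sInf_le ⟨hn, h0⟩
  have hSS : IsNormalizedIdeal S S := ⟨hS.1, hS.2.1⟩
  obtain ⟨o, ho⟩ := exists_Id4 hS h4 hSS
  have hso : IsNormalizedIdeal S (Id4 o) := ho ▸ hSS
  have hr : ∀ p, IsNormalizedIdeal S (Id4 p) → r o p := fun p hp => by
    refine QQ.r ⟨Id4 p, hp.1, ?_⟩
    rw [← ho]
    ext n
    constructor
    · rintro ⟨s, hs, i, hi, rfl⟩
      have := hp.2 i hi s hs
      rwa [add_comm] at this
    · intro hn
      exact ⟨0, hS.1, n, hn, by simp⟩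
  have hsmall : ∀ x y z, x ≤ 1 → y ≤ 1 → z ≤ 1 → IsNormalizedIdeal S (Id4 (x, y, z)) := by
    intro x y z hx hy hz
    refine ⟨by simp [Id4], fun i hi s hs => ?_⟩
    by_cases h0 : s = 0
    · simpa [h0] using hi
    have := hlt s hs h0
    simp only [mem_Id4] at *
    omega
  constructor
  · intro I J hI hJ
    obtain ⟨p, rfl⟩ := exists_Id4 hS h4 hI
    obtain ⟨q, rfl⟩ := exists_Id4 hS h4 hJ
    obtain ⟨m, h1, h2, h3⟩ := sup_r (hr p hI) (hr q hJ)
    obtain ⟨n, k0, k1, k2, k3⟩ := inf_r (hr p hI) (hr q hJ)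
    exact ⟨⟨_, isSup_of hS h4 hI hJ h1 h2 h3⟩, ⟨_, isInf_of hS h4 ho k0 k1 k2 k3⟩⟩
  · have l1 := hsmall 1 0 1 (by simp) (by simp) (by simp)
    have l2 := hsmall 0 0 1 (by simp) (by simp) (by simp)
    have l3 := hsmall 0 1 0 (by simp) (by simp) (by simp)
    have l4 := hsmall 1 1 1 (by simp) (by simp) (by simp)
    refine ⟨Id4 (1, 0, 1), Id4 (0, 0, 1), Id4 (0, 1, 0), Id4 (0, 0, 0), Id4 (1, 1, 1),
      Id4 (1, 1, 1), Id4 (1, 0, 1), Id4 (1, 1, 1), l1, l2, l3, ?_, ?_, ?_, ?_, ?_, ?_⟩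
    · refine isSup_of hS h4 l2 l3 ?_ ?_ ?_
      · unfold r RR RA RB RC; dsimp only; omega
      · unfold r RR RA RB RC; dsimp only; omega
      · rintro ⟨a, b, c⟩
        unfold r RR RA RB RC; dsimp only; omega
    · refine isInf_of hS h4 ho (hr _ l1) (r_refl _) (r_top _) (fun l _ h _ => h)
    · refine isInf_of hS h4 ho (hr _ l4) ?_ ?_ ?_
      · unfold r RR RA RB RC; dsimp only; omega
      · unfold r RR RA RB RC; dsimp only; omega
      · rintro ⟨a, b, c⟩ -
        unfold r RR RA RB RC; dsimp only; omega
    · refine isInf_of hS h4 ho (hr _ l4) ?_ ?_ ?_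
      · unfold r RR RA RB RC; dsimp only; omega
      · unfold r RR RA RB RC; dsimp only; omega
      · rintro ⟨a, b, c⟩ -
        unfold r RR RA RB RC; dsimp only; omega
    · exact isSup_of hS h4 l4 l4 (r_refl _) (r_refl _) (fun l h _ => h)
    · intro h
      have : 2 ∈ Id4 (1, 1, 1) := by rw [← h]; simp [Id4]
      simp [Id4] at this
end

section
/- Let T be the numerical semigroup generated by {3, 7, 8}, i.e., T = {0, 3} ∪ {n ∈ ℕ : n ≥ 6}. Then the lattice (𝔑(T), ⪯) is not distributive; in fact, the set {T, {0,4}+T, {0,4,5}+T, {0,1,5}+T, {0,1}+T} is a sublattice of (𝔑(T), ⪯) isomorphic to the pentagon N_5. -/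
open Pointwise

abbrev PB := Bool × Bool × Bool × Bool

def pM (p : PB) : Set ℕ :=
  {n | n = 0 ∨ n = 3 ∨ 6 ≤ n ∨ (n = 1 ∧ p.1 = true) ∨ (n = 2 ∧ p.2.1 = true) ∨
    (n = 4 ∧ p.2.2.1 = true) ∨ (n = 5 ∧ p.2.2.2 = true)}

def pV (p : PB) : Prop := (p.1 = true → p.2.2.1 = true) ∧ (p.2.1 = true → p.2.2.2 = true)

instance (p : PB) : Decidable (pV p) := by unfold pV; infer_instance

def pAdd (p q : PB) : PB :=
  (p.1 || q.1, p.2.1 || q.2.1 || (p.1 && q.1), p.2.2.1 || q.2.2.1 || (p.2.1 && q.2.1),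
    p.2.2.2 || q.2.2.2 || (p.1 && q.2.2.1) || (p.2.2.1 && q.1))

def pLe (p q : PB) : Prop := ∃ r : PB, pV r ∧ pAdd p r = q

instance (p q : PB) : Decidable (pLe p q) := by unfold pLe; infer_instance

def pT : PB := (false, false, false, false)

theorem pM_T : pM pT = {0, 3} ∪ {n : ℕ | 6 ≤ n} := by
  ext n
  simp [pM, pT]
  tauto

theorem pM_inj {p q : PB} : pM p = pM q ↔ p = q := by
  refine ⟨fun h => ?_, fun h => by rw [h]⟩
  obtain ⟨a, b, c, d⟩ := p
  obtain ⟨a', b', c', d'⟩ := q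
  have h1 := Set.ext_iff.1 h 1
  have h2 := Set.ext_iff.1 h 2
  have h4 := Set.ext_iff.1 h 4
  have h5 := Set.ext_iff.1 h 5
  simp [pM] at h1 h2 h4 h5
  simp only [Prod.mk.injEq]
  exact ⟨h1, h2, h4, h5⟩

theorem pM_ideal {p : PB} (h : pV p) : IsNormalizedIdeal (pM pT) (pM p) := by
  obtain ⟨h1, h2⟩ := h
  refine ⟨Or.inl rfl, fun i hi s hs => ?_⟩
  simp [pM, pT] at hi hs ⊢
  rcases hs with rfl | rfl | hs
  · simpa using hi
  · rcases hi with rfl | rfl | hi | ⟨rfl, hi⟩ | ⟨rfl, hi⟩ | ⟨rfl, hi⟩ | ⟨rfl, hi⟩ <;> simp_all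
    omega
  · right; right; left; omega

theorem ideal_pM {I : Set ℕ} (h : IsNormalizedIdeal (pM pT) I) : ∃ p, pV p ∧ I = pM p := by
  classical
  obtain ⟨h0, h⟩ := h
  have m3 : 3 ∈ pM pT := by simp [pM]
  have h3 := h 0 h0 3 m3
  have h6 : ∀ n, 6 ≤ n → n ∈ I := fun n hn => by
    simpa using h 0 h0 n (by simp [pM]; omega)
  have h14 : 1 ∈ I → 4 ∈ I := fun k => h 1 k 3 m3
  have h25 : 2 ∈ I → 5 ∈ I := fun k => h 2 k 3 m3
  refine ⟨(decide (1 ∈ I), decide (2 ∈ I), decide (4 ∈ I), decide (5 ∈ I)), ?_, ?_⟩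
  · simpa [pV] using ⟨h14, h25⟩
  · ext n
    simp only [pM, Set.mem_ofPred_eq, decide_eq_true_eq]
    rcases Nat.lt_or_ge n 6 with hn | hn
    · interval_cases n <;> simp_all
    · simp [h6 n hn, hn]

theorem pM_add {p q : PB} (hp : pV p) (hq : pV q) : pM p + pM q = pM (pAdd p q) := by
  obtain ⟨a, b, c, d⟩ := p
  obtain ⟨a', b', c', d'⟩ := q
  obtain ⟨h1, h2⟩ := hp
  obtain ⟨h1', h2'⟩ := hq
  have z : ∀ r : PB, 0 ∈ pM r := fun r => Or.inl rfl
  ext n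
  rw [Set.mem_add]
  constructor
  · rintro ⟨i, hi, j, hj, rfl⟩
    simp only [pM, pAdd, Set.mem_ofPred_eq] at hi hj h1 h2 h1' h2' ⊢
    rcases hi with rfl | rfl | hi | ⟨rfl, hi⟩ | ⟨rfl, hi⟩ | ⟨rfl, hi⟩ | ⟨rfl, hi⟩ <;>
    rcases hj with rfl | rfl | hj | ⟨rfl, hj⟩ | ⟨rfl, hj⟩ | ⟨rfl, hj⟩ | ⟨rfl, hj⟩ <;>
    first
    | (right; right; left; omega)
    | simp_all
  · intro hn
    have key : n ∈ pM (a, b, c, d) ∨ n ∈ pM (a', b', c', d') ∨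
        ∃ i ∈ pM (a, b, c, d), ∃ j ∈ pM (a', b', c', d'), i + j = n := by
      simp only [pM, pAdd, Set.mem_ofPred_eq, Bool.or_eq_true, Bool.and_eq_true] at hn
      rcases hn with rfl | rfl | hn | ⟨rfl, hn⟩ | ⟨rfl, hn⟩ | ⟨rfl, hn⟩ | ⟨rfl, hn⟩
      · simp [pM]
      · simp [pM]
      · simp [pM, hn]
      · rcases hn with hn | hn <;> simp [pM, hn]
      · rcases hn with (hn | hn) | hn
        · simp [pM, hn]
        · simp [pM, hn]
        · exact Or.inr (Or.inr ⟨1, by simp [pM, hn], 1, by simp [pM, hn], rfl⟩)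
      · rcases hn with (hn | hn) | hn
        · simp [pM, hn]
        · simp [pM, hn]
        · exact Or.inr (Or.inr ⟨2, by simp [pM, hn], 2, by simp [pM, hn], rfl⟩)
      · rcases hn with ((hn | hn) | hn) | hn
        · simp [pM, hn]
        · simp [pM, hn]
        · exact Or.inr (Or.inr ⟨1, by simp [pM, hn], 4, by simp [pM, hn], rfl⟩)
        · exact Or.inr (Or.inr ⟨4, by simp [pM, hn], 1, by simp [pM, hn], rfl⟩)
    rcases key with k | k | k
    · exact ⟨n, k, 0, z _, rfl⟩
    · exact ⟨0, z _, n, k, by simp⟩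
    · exact k

theorem pM_le {p q : PB} (hp : pV p) : Preceq (pM pT) (pM p) (pM q) ↔ pLe p q := by
  constructor
  · rintro ⟨K, hK, h⟩
    obtain ⟨r, hr, rfl⟩ := ideal_pM hK
    rw [pM_add hp hr, pM_inj] at h
    exact ⟨r, hr, h⟩
  · rintro ⟨r, hr, rfl⟩
    exact ⟨pM r, pM_ideal hr, pM_add hp hr⟩

theorem pM_sup {p q m : PB} (hp : pV p) (hq : pV q) (hm : pV m)
    (h : pLe p m ∧ pLe q m ∧ ∀ l : PB, pV l → pLe p l → pLe q l → pLe m l) :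
    IsSupNI (pM pT) (pM p) (pM q) (pM m) := by
  refine ⟨pM_ideal hm, (pM_le hp).2 h.1, (pM_le hq).2 h.2.1, fun L hL => ?_⟩
  obtain ⟨l, hl, rfl⟩ := ideal_pM hL
  rw [pM_le hp, pM_le hq, pM_le hm]
  exact h.2.2 l hl

theorem pM_inf {p q m : PB} (hp : pV p) (hq : pV q) (hm : pV m)
    (h : pLe m p ∧ pLe m q ∧ ∀ l : PB, pV l → pLe l p → pLe l q → pLe l m) :
    IsInfNI (pM pT) (pM p) (pM q) (pM m) := by
  refine ⟨pM_ideal hm, (pM_le hm).2 h.1, (pM_le hm).2 h.2.1, fun L hL => ?_⟩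
  obtain ⟨l, hl, rfl⟩ := ideal_pM hL
  rw [pM_le hl, pM_le hl, pM_le hl]
  exact h.2.2 l hl

def pX : PB := (false, false, true, false)
def pY : PB := (false, false, true, true)
def pW : PB := (true, false, true, false)
def pU : PB := (true, false, true, true)

theorem pgen (X : Set ℕ) (p : PB) (hp : pV p) (hX : X ⊆ pM p) (h0 : 0 ∈ X)
    (h1 : ∀ n ∈ pM p, n ∈ pM pT ∨ n ∈ X ∨ ∃ k ∈ X, k + 3 = n) : X + pM pT = pM p := by
  ext n
  rw [Set.mem_add]
  constructor
  · rintro ⟨i, hi, j, hj, rfl⟩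
    exact (pM_ideal hp).2 i (hX hi) j hj
  · intro hn
    rcases h1 n hn with h | h | ⟨k, h, rfl⟩
    · exact ⟨0, h0, n, h, by simp⟩
    · exact ⟨n, h, 0, Or.inl rfl, rfl⟩
    · exact ⟨k, h, 3, Or.inr (Or.inl rfl), rfl⟩

theorem pgX : ({0, 4} : Set ℕ) + pM pT = pM pX := by
  apply pgen _ _ (by decide)
  · intro n; simp [pM, pX]; omega
  · simp
  · intro n; simp [pM, pX, pT]; omega
theorem pgY : ({0, 4, 5} : Set ℕ) + pM pT = pM pY := by
  apply pgen _ _ (by decide)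
  · intro n; simp [pM, pY]; omega
  · simp
  · intro n; simp [pM, pY, pT]; omega
theorem pgW : ({0, 1} : Set ℕ) + pM pT = pM pW := by
  apply pgen _ _ (by decide)
  · intro n; simp [pM, pW]; omega
  · simp
  · intro n; simp [pM, pW, pT]; omega
theorem pgU : ({0, 1, 5} : Set ℕ) + pM pT = pM pU := by
  apply pgen _ _ (by decide)
  · intro n; simp [pM, pU]; omega
  · simp
  · intro n; simp [pM, pU, pT]; omega

/-- for `T = ⟨3,7,8⟩ = {0,3} ∪ {n ≥ 6}`, the lattice `(𝔑(T), ⪯)`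
is not distributive; in fact `{T, {0,4}+T, {0,4,5}+T, {0,1,5}+T, {0,1}+T}` is a
sublattice of `(𝔑(T), ⪯)` isomorphic to the pentagon `N₅`. -/
theorem pentagon_sublattice (T : Set ℕ) (hT : T = {0, 3} ∪ {n : ℕ | 6 ≤ n}) :
    (∃ I J K JK IJ IK L R : Set ℕ,
      IsNormalizedIdeal T I ∧ IsNormalizedIdeal T J ∧ IsNormalizedIdeal T K ∧
      IsSupNI T J K JK ∧ IsInfNI T I JK L ∧
      IsInfNI T I J IJ ∧ IsInfNI T I K IK ∧ IsSupNI T IJ IK R ∧ L ≠ R) ∧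
    ∃ z x y w t : Set ℕ,
      ({z, x, y, w, t} : Set (Set ℕ)) =
        {T, ({0, 4} : Set ℕ) + T, ({0, 4, 5} : Set ℕ) + T,
          ({0, 1, 5} : Set ℕ) + T, ({0, 1} : Set ℕ) + T} ∧
      (z ≠ x ∧ z ≠ y ∧ z ≠ w ∧ z ≠ t ∧ x ≠ y ∧ x ≠ w ∧ x ≠ t ∧
        y ≠ w ∧ y ≠ t ∧ w ≠ t) ∧
      (IsNormalizedIdeal T z ∧ IsNormalizedIdeal T x ∧ IsNormalizedIdeal T y ∧
        IsNormalizedIdeal T w ∧ IsNormalizedIdeal T t) ∧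
      (Preceq T z x ∧ Preceq T x y ∧ Preceq T y t) ∧
      (¬ Preceq T x w ∧ ¬ Preceq T w x ∧ ¬ Preceq T y w ∧ ¬ Preceq T w y) ∧
      (IsInfNI T x w z ∧ IsInfNI T y w z ∧ IsSupNI T x w t ∧ IsSupNI T y w t) := by
  rw [← pM_T] at hT
  subst hT
  rw [pgX, pgY, pgW, pgU]
  have vT : pV pT := by decide
  have vX : pV pX := by decide
  have vY : pV pY := by decide
  have vW : pV pW := by decide
  have vU : pV pU := by decide
  have sXW : IsSupNI (pM pT) (pM pX) (pM pW) (pM pU) := pM_sup vX vW vU (by decide)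
  have sYW : IsSupNI (pM pT) (pM pY) (pM pW) (pM pU) := pM_sup vY vW vU (by decide)
  have iXW : IsInfNI (pM pT) (pM pX) (pM pW) (pM pT) := pM_inf vX vW vT (by decide)
  have iYW : IsInfNI (pM pT) (pM pY) (pM pW) (pM pT) := pM_inf vY vW vT (by decide)
  refine ⟨⟨pM pY, pM pX, pM pW, pM pU, pM pX, pM pT, pM pY, pM pX, pM_ideal vY, pM_ideal vX,
    pM_ideal vW, sXW, pM_inf vY vU vY (by decide), pM_inf vY vX vX (by decide), iYW,
    pM_sup vX vT vX (by decide), ?_⟩, pM pT, pM pX, pM pY, pM pW, pM pU, ?_, ?_,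
    ⟨pM_ideal vT, pM_ideal vX, pM_ideal vY, pM_ideal vW, pM_ideal vU⟩, ?_, ?_, iXW, iYW, sXW, sYW⟩
  · rw [Ne, pM_inj]; decide
  · rw [Set.pair_comm (pM pW)]
  · simp only [Ne, pM_inj]; decide
  · rw [pM_le vT, pM_le vX, pM_le vY]; decide
  · rw [pM_le vX, pM_le vW, pM_le vY, pM_le vW]; decide
end

section
/- Let S be a numerical semigroup and let I ∈ 𝔑(S). Then I is ∪-irreducible (i.e., I cannot be written as I = J ∪ K with J, K ∈ 𝔑(S) \ {I}) if and only if I = S or I = {0, g} + S for some gap g of S. -/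
open Pointwise

/-- `I ∈ 𝔑(S)` is `∪`-irreducible iff `I = S` or `I = {0, g} + S`
for some gap `g` of `S`. -/
theorem union_irreducible_iff (S : Set ℕ) (hS : IsNumericalSemigroup S)
    (I : Set ℕ) (hI : IsNormalizedIdeal S I) :
    (¬ ∃ J K : Set ℕ, IsNormalizedIdeal S J ∧ IsNormalizedIdeal S K ∧
        J ≠ I ∧ K ≠ I ∧ I = J ∪ K) ↔
      (I = S ∨ ∃ g : ℕ, g ∉ S ∧ I = ({0, g} : Set ℕ) + S) := by
  obtain ⟨h0, hadd, -⟩ := hS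
  have hsub : ∀ J : Set ℕ, IsNormalizedIdeal S J → S ⊆ J := by
    intro J hJ s hs
    simpa using hJ.2 0 hJ.1 s hs
  have hmem : ∀ g x : ℕ, x ∈ ({0, g} : Set ℕ) + S ↔ x ∈ S ∨ ∃ s ∈ S, g + s = x := by
    intro g x
    simp [Set.mem_add]
  have hgen : ∀ (J : Set ℕ) (g : ℕ), IsNormalizedIdeal S J → g ∈ J →
      ({0, g} : Set ℕ) + S ⊆ J := by
    intro J g hJ hg x hx
    rcases (hmem g x).1 hx with h | ⟨s, hs, rfl⟩
    · exact hsub J hJ h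
    · exact hJ.2 g hg s hs
  constructor
  · intro h
    by_contra hc
    push Not at hc
    obtain ⟨hIS, hg⟩ := hc
    have hex : ∃ g, g ∈ I ∧ g ∉ S := by
      by_contra hn
      push Not at hn
      exact hIS (Set.Subset.antisymm hn (hsub I hI))
    classical
    obtain ⟨hgI, hgS⟩ := Nat.find_spec hex
    have hmin : ∀ m < Nat.find hex, m ∈ I → m ∈ S := by
      intro m hm hmI
      by_contra hmS
      exact Nat.find_min hex hm ⟨hmI, hmS⟩
    generalize Nat.find hex = g at hgI hgS hmin
    have hg0 : (0 : ℕ) ≠ g := by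
      rintro rfl
      exact hgS h0
    apply h
    refine ⟨({0, g} : Set ℕ) + S, I \ {g}, ?_, ⟨⟨hI.1, hg0⟩, ?_⟩, (hg g hgS).symm, ?_, ?_⟩
    · refine ⟨(hmem g 0).2 (Or.inl h0), ?_⟩
      intro i hi s hs
      rcases (hmem g i).1 hi with h1 | ⟨t, ht, rfl⟩
      · exact (hmem g _).2 (Or.inl (hadd i h1 s hs))
      · exact (hmem g _).2 (Or.inr ⟨t + s, hadd t ht s hs, by omega⟩)
    · rintro i ⟨hi, hig⟩ s hs
      refine ⟨hI.2 i hi s hs, ?_⟩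
      intro heq
      have heq' : i + s = g := heq
      have hig' : i ≠ g := hig
      have hiS := hmin i (by omega) hi
      exact hgS (heq' ▸ hadd i hiS s hs)
    · intro heq
      have : g ∈ I \ {g} := heq.symm ▸ hgI
      exact this.2 rfl
    · ext x
      constructor
      · intro hx
        by_cases hxg : x = g
        · exact Or.inl ((hmem g x).2 (Or.inr ⟨0, h0, by omega⟩))
        · exact Or.inr ⟨hx, hxg⟩
      · rintro (hx | hx)
        · exact hgen I g hI hgI hx
        · exact hx.1
  · rintro h ⟨J, K, hJ, hK, hJI, hKI, hU⟩
    have hJs : J ⊆ I := hU ▸ Set.subset_union_left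
    have hKs : K ⊆ I := hU ▸ Set.subset_union_right
    rcases h with h | ⟨g, -, h⟩
    · exact hJI (Set.Subset.antisymm hJs (h ▸ hsub J hJ))
    · have hgI : g ∈ J ∪ K := by
        rw [← hU, h]
        exact (hmem g g).2 (Or.inr ⟨0, h0, by omega⟩)
      rcases hgI with hg | hg
      · exact hJI (Set.Subset.antisymm hJs (h ▸ hgen J g hJ hg))
      · exact hKI (Set.Subset.antisymm hKs (h ▸ hgen K g hK hg))
end

section
/- Let S be a numerical semigroup with m(S) ≤ 4 (so that (𝔑(S), ⪯) is a lattice) and let I ∈ 𝔑(S) \ {S}. If I is +-irreducible, then I is ∨-irreducible, i.e., I cannot be written as I = J ∨ K (supremum with respect to ⪯) with J, K ∈ 𝔑(S) \ {I}. -/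
open Pointwise

/-- Lemma: if `m(S) ≤ 4` and `I ∈ 𝔑(S) \ {S}` is `+`-irreducible,
then `I` is `∨`-irreducible. -/
theorem plusIrred_imp_joinIrred (S : Set ℕ) (hS : IsNumericalSemigroup S)
    (hm : multNS S ≤ 4) (I : Set ℕ) (hI : IsNormalizedIdeal S I) (hne : I ≠ S)
    (hirr : PlusIrreducible S I) :
    ¬ ∃ J K : Set ℕ, IsNormalizedIdeal S J ∧ IsNormalizedIdeal S K ∧
      J ≠ I ∧ K ≠ I ∧ IsSupNI S J K I := by
  rintro ⟨J, K, hJ, hK, hJI, hKI, -, ⟨A, hA, hJA⟩, ⟨B, hB, hKB⟩, hmin⟩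
  have hA' : I = A := (hirr.2.2 J A hJ hA hJA.symm).resolve_left (fun h => hJI h.symm)
  subst hA'
  have hB' : I = B := (hirr.2.2 K B hK hB hKB.symm).resolve_left (fun h => hKI h.symm)
  subst hB'
  have hN : IsNormalizedIdeal S (J + K) := by
    refine ⟨⟨0, hJ.1, 0, hK.1, rfl⟩, ?_⟩
    rintro _ ⟨j, hj, k, hk, rfl⟩ s hs
    exact ⟨j, hj, k + s, hK.2 k hk s hs, (add_assoc j k s).symm⟩
  obtain ⟨L, hL, hIL⟩ := hmin (J + K) hN ⟨K, hK, rfl⟩ ⟨J, hJ, add_comm K J⟩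
  have h1 : I ⊆ J + K := by
    intro x hx
    rw [← hIL]
    exact ⟨x, hx, 0, hL.1, rfl⟩
  have hKsub : K ⊆ I := by
    intro x hx
    rw [← hKB]
    exact ⟨x, hx, 0, hI.1, rfl⟩
  have h2 : J + K ⊆ I := by
    rintro _ ⟨j, hj, k, hk, rfl⟩
    rw [← hJA]
    exact ⟨j, hj, k, hKsub hk, rfl⟩
  rcases hirr.2.2 J K hJ hK (Set.Subset.antisymm h1 h2) with h | h
  · exact hJI h.symm
  · exact hKI h.symm
end

section
/- Let S be a numerical semigroup with multiplicity three and let I ∈ 𝔑(S) \ {S}. Then the following are equivalent: (1) I is +-irreducible; (2) I is ∨-irreducible (I cannot be written as a supremum J ∨ K with respect to ⪯ with J, K ∈ 𝔑(S) \ {I}); (3) I is ∪-irreducible (I cannot be written as J ∪ K with J, K ∈ 𝔑(S) \ {I}); (4) I = {0, g} + S for some gap g of S. -/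
open Pointwise

theorem NIaux_pair {S : Set ℕ} (h0 : 0 ∈ S) (ha : ∀ a ∈ S, ∀ b ∈ S, a + b ∈ S) (g : ℕ) :
    IsNormalizedIdeal S (({0, g} : Set ℕ) + S) := by
  refine ⟨Set.mem_add.2 ⟨0, by simp, 0, h0, rfl⟩, ?_⟩
  intro i hi s hs
  obtain ⟨a, h1, b, h2, rfl⟩ := Set.mem_add.1 hi
  exact Set.mem_add.2 ⟨a, h1, b + s, ha _ h2 _ hs, by ring⟩

theorem NIaux_mem {S : Set ℕ} (g n : ℕ) :
    n ∈ (({0, g} : Set ℕ) + S) ↔ n ∈ S ∨ ∃ s ∈ S, n = g + s := by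
  rw [Set.mem_add]
  constructor
  · rintro ⟨a, h1, b, h2, rfl⟩
    rcases h1 with rfl | h1
    · left; simpa using h2
    · right; rw [Set.mem_singleton_iff] at h1; exact ⟨b, h2, by rw [h1]⟩
  · rintro (h | ⟨s, h, rfl⟩)
    · exact ⟨0, by simp, n, h, by simp⟩
    · exact ⟨g, by simp, s, h, rfl⟩

theorem NIaux_sub {S I : Set ℕ} (hI : IsNormalizedIdeal S I) {g : ℕ} (hg : g ∈ I) :
    (({0, g} : Set ℕ) + S) ⊆ I := by
  intro n hn
  rcases (NIaux_mem g n).1 hn with h | ⟨s, h, rfl⟩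
  · simpa using hI.2 0 hI.1 n h
  · exact hI.2 g hg s h

theorem NIaux_plus {S : Set ℕ} {g : ℕ} (hg : g ∉ S) {J K : Set ℕ}
    (h0 : 0 ∈ S) (hJ : IsNormalizedIdeal S J) (hK : IsNormalizedIdeal S K)
    (h : (({0, g} : Set ℕ) + S) = J + K) :
    (({0, g} : Set ℕ) + S) = J ∨ (({0, g} : Set ℕ) + S) = K := by
  have hJs : J ⊆ (({0, g} : Set ℕ) + S) := by
    rw [h]; intro j hj; exact Set.mem_add.2 ⟨j, hj, 0, hK.1, rfl⟩
  have hKs : K ⊆ (({0, g} : Set ℕ) + S) := by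
    rw [h]; intro j hj; exact Set.mem_add.2 ⟨0, hJ.1, j, hj, by simp⟩
  have hgm : g ∈ J + K := by
    rw [← h]; exact (NIaux_mem g g).2 (Or.inr ⟨0, h0, rfl⟩)
  obtain ⟨j, hj, k, hk, hjk⟩ := Set.mem_add.1 hgm
  rcases (NIaux_mem g j).1 (hJs hj) with h1 | ⟨s, hs, h1⟩
  · rcases (NIaux_mem g k).1 (hKs hk) with h2 | ⟨s, hs, h2⟩
    · have hgJ : g ∈ J + S := Set.mem_add.2 ⟨j, hj, k, h2, hjk⟩
      have : g ∈ J := by rw [← hjk]; exact hJ.2 j hj k h2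
      left; exact Set.Subset.antisymm (NIaux_sub hJ this) hJs
    · have : k = g := by omega
      right; exact Set.Subset.antisymm (NIaux_sub hK (this ▸ hk)) hKs
  · have : j = g := by omega
    left; exact Set.Subset.antisymm (NIaux_sub hJ (this ▸ hj)) hJs

theorem NIaux_add {S J K : Set ℕ} (hJ : IsNormalizedIdeal S J) (hK : IsNormalizedIdeal S K) :
    IsNormalizedIdeal S (J + K) := by
  refine ⟨Set.mem_add.2 ⟨0, hJ.1, 0, hK.1, rfl⟩, ?_⟩
  intro i hi s hs
  obtain ⟨a, h1, b, h2, rfl⟩ := Set.mem_add.1 hi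
  exact Set.mem_add.2 ⟨a, h1, b + s, hK.2 _ h2 _ hs, by ring⟩

theorem NIaux_three {S I : Set ℕ} (h3 : 3 ∈ S) (hI : IsNormalizedIdeal S I) {i : ℕ} (hi : i ∈ I)
    (k : ℕ) : i + 3 * k ∈ I := by
  induction k with
  | zero => simpa using hi
  | succ k ih => have := hI.2 _ ih 3 h3; rwa [show i + 3 * (k + 1) = i + 3 * k + 3 by ring]

theorem NIaux_three' {S I : Set ℕ} (h3 : 3 ∈ S) (hI : IsNormalizedIdeal S I) {i n : ℕ}
    (hi : i ∈ I) (h : i ≤ n) (hm : n % 3 = i % 3) : n ∈ I := by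
  have := NIaux_three h3 hI hi ((n - i) / 3)
  rwa [show i + 3 * ((n - i) / 3) = n by omega] at this

theorem NIaux_min {S I : Set ℕ} (h3 : 3 ∈ S) (hf : Sᶜ.Finite) (hI : IsNormalizedIdeal S I)
    (r : ℕ) (hr : r < 3) :
    ∃ x ∈ I, x % 3 = r ∧ ∀ n ∈ I, n % 3 = r → x ≤ n := by
  classical
  have hex : ∃ n, n ∈ I ∧ n % 3 = r := by
    obtain ⟨B, hB⟩ := hf.bddAbove
    refine ⟨3 * (B + 1) + r, ?_, by omega⟩
    have : 3 * (B + 1) + r ∈ S := by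
      by_contra hc
      have := hB hc
      omega
    simpa using hI.2 0 hI.1 _ this
  exact ⟨Nat.find hex, (Nat.find_spec hex).1, (Nat.find_spec hex).2,
    fun n h1 h2 => Nat.find_min' hex ⟨h1, h2⟩⟩

/-- The decomposition used for ideals not of the form `{0,g}+S`. -/
theorem NIaux_decomp {S I : Set ℕ} (hS : IsNumericalSemigroup S) (h3 : 3 ∈ S)
    (hI : IsNormalizedIdeal S I) (hne : I ≠ S)
    (h4 : ¬ ∃ g : ℕ, g ∉ S ∧ I = ({0, g} : Set ℕ) + S) :
    ∃ J K : Set ℕ, IsNormalizedIdeal S J ∧ IsNormalizedIdeal S K ∧ J ≠ I ∧ K ≠ I ∧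
      I = J ∪ K ∧ I = J + K ∧ IsSupNI S J K I := by
  obtain ⟨h0, ha, hf⟩ := hS
  obtain ⟨x, hxI, hx, hxm⟩ := NIaux_min h3 hf hI 1 (by omega)
  obtain ⟨y, hyI, hy, hym⟩ := NIaux_min h3 hf hI 2 (by omega)
  have hSS : IsNormalizedIdeal S S := ⟨h0, ha⟩
  have hneq : ∀ g, (({0, g} : Set ℕ) + S) ≠ I := by
    intro g hg
    by_cases hgS : g ∈ S
    · apply hne
      rw [← hg]
      refine Set.Subset.antisymm (NIaux_sub hSS hgS) ?_
      intro n hn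
      exact (NIaux_mem g n).2 (Or.inl hn)
    · exact h4 ⟨g, hgS, hg.symm⟩
  have hJ := NIaux_pair h0 ha x
  have hK := NIaux_pair h0 ha y
  have hJI := NIaux_sub hI hxI
  have hKI := NIaux_sub hI hyI
  have hxJ : x ∈ (({0, x} : Set ℕ) + S) := (NIaux_mem x x).2 (Or.inr ⟨0, h0, rfl⟩)
  have hyK : y ∈ (({0, y} : Set ℕ) + S) := (NIaux_mem y y).2 (Or.inr ⟨0, h0, rfl⟩)
  generalize hJd : (({0, x} : Set ℕ) + S) = J at *
  generalize hKd : (({0, y} : Set ℕ) + S) = K at *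
  have hU : I ⊆ J ∪ K := by
    intro n hn
    rcases (by omega : n % 3 = 0 ∨ n % 3 = 1 ∨ n % 3 = 2) with h | h | h
    · left; exact NIaux_three' h3 hJ hJ.1 (by omega) (by omega)
    · left; exact NIaux_three' h3 hJ hxJ (hxm n hn h) (by omega)
    · right; exact NIaux_three' h3 hK hyK (hym n hn h) (by omega)
  have hsum : I = J + K := by
    apply Set.Subset.antisymm
    · intro n hn
      rcases hU hn with h | h
      · exact Set.mem_add.2 ⟨n, h, 0, hK.1, rfl⟩
      · exact Set.mem_add.2 ⟨0, hJ.1, n, h, by simp⟩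
    · intro n hn
      obtain ⟨j, hj, k, hk, rfl⟩ := Set.mem_add.1 hn
      rw [← hJd] at hj
      rw [← hKd] at hk
      rcases (NIaux_mem x j).1 hj with h1 | ⟨s, h1, rfl⟩
      · rw [add_comm]
        exact hI.2 k (hKI (hKd ▸ hk)) j h1
      · rcases (NIaux_mem y k).1 hk with h2 | ⟨t, h2, rfl⟩
        · exact hI.2 _ (hJI (hJd ▸ hj)) _ h2
        · have e : x + y ∈ I := NIaux_three' h3 hI hI.1 (by omega) (by omega)
          have := hI.2 _ e _ (ha _ h1 _ h2)
          rwa [show x + s + (y + t) = x + y + (s + t) by ring]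
  refine ⟨J, K, hJ, hK, hJd ▸ hneq x, hKd ▸ hneq y,
    Set.Subset.antisymm hU (Set.union_subset hJI hKI), hsum, hI,
    ⟨K, hK, hsum.symm⟩, ⟨J, hJ, by rw [add_comm]; exact hsum.symm⟩, ?_⟩
  rintro L hL ⟨A, hA, hAL⟩ ⟨B, hB, hBL⟩
  have hxL : ∀ c ∈ A, x + c ∈ L := fun c hc => hAL ▸ Set.add_mem_add hxJ hc
  have hyL : ∀ c ∈ B, y + c ∈ L := fun c hc => hBL ▸ Set.add_mem_add hyK hc
  have hC : IsNormalizedIdeal S {c | c ∈ L ∧ x + c ∈ L ∧ y + c ∈ L} := by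
    refine ⟨⟨hL.1, hxL 0 hA.1, hyL 0 hB.1⟩, ?_⟩
    rintro c ⟨c1, c2, c3⟩ s hs
    refine ⟨hL.2 _ c1 _ hs, ?_, ?_⟩
    · rw [← add_assoc]; exact hL.2 _ c2 _ hs
    · rw [← add_assoc]; exact hL.2 _ c3 _ hs
  refine ⟨_, hC, ?_⟩
  have hz : ∀ n, n % 3 = 0 → n ∈ L := fun n hn => NIaux_three' h3 hL hL.1 (by omega) (by omega)
  have key : ∀ n, (n ∈ L ∧ x + n ∈ L ∧ y + n ∈ L) →
      n ∈ I + {c | c ∈ L ∧ x + c ∈ L ∧ y + c ∈ L} :=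
    fun n h => Set.mem_add.2 ⟨0, hI.1, n, h, by simp⟩
  have key2 : ∀ n ∈ I, n ∈ I + {c | c ∈ L ∧ x + c ∈ L ∧ y + c ∈ L} :=
    fun n h => Set.mem_add.2 ⟨n, h, 0, hC.1, by simp⟩
  apply Set.Subset.antisymm
  · intro n hn
    obtain ⟨i, hi, c, ⟨c1, c2, c3⟩, rfl⟩ := Set.mem_add.1 hn
    rcases hU hi with h | h
    · rw [← hJd] at h
      rcases (NIaux_mem x i).1 h with h1 | ⟨s, h1, rfl⟩
      · rw [add_comm]; exact hL.2 _ c1 _ h1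
      · rw [show x + s + c = x + c + s by ring]; exact hL.2 _ c2 _ h1
    · rw [← hKd] at h
      rcases (NIaux_mem y i).1 h with h1 | ⟨s, h1, rfl⟩
      · rw [add_comm]; exact hL.2 _ c1 _ h1
      · rw [show y + s + c = y + c + s by ring]; exact hL.2 _ c3 _ h1
  · intro n hn
    rcases (by omega : n % 3 = 0 ∨ n % 3 = 1 ∨ n % 3 = 2) with h | h | h
    · exact key2 n (NIaux_three' h3 hI hI.1 (by omega) (by omega))
    · by_cases hle : x ≤ n
      · exact key2 n (NIaux_three' h3 hI hxI hle (by omega))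
      · refine key n ⟨hn, ?_, hz _ (by omega)⟩
        have hn2 := hn
        rw [← hAL] at hn2
        obtain ⟨j, hj, c, hc, hjc⟩ := Set.mem_add.1 hn2
        rw [← hJd] at hj
        rcases (NIaux_mem x j).1 hj with h1 | ⟨s, h1, h2⟩
        · apply hxL
          rw [← hjc, add_comm]
          exact hA.2 _ hc _ h1
        · omega
    · by_cases hle : y ≤ n
      · exact key2 n (NIaux_three' h3 hI hyI hle (by omega))
      · refine key n ⟨hn, hz _ (by omega), ?_⟩
        have hn2 := hn
        rw [← hBL] at hn2
        obtain ⟨j, hj, c, hc, hjc⟩ := Set.mem_add.1 hn2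
        rw [← hKd] at hj
        rcases (NIaux_mem y j).1 hj with h1 | ⟨s, h1, h2⟩
        · apply hyL
          rw [← hjc, add_comm]
          exact hB.2 _ hc _ h1
        · omega

/-- Proposition: for `S` of multiplicity three and
`I ∈ 𝔑(S) \ {S}`, the conditions `+`-irreducible, `∨`-irreducible,
`∪`-irreducible, and `I = {0, g} + S` for a gap `g` of `S` are all equivalent. -/
theorem irreducibles_coincide_mult_three (S : Set ℕ) (hS : IsNumericalSemigroup S)
    (hm : multNS S = 3) (I : Set ℕ) (hI : IsNormalizedIdeal S I) (hne : I ≠ S) :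
    (PlusIrreducible S I ↔ ∃ g : ℕ, g ∉ S ∧ I = ({0, g} : Set ℕ) + S) ∧
    ((¬ ∃ J K : Set ℕ, IsNormalizedIdeal S J ∧ IsNormalizedIdeal S K ∧
        J ≠ I ∧ K ≠ I ∧ IsSupNI S J K I) ↔
      ∃ g : ℕ, g ∉ S ∧ I = ({0, g} : Set ℕ) + S) ∧
    ((¬ ∃ J K : Set ℕ, IsNormalizedIdeal S J ∧ IsNormalizedIdeal S K ∧
        J ≠ I ∧ K ≠ I ∧ I = J ∪ K) ↔
      ∃ g : ℕ, g ∉ S ∧ I = ({0, g} : Set ℕ) + S) := by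
  have h3 : 3 ∈ S := by
    have hn : {n : ℕ | n ∈ S ∧ n ≠ 0}.Nonempty := by
      by_contra hc
      rw [Set.not_nonempty_iff_eq_empty] at hc
      rw [multNS, hc] at hm
      simp at hm
    have := Nat.sInf_mem hn
    rw [show sInf {n : ℕ | n ∈ S ∧ n ≠ 0} = 3 from hm] at this
    exact this.1
  have h0 := hS.1
  refine ⟨⟨?_, ?_⟩, ⟨?_, ?_⟩, ⟨?_, ?_⟩⟩
  · intro h
    by_contra h4
    obtain ⟨J, K, hJ, hK, hJI, hKI, _, hs, _⟩ := NIaux_decomp hS h3 hI hne h4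
    rcases h.2.2 J K hJ hK hs with e | e
    · exact hJI e.symm
    · exact hKI e.symm
  · rintro ⟨g, hg, rfl⟩
    exact ⟨hI, hne, fun J K hJ hK h => NIaux_plus hg h0 hJ hK h⟩
  · intro h
    by_contra h4
    obtain ⟨J, K, hJ, hK, hJI, hKI, _, _, hs⟩ := NIaux_decomp hS h3 hI hne h4
    exact h ⟨J, K, hJ, hK, hJI, hKI, hs⟩
  · rintro ⟨g, hg, rfl⟩ ⟨J, K, hJ, hK, hJI, hKI, _, ⟨A, hA, hJA⟩, ⟨B, hB, hKB⟩, hsup⟩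
    have hA' : _ = A := (NIaux_plus hg h0 hJ hA hJA.symm).resolve_left (fun e => hJI e.symm)
    subst hA'
    have hKs : K ⊆ (({0, g} : Set ℕ) + S) := by
      intro k hk
      rw [← hKB]
      exact Set.mem_add.2 ⟨k, hk, 0, hB.1, rfl⟩
    obtain ⟨C, hC, hCe⟩ := hsup (J + K) (NIaux_add hJ hK) ⟨K, hK, rfl⟩ ⟨J, hJ, add_comm _ _⟩
    have e : (({0, g} : Set ℕ) + S) = J + K := by
      apply Set.Subset.antisymm
      · rw [← hCe]
        intro n hn
        exact Set.mem_add.2 ⟨n, hn, 0, hC.1, rfl⟩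
      · intro n hn
        rw [← hJA]
        exact Set.add_subset_add_left hKs hn
    rcases NIaux_plus hg h0 hJ hK e with e | e
    · exact hJI e.symm
    · exact hKI e.symm
  · intro h
    by_contra h4
    obtain ⟨J, K, hJ, hK, hJI, hKI, hs, _, _⟩ := NIaux_decomp hS h3 hI hne h4
    exact h ⟨J, K, hJ, hK, hJI, hKI, hs⟩
  · rintro ⟨g, hg, rfl⟩ ⟨J, K, hJ, hK, hJI, hKI, h⟩
    have hgm : g ∈ J ∪ K := by
      rw [← h]; exact (NIaux_mem g g).2 (Or.inr ⟨0, h0, rfl⟩)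
    rcases hgm with hgm | hgm
    · apply hJI
      refine Set.Subset.antisymm ?_ (NIaux_sub hJ hgm)
      rw [h]; exact Set.subset_union_left
    · apply hKI
      refine Set.Subset.antisymm ?_ (NIaux_sub hK hgm)
      rw [h]; exact Set.subset_union_right
end

section
/- Let S be a numerical semigroup with multiplicity three and let I ∈ 𝔑(S) \ {S}. Then either I is +-irreducible, or there exist two +-irreducible ideals J, K ∈ 𝔑(S) such that I = J ∨ K, where ∨ denotes the supremum with respect to ⪯. -/
open Pointwise

/-- The ideal generated by `0` and `g`. -/
def genI (S : Set ℕ) (g : ℕ) : Set ℕ := {x | x ∈ S ∨ ∃ s ∈ S, x = g + s}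

lemma genI_ideal {S : Set ℕ} (hS : IsNumericalSemigroup S) (g : ℕ) :
    IsNormalizedIdeal S (genI S g) := by
  refine ⟨Or.inl hS.1, ?_⟩
  rintro i (hi | ⟨t, ht, rfl⟩) s hs
  · exact Or.inl (hS.2.1 _ hi _ hs)
  · exact Or.inr ⟨t + s, hS.2.1 _ ht _ hs, by ring⟩

lemma genI_sub {S I : Set ℕ} (hI : IsNormalizedIdeal S I) {g : ℕ} (hg : g ∈ I) :
    genI S g ⊆ I := by
  rintro x (hx | ⟨t, ht, rfl⟩)
  · simpa using hI.2 0 hI.1 x hx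
  · exact hI.2 _ hg _ ht

lemma self_mem_genI {S : Set ℕ} (hS : IsNumericalSemigroup S) (g : ℕ) : g ∈ genI S g :=
  Or.inr ⟨0, hS.1, rfl⟩

lemma left_sub {S J K : Set ℕ} (hK : IsNormalizedIdeal S K) : J ⊆ J + K := by
  intro x hx
  exact Set.mem_add.2 ⟨x, hx, 0, hK.1, by simp⟩

lemma right_sub {S J K : Set ℕ} (hJ : IsNormalizedIdeal S J) : K ⊆ J + K := by
  intro x hx
  exact Set.mem_add.2 ⟨0, hJ.1, x, hx, by simp⟩

lemma genI_irred {S : Set ℕ} (hS : IsNumericalSemigroup S) {g : ℕ} (hg : g ∉ S) :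
    PlusIrreducible S (genI S g) := by
  refine ⟨genI_ideal hS g, ?_, ?_⟩
  · intro h
    exact hg (h ▸ self_mem_genI hS g)
  · intro J K hJ hK h
    have hJs : J ⊆ genI S g := h ▸ left_sub hK
    have hKs : K ⊆ genI S g := h ▸ right_sub hJ
    have hgm : g ∈ J + K := h ▸ self_mem_genI hS g
    obtain ⟨j, hj, k, hk, hjk⟩ := Set.mem_add.1 hgm
    have hlt : ∀ x ∈ genI S g, x ∈ S ∨ g ≤ x := by
      rintro x (hx | ⟨t, ht, rfl⟩)
      · exact Or.inl hx
      · exact Or.inr (by omega)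
    rcases hlt j (hJs hj) with hjS | hjg
    · rcases hlt k (hKs hk) with hkS | hkg
      · exact absurd (hjk ▸ hS.2.1 _ hjS _ hkS) hg
      · have : k = g := by omega
        subst this
        exact Or.inr (Set.Subset.antisymm (genI_sub hK hk) hKs)
    · have : j = g := by omega
      subst this
      exact Or.inl (Set.Subset.antisymm (genI_sub hJ hj) hJs)

lemma add3 {S I : Set ℕ} (hI : IsNormalizedIdeal S I) (h3 : 3 ∈ S) {x y : ℕ}
    (hx : x ∈ I) (hxy : x ≤ y) (hmod : y % 3 = x % 3) : y ∈ I := by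
  have key : ∀ n : ℕ, x + 3 * n ∈ I := by
    intro n
    induction n with
    | zero => simpa using hx
    | succ n ih => exact (by ring : x + 3 * n + 3 = x + 3 * (n + 1)) ▸ hI.2 _ ih 3 h3
  have := key ((y - x) / 3)
  rwa [show x + 3 * ((y - x) / 3) = y by omega] at this

lemma class_gen {S I : Set ℕ} (hS : IsNumericalSemigroup S) (h3 : 3 ∈ S)
    (hI : IsNormalizedIdeal S I) (r : ℕ) :
    (∀ i ∈ I, i % 3 = r → i ∈ S) ∨
      ∃ g ∈ I, g ∉ S ∧ g % 3 = r ∧ ∀ i ∈ I, i % 3 = r → i ∈ genI S g := by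
  classical
  have hSI : IsNormalizedIdeal S S := ⟨hS.1, hS.2.1⟩
  by_cases h : ∀ i ∈ I, i % 3 = r → i ∈ S
  · exact Or.inl h
  right
  push Not at h
  obtain ⟨i, hi, hir, hiS⟩ := h
  have hex : ∃ n, n ∈ I ∧ n % 3 = r := ⟨i, hi, hir⟩
  have hmin : ∀ n, n ∈ I → n % 3 = r → Nat.find hex ≤ n :=
    fun n h1 h2 => Nat.find_min' hex ⟨h1, h2⟩
  obtain ⟨hg1, hg2⟩ := Nat.find_spec hex
  refine ⟨Nat.find hex, hg1, ?_, hg2, ?_⟩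
  · intro hgS
    exact hiS (add3 hSI h3 hgS (hmin i hi hir) (by omega))
  · intro n hn hnr
    exact add3 (genI_ideal hS _) h3 (self_mem_genI hS _) (hmin n hn hnr) (by omega)

lemma half_sup {S I P U L : Set ℕ} (h3 : 3 ∈ S) (hI : IsNormalizedIdeal S I)
    (hL : IsNormalizedIdeal S L)
    (hP : IsNormalizedIdeal S P) (hU : IsNormalizedIdeal S U)
    (hPI : P ⊆ I) (hILs : I ⊆ L) (r : ℕ) (hr : r = 1 ∨ r = 2)
    (hIP : ∀ i ∈ I, i % 3 = r → i ∈ P) (hPU : P + U = L) (l : ℕ) (hl : l ∈ L)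
    (hlr : l % 3 = r) : ∃ i ∈ I, ∃ k, (∀ i ∈ I, k + i ∈ L) ∧ i + k = l := by
  have hPL : P ⊆ L := hPU ▸ left_sub hU
  have hUL : U ⊆ L := hPU ▸ right_sub hP
  have h0 : ∀ n, n % 3 = 0 → n ∈ L := fun n hn => add3 hL h3 hL.1 (Nat.zero_le n) (by omega)
  rw [← hPU] at hl
  obtain ⟨p, hp, u, hu, hpu⟩ := Set.mem_add.1 hl
  by_cases hu0 : u % 3 = 0
  · refine ⟨l, hPI (add3 hP h3 hp (by omega) (by omega)), 0, ?_, by simp⟩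
    intro i hi
    rw [zero_add]
    exact hILs hi
  by_cases hp0 : p % 3 = 0
  · refine ⟨p, hPI hp, u, ?_, hpu⟩
    intro i hi
    by_cases hi0 : i % 3 = 0
    · exact add3 hL h3 (hUL hu) (by omega) (by omega)
    by_cases hir : i % 3 = r
    · rw [← hPU]
      exact Set.mem_add.2 ⟨i, hIP i hi hir, u, hu, by ring⟩
    · exact h0 _ (by omega)
  · refine ⟨0, hI.1, l, ?_, by simp⟩
    intro i hi
    by_cases hi0 : i % 3 = 0
    · exact add3 hL h3 (hPU ▸ hl) (by omega) (by omega)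
    by_cases hir : i % 3 = r
    · exact add3 hL h3 (hUL hu) (by omega) (by omega)
    · exact h0 _ (by omega)

/-- Corollary: for `S` of multiplicity three, every
`I ∈ 𝔑(S) \ {S}` is either `+`-irreducible or the supremum (w.r.t. `⪯`) of two
`+`-irreducible ideals. -/
theorem plusIrred_or_sup_of_plusIrred (S : Set ℕ) (hS : IsNumericalSemigroup S)
    (hm : multNS S = 3) (I : Set ℕ) (hI : IsNormalizedIdeal S I) (hne : I ≠ S) :
    PlusIrreducible S I ∨
      ∃ J K : Set ℕ, PlusIrreducible S J ∧ PlusIrreducible S K ∧ IsSupNI S J K I := by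
  have h3 : 3 ∈ S := by
    have hn : {n : ℕ | n ∈ S ∧ n ≠ 0}.Nonempty := by
      apply Nat.nonempty_of_pos_sInf
      change 0 < multNS S
      omega
    have := Nat.sInf_mem hn
    change multNS S ∈ _ at this
    rw [hm] at this
    exact this.1
  have hSI : IsNormalizedIdeal S S := ⟨hS.1, hS.2.1⟩
  have hsub : S ⊆ I := fun s hs => by simpa using hI.2 0 hI.1 s hs
  have hz : ∀ n, n % 3 = 0 → n ∈ S := fun n hn => add3 hSI h3 hS.1 (Nat.zero_le n) (by omega)
  have hcl : ∀ n : ℕ, n % 3 = 0 ∨ n % 3 = 1 ∨ n % 3 = 2 := fun n => by omega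
  rcases class_gen hS h3 hI 1 with h1 | ⟨g, hgI, hgS, hgr, hg⟩
  · rcases class_gen hS h3 hI 2 with h2 | ⟨g, hgI, hgS, hgr, hg⟩
    · refine absurd (Set.Subset.antisymm ?_ hsub) hne
      intro i hi
      rcases hcl i with h | h | h
      exacts [hz i h, h1 i hi h, h2 i hi h]
    · left
      have : I = genI S g := by
        refine Set.Subset.antisymm ?_ (genI_sub hI hgI)
        intro i hi
        rcases hcl i with h | h | h
        exacts [Or.inl (hz i h), Or.inl (h1 i hi h), hg i hi h]
      rw [this]
      exact genI_irred hS hgS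
  · rcases class_gen hS h3 hI 2 with h2 | ⟨g', hgI', hgS', hgr', hg'⟩
    · left
      have : I = genI S g := by
        refine Set.Subset.antisymm ?_ (genI_sub hI hgI)
        intro i hi
        rcases hcl i with h | h | h
        exacts [Or.inl (hz i h), hg i hi h, Or.inl (h2 i hi h)]
      rw [this]
      exact genI_irred hS hgS
    · right
      have hP := genI_ideal hS g
      have hQ := genI_ideal hS g'
      have hPI := genI_sub hI hgI
      have hQI := genI_sub hI hgI'
      have hun : ∀ i ∈ I, i ∈ genI S g ∨ i ∈ genI S g' := by
        intro i hi
        rcases hcl i with h | h | h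
        exacts [Or.inl (Or.inl (hz i h)), Or.inl (hg i hi h), Or.inr (hg' i hi h)]
      have main : ∀ L : Set ℕ, IsNormalizedIdeal S L → Preceq S (genI S g) L →
          Preceq S (genI S g') L → Preceq S I L := by
        rintro L hL ⟨U, hU, hPU⟩ ⟨V, hV, hQV⟩
        have hIL : I ⊆ L := by
          intro i hi
          rcases hun i hi with h | h
          · exact (hPU ▸ left_sub hU : genI S g ⊆ L) h
          · exact (hQV ▸ left_sub hV : genI S g' ⊆ L) h
        refine ⟨{k | ∀ i ∈ I, k + i ∈ L}, ⟨?_, ?_⟩, ?_⟩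
        · intro i hi
          simpa using hIL hi
        · intro k hk s hs i hi
          rw [add_assoc, add_comm s i]
          exact hk _ (hI.2 i hi s hs)
        · apply Set.Subset.antisymm
          · intro x hx
            obtain ⟨i, hi, k, hk, rfl⟩ := Set.mem_add.1 hx
            rw [add_comm]
            exact hk i hi
          · intro l hl
            rcases hcl l with h | h | h
            · exact Set.mem_add.2 ⟨l, hsub (hz l h), 0, fun i hi => by simpa using hIL hi, by simp⟩
            · obtain ⟨i, hi, k, hk, e⟩ :=
                half_sup h3 hI hL hP hU hPI hIL 1 (Or.inl rfl) hg hPU l hl h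
              exact Set.mem_add.2 ⟨i, hi, k, hk, e⟩
            · obtain ⟨i, hi, k, hk, e⟩ :=
                half_sup h3 hI hL hQ hV hQI hIL 2 (Or.inr rfl) hg' hQV l hl h
              exact Set.mem_add.2 ⟨i, hi, k, hk, e⟩
      have hadd : genI S g + genI S g' = I := by
        apply Set.Subset.antisymm
        · intro x hx
          obtain ⟨p, hp, q, hq, rfl⟩ := Set.mem_add.1 hx
          rcases hp with hp | ⟨s, hs, rfl⟩
          · rw [add_comm]
            exact hI.2 q (hQI hq) p hp
          · rcases hq with hq | ⟨t, ht, rfl⟩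
            · exact hI.2 _ (hI.2 g hgI s hs) q hq
            · rw [show g + s + (g' + t) = (g + g') + s + t by ring]
              exact hsub (hS.2.1 _ (hS.2.1 _ (hz _ (by omega)) _ hs) _ ht)
        · intro i hi
          rcases hun i hi with h | h
          · exact left_sub hQ h
          · exact right_sub hP h
      exact ⟨genI S g, genI S g', genI_irred hS hgS, genI_irred hS hgS', hI,
        ⟨_, hQ, hadd⟩, ⟨_, hP, by rw [add_comm, hadd]⟩, main⟩
end
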